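/- Let R be a local Cohen–Macaulay ring with infinite residue field, and let I be an R-ideal of height g and analytic spread ℓ which satisfies condition G_ℓ and is universally weakly (ℓ−1)-residually S₂. Then the following are equivalent: (a) (J : I)·I ⊆ core(I) for some minimal reduction J of I; (b) (J : I)·J = (J : I)·I = core(I) for every minimal reduction J of I; (c) J : I does not depend on the minimal reduction J of I. Moreover, if these hold then γ(I) ≤ ℓ · max({ type((R/(J : I))_𝔭) : 𝔭 ∈ Q(I) } ∪ {0}) + 1, where J is any minimal reduction of I. -/

import Mathlib

open IsLocalRing

universe u v

namespace CPU

section Defs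

variable {R : Type u} [CommRing R]

/-- The minimal number of generators of a submodule, as an extended natural number. -/
noncomputable def muE {M : Type v} [AddCommGroup M] [Module R M] (N : Submodule R M) : ℕ∞ :=
  sInf {n : ℕ∞ | ∃ s : Finset M, (s.card : ℕ∞) = n ∧ Submodule.span R (s : Set M) = N}

/-- The Krull dimension of a ring, valued in `WithBot ℕ∞`. -/
noncomputable def rDim (S : Type v) [CommRing S] : WithBot ℕ∞ :=
  ringKrullDim S

/-- `J` is a reduction of `I`. -/
def IsReduction (J I : Ideal R) : Prop :=
  J ≤ I ∧ ∃ r : ℕ, I ^ (r + 1) = J * I ^ r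

/-- `J` is a minimal reduction of `I`. -/
def IsMinimalReduction (J I : Ideal R) : Prop :=
  IsReduction J I ∧ ∀ J' : Ideal R, IsReduction J' I → J' ≤ J → J' = J

/-- The core of an ideal: the intersection of all of its minimal reductions. -/
noncomputable def core (I : Ideal R) : Ideal R :=
  sInf {J : Ideal R | IsMinimalReduction J I}

/-- The reduction number of `I`. -/
noncomputable def reductionNumber (I : Ideal R) : ℕ∞ :=
  sInf {n : ℕ∞ | ∃ r : ℕ, (r : ℕ∞) = n ∧ ∃ J : Ideal R,
    IsMinimalReduction J I ∧ I ^ (r + 1) = J * I ^ r}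

/-- `γ(I)`: the least number of minimal reductions whose intersection is the core. -/
noncomputable def gamma (I : Ideal R) : ℕ∞ :=
  sInf {n : ℕ∞ | ∃ t : ℕ, (t : ℕ∞) = n ∧ ∃ Js : Fin t → Ideal R,
    (∀ i, IsMinimalReduction (Js i) I) ∧ core I = ⨅ i, Js i}

/-- The height of an ideal. -/
noncomputable def ht (I : Ideal R) : WithBot ℕ∞ :=
  ⨅ (p : PrimeSpectrum R) (_ : I ≤ p.asIdeal),
    rDim (Localization.AtPrime p.asIdeal)

/-- The Krull dimension of the special fiber ring of `I`,
i.e. the analytic spread of `I`. -/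
noncomputable def fiberDim [IsLocalRing R] (I : Ideal R) : WithBot ℕ∞ :=
  rDim (↥(reesAlgebra I) ⧸
    (Ideal.map (algebraMap R ↥(reesAlgebra I)) (maximalIdeal R)))

/-- The condition `G_s`. -/
def Gcond (I : Ideal R) (s : ℕ) : Prop :=
  ∀ p : PrimeSpectrum R, I ≤ p.asIdeal →
    rDim (Localization.AtPrime p.asIdeal) < (s : WithBot ℕ∞) →
    (muE (Ideal.map (algebraMap R (Localization.AtPrime p.asIdeal)) I) : WithBot ℕ∞) ≤
      rDim (Localization.AtPrime p.asIdeal)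

/-- Depth of a module over a local ring, via lengths of regular sequences in the
maximal ideal. -/
noncomputable def mDepth (R : Type u) [CommRing R] [IsLocalRing R]
    (M : Type v) [AddCommGroup M] [Module R M] : ℕ∞ :=
  sSup {n : ℕ∞ | ∃ rs : List R, (∀ x ∈ rs, x ∈ maximalIdeal R) ∧
    RingTheory.Sequence.IsRegular M rs ∧ (rs.length : ℕ∞) = n}

/-- Depth of the quotient `R/K` of a local ring `R`. -/
noncomputable def qDepth (R : Type u) [CommRing R] [IsLocalRing R] (K : Ideal R) : ℕ∞ :=
  mDepth R (R ⧸ K)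

/-- The socle of `R/K`, for `R` local. -/
noncomputable def socle (R : Type u) [CommRing R] [IsLocalRing R] (K : Ideal R) :
    Ideal (R ⧸ K) :=
  Submodule.colon (⊥ : Ideal (R ⧸ K)) (Ideal.map (Ideal.Quotient.mk K) (maximalIdeal R))

/-- The Cohen–Macaulay type of the quotient `R/K` of a local ring `R`. -/
noncomputable def qType (R : Type u) [CommRing R] [IsLocalRing R] (K : Ideal R) : ℕ∞ :=
  sInf {n : ℕ∞ | ∃ rs : List R, (∀ x ∈ rs, x ∈ maximalIdeal R) ∧
    RingTheory.Sequence.IsRegular (R ⧸ K) rs ∧ (rs.length : ℕ∞) = qDepth R K ∧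
    muE (socle R (K ⊔ Ideal.ofList rs)) = n}

/-- Cohen–Macaulayness for a quotient `R/K` of a local ring `R`. -/
def IsCMQuot (R : Type u) [CommRing R] [IsLocalRing R] (K : Ideal R) : Prop :=
  rDim (R ⧸ K) = (qDepth R K : WithBot ℕ∞)

/-- A Cohen–Macaulay local ring: depth equals Krull dimension. -/
def IsCMLocalRing (R : Type u) [CommRing R] [IsLocalRing R] : Prop :=
  rDim R = (qDepth R (⊥ : Ideal R) : WithBot ℕ∞)

/-- A Gorenstein local ring: Cohen–Macaulay of type one. -/
def IsGorensteinLocalRing (R : Type u) [CommRing R] [IsLocalRing R] : Prop :=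
  IsCMLocalRing R ∧ qType R (⊥ : Ideal R) = 1

/-- Gorensteinness of the quotient ring `R/K` of a local ring. -/
def IsGorQuot (R : Type u) [CommRing R] [IsLocalRing R] (K : Ideal R) : Prop :=
  IsCMQuot R K ∧ qType R K = 1

/-- A regular local ring: the maximal ideal is generated by `dim R` elements. -/
def IsRegularLocal (R : Type u) [CommRing R] [IsLocalRing R] : Prop :=
  IsNoetherianRing R ∧ (muE (maximalIdeal R) : WithBot ℕ∞) = rDim R

/-- Serre's condition `S₂` for the quotient ring `R/K`. -/
def QuotS2 (K : Ideal R) : Prop :=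
  ∀ (q : Ideal R) (hq : q.IsPrime), K ≤ q →
    letI := hq
    min 2 (rDim ((Localization.AtPrime q) ⧸
        (Ideal.map (algebraMap R (Localization.AtPrime q)) K)))
      ≤ (qDepth (Localization.AtPrime q)
          (Ideal.map (algebraMap R (Localization.AtPrime q)) K) : WithBot ℕ∞)

/-- `K` is an `s`-residual intersection of `I`. -/
def IsResidualIntersection (I K : Ideal R) (s : ℕ) : Prop :=
  K ≠ ⊤ ∧ ht I ≤ (s : WithBot ℕ∞) ∧ (s : WithBot ℕ∞) ≤ ht K ∧
    ∃ a : Ideal R, a ≤ I ∧ (∃ f : Finset R, f.card ≤ s ∧ Ideal.span (f : Set R) = a) ∧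
      K = Submodule.colon a I

/-- `K` is a geometric `s`-residual intersection of `I`. -/
def IsGeometricRI (I K : Ideal R) (s : ℕ) : Prop :=
  IsResidualIntersection I K s ∧ (s : WithBot ℕ∞) + 1 ≤ ht (I ⊔ K)

/-- `I` is weakly `s`-residually `S₂`. -/
def WeaklyResS2 (I : Ideal R) (s : ℕ) : Prop :=
  ∀ i ≤ s, ∀ K : Ideal R, IsGeometricRI I K i → QuotS2 K

/-- The condition `AN_s` for `I`. -/
def ANcond [IsLocalRing R] (I : Ideal R) (s : ℕ) : Prop :=
  ∀ i ≤ s, ∀ K : Ideal R, IsResidualIntersection I K i → IsCMQuot R K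

/-- The condition `AN_s⁻` for `I`. -/
def ANminus [IsLocalRing R] (I : Ideal R) (s : ℕ) : Prop :=
  ∀ i ≤ s, ∀ K : Ideal R, IsGeometricRI I K i → IsCMQuot R K

/-- `I` is universally weakly `s`-residually `S₂`: for every finite set of
variables, the extension of `I` to `R(x₁, …, x_n)` is weakly `s`-residually `S₂`. -/
def UnivWeaklyResS2 [IsLocalRing R] (I : Ideal R) (s : ℕ) : Prop :=
  ∀ (n : ℕ)
    (hP : (Ideal.map (MvPolynomial.C (σ := Fin n)) (maximalIdeal R)).IsPrime),
    letI := hP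
    WeaklyResS2 (Ideal.map
      ((algebraMap (MvPolynomial (Fin n) R)
        (Localization.AtPrime
          (Ideal.map (MvPolynomial.C (σ := Fin n)) (maximalIdeal R)))).comp
        (MvPolynomial.C)) I) s

/-- The `j`-th Fitting ideal of (the module) `I`. -/
noncomputable def fittingIdeal (I : Ideal R) (j : ℕ) : Ideal R :=
  ⨆ (n : ℕ) (π : (Fin n → R) →ₗ[R] R) (_ : LinearMap.range π = I),
    Ideal.span {d : R | ∃ (v : Fin (n - j) → (Fin n → R)) (r : Fin (n - j) → Fin n),
      (∀ k, π (v k) = 0) ∧ d = Matrix.det (Matrix.of fun i k => v k (r i))}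

/-- The set `Q(I)` of primes containing `Fitt_ℓ(I)` at which `R` has dimension `ℓ`
and `I` has analytic spread `ℓ`. -/
def QSet [IsLocalRing R] (I : Ideal R) (l : ℕ) : Set (PrimeSpectrum R) :=
  {p | fittingIdeal I l ≤ p.asIdeal ∧
    rDim (Localization.AtPrime p.asIdeal) = (l : WithBot ℕ∞) ∧
    fiberDim (Ideal.map (algebraMap R (Localization.AtPrime p.asIdeal)) I)
      = (l : WithBot ℕ∞)}

/-- An ideal is integrally closed if it admits no larger ideal of which it is a
reduction. -/
def IsIntClosedIdeal (I : Ideal R) : Prop :=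
  ∀ J : Ideal R, IsReduction I J → J = I

/-- A normal ideal: all powers are integrally closed. -/
def IsNormalIdeal (I : Ideal R) : Prop :=
  ∀ j : ℕ, IsIntClosedIdeal (I ^ j)

/-- `φ` is a presentation matrix of the ideal `I` (with `n = μ(I)` rows). -/
def Presents {n m : ℕ} (φ : Matrix (Fin n) (Fin m) R) (I : Ideal R) : Prop :=
  muE I = (n : ℕ∞) ∧ ∃ π : (Fin n → R) →ₗ[R] R, LinearMap.range π = I ∧
    LinearMap.range (Matrix.toLin' φ) = LinearMap.ker π

/-- The ideal of `t × t` minors of a matrix. -/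
noncomputable def minorsIdeal {n m : ℕ} (t : ℕ) (φ : Matrix (Fin n) (Fin m) R) : Ideal R :=
  Ideal.span {d : R | ∃ (r : Fin t → Fin n) (c : Fin t → Fin m),
    d = (φ.submatrix r c).det}

/-- The grade of an ideal: the supremum of lengths of regular sequences contained
in it. -/
noncomputable def grade (I : Ideal R) : ℕ∞ :=
  sSup {n : ℕ∞ | ∃ rs : List R, (∀ x ∈ rs, x ∈ I) ∧
    RingTheory.Sequence.IsRegular R rs ∧ (rs.length : ℕ∞) = n}

end Defs

/-- `M` has projective dimension at most `n` over `R`. -/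
def ProjDimLE (R : Type u) [CommRing R] :
    (n : ℕ) → (M : Type u) → [AddCommGroup M] → [Module R M] → Prop
  | 0, M, _, _ => Module.Projective R M
  | n + 1, M, _, _ => ∃ (k : ℕ) (f : (Fin k → R) →ₗ[R] M), Function.Surjective f ∧
      ProjDimLE R n ↥(LinearMap.ker f)

section Defs2

variable {R : Type u} [CommRing R]

/-- `M` has projective dimension exactly `n` over `R`. -/
def ProjDimEq (R : Type u) [CommRing R] (M : Type u) [AddCommGroup M] [Module R M]
    (n : ℕ) : Prop :=
  ProjDimLE R n M ∧ ∀ m : ℕ, ProjDimLE R m M → n ≤ m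

/-- A perfect ideal: the projective dimension of `R/I` equals the grade of `I`. -/
def IsPerfectIdeal (I : Ideal R) : Prop :=
  ∃ g : ℕ, grade I = (g : ℕ∞) ∧ ProjDimEq R (R ⧸ I) g

/-- The multiplicative set which is the complement of the union of the associated
primes of `R/H`. -/
def assComplement (H : Ideal R) : Submonoid R where
  carrier := {r : R | ∀ p ∈ associatedPrimes R (R ⧸ H), r ∉ p}
  one_mem' := fun p hp => (Ideal.ne_top_iff_one p).mp hp.1.ne_top
  mul_mem' := fun {a b} ha hb p hp hab =>
    (hp.1.mem_or_mem hab).elim (ha p hp) (hb p hp)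

/-- The `j`-th symbolic power of `H`. -/
noncomputable def symbolicPower (H : Ideal R) (j : ℕ) : Ideal R :=
  Ideal.comap (algebraMap R (Localization (assComplement H)))
    (Ideal.map (algebraMap R (Localization (assComplement H))) (H ^ j))

/-- Serre's condition `S₂` for a module. -/
def ModuleS2 (S : Type u) [CommRing S] (M : Type v) [AddCommGroup M] [Module S M] : Prop :=
  ∀ (q : Ideal S) (hq : q.IsPrime),
    letI := hq
    min 2 (rDim ((Localization.AtPrime q) ⧸
        (Module.annihilator (Localization.AtPrime q) (LocalizedModule q.primeCompl M))))
      ≤ (mDepth (Localization.AtPrime q) (LocalizedModule q.primeCompl M) : WithBot ℕ∞)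

/-- `M` is a maximal Cohen–Macaulay `S`-module. -/
def IsMCM (S : Type u) [CommRing S] (M : Type v) [AddCommGroup M] [Module S M] : Prop :=
  ∀ (q : Ideal S) (hq : q.IsMaximal),
    letI := hq.isPrime
    (mDepth (Localization.AtPrime q) (LocalizedModule q.primeCompl M) : WithBot ℕ∞) =
      rDim (Localization.AtPrime q)

end Defs2


section Basic
variable {R : Type u} [CommRing R]

/-- colon ideal -/
abbrev cl (J I : Ideal R) : Ideal R := Submodule.colon J (I : Set R)

theorem mem_cl {J I : Ideal R} {x : R} : x ∈ cl J I ↔ ∀ y ∈ I, x * y ∈ J := by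
  simp [cl, Submodule.mem_colon]

theorem le_cl (J I : Ideal R) : J ≤ cl J I := fun _ hx =>
  mem_cl.2 fun _ _ => J.mul_mem_right _ hx

/-- annihilator of `w` modulo `K` -/
def an (K : Ideal R) (w : R) : Ideal R where
  carrier := {r | r * w ∈ K}
  add_mem' := by
    intro a b ha hb
    simp only [Set.mem_setOf_eq, add_mul] at *
    exact K.add_mem ha hb
  zero_mem' := by simp
  smul_mem' := by
    intro c x hx
    simp only [Set.mem_setOf_eq, smul_eq_mul, mul_assoc] at *
    exact K.mul_mem_left _ hx

@[simp] theorem mem_an {K : Ideal R} {w r : R} : r ∈ an K w ↔ r * w ∈ K := Iff.rfl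

/-- saturation of `N` with respect to the complement of `q` -/
def sat (q N : Ideal R) : Ideal R where
  carrier := {x | ∃ s ∈ Submonoid.closure ((q : Set R)ᶜ), s * x ∈ N}
  add_mem' := by
    rintro a b ⟨s, hs, ha⟩ ⟨t, ht, hb⟩
    refine ⟨s * t, mul_mem hs ht, ?_⟩
    have := N.add_mem (N.mul_mem_left t ha) (N.mul_mem_left s hb)
    convert this using 1; ring
  zero_mem' := ⟨1, one_mem _, by simp⟩
  smul_mem' := by
    rintro c x ⟨s, hs, hx⟩
    refine ⟨s, hs, ?_⟩
    have := N.mul_mem_left c hx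
    convert this using 1; simp only [smul_eq_mul]; ring

theorem mem_sat {q N : Ideal R} (hq : q.IsPrime) {x : R} :
    x ∈ sat q N ↔ ∃ s, s ∉ q ∧ s * x ∈ N := by
  have : Submonoid.closure ((q : Set R)ᶜ) = q.primeCompl := by
    have : ((q : Set R)ᶜ) = (q.primeCompl : Set R) := rfl
    rw [this, Submonoid.closure_eq]
  change (∃ s ∈ Submonoid.closure ((q : Set R)ᶜ), s * x ∈ N) ↔ _
  rw [this]
  rfl

theorem le_sat (q N : Ideal R) : N ≤ sat q N := fun _ hx => ⟨1, one_mem _, by simpa using hx⟩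

theorem sat_mono (q : Ideal R) {N N' : Ideal R} (h : N ≤ N') : sat q N ≤ sat q N' := by
  rintro x ⟨s, hs, hx⟩
  exact ⟨s, hs, h hx⟩

theorem sat_sat (q N : Ideal R) : sat q (sat q N) = sat q N := by
  refine le_antisymm ?_ (le_sat _ _)
  rintro x ⟨s, hs, t, ht, hx⟩
  exact ⟨t * s, mul_mem ht hs, by simpa [mul_assoc] using hx⟩

theorem sat_le_sat {q N N' : Ideal R} (h : N ≤ sat q N') : sat q N ≤ sat q N' := by
  have := sat_mono q h
  rwa [sat_sat] at this

theorem sat_le_prime {q N : Ideal R} (hq : q.IsPrime) (h : N ≤ q) : sat q N ≤ q := by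
  intro x hx
  obtain ⟨s, hs, hx⟩ := (mem_sat hq).1 hx
  exact (hq.mem_or_mem (h hx)).resolve_left hs

theorem sat_mul_le (q N M : Ideal R) : sat q N * M ≤ sat q (N * M) := by
  rw [Ideal.mul_le]
  rintro a ⟨s, hs, ha⟩ b hb
  exact ⟨s, hs, by rw [← mul_assoc]; exact Ideal.mul_mem_mul ha hb⟩

theorem sat_mem_of_mul {q N : Ideal R} (hq : q.IsPrime) {s x : R} (hs : s ∉ q)
    (h : s * x ∈ sat q N) : x ∈ sat q N := by
  rw [← sat_sat]
  exact (mem_sat hq).2 ⟨s, hs, h⟩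

theorem sat_anti {q p N : Ideal R} (hqp : q ≤ p) : sat p N ≤ sat q N := by
  rintro x ⟨s, hs, hx⟩
  exact ⟨s, Submonoid.closure_mono (Set.compl_subset_compl.2 hqp) hs, hx⟩

theorem mem_sat_iff_loc {q N : Ideal R} (hq : q.IsPrime) {x : R} :
    x ∈ sat q N ↔ algebraMap R (Localization.AtPrime q) x ∈
      N.map (algebraMap R (Localization.AtPrime q)) := by
  rw [mem_sat hq, IsLocalization.algebraMap_mem_map_algebraMap_iff q.primeCompl]
  rfl

theorem le_sat_iff_loc {q N N' : Ideal R} (hq : q.IsPrime) :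
    N' ≤ sat q N ↔ N'.map (algebraMap R (Localization.AtPrime q)) ≤
      N.map (algebraMap R (Localization.AtPrime q)) := by
  rw [Ideal.map_le_iff_le_comap]
  constructor
  · intro h x hx
    exact (mem_sat_iff_loc hq).1 (h hx)
  · intro h x hx
    exact (mem_sat_iff_loc hq).2 (h hx)

/-- uniform multiplier -/
theorem le_sat_iff {q N N' : Ideal R} (hq : q.IsPrime) (hN : N.FG) :
    N ≤ sat q N' ↔ ∃ s, s ∉ q ∧ ∀ x ∈ N, s * x ∈ N' := by
  constructor
  · intro h
    obtain ⟨S, rfl⟩ := hN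
    have h1 : ∀ x ∈ S, ∃ s, s ∉ q ∧ s * x ∈ N' := fun x hx =>
      (mem_sat hq).1 (h (Submodule.subset_span hx))
    classical
    have : ∃ s, s ∉ q ∧ ∀ x ∈ S, s * x ∈ N' := by
      clear h
      induction S using Finset.induction_on with
      | empty => exact ⟨1, fun h => hq.ne_top ((Ideal.eq_top_iff_one _).2 h), by simp⟩
      | insert a S ha ih =>
        obtain ⟨s, hs, h⟩ := ih (fun x hx => h1 x (by simp [hx]))
        obtain ⟨t, ht, h'⟩ := h1 a (by simp)
        refine ⟨s * t, fun hst => (hq.mem_or_mem hst).elim hs ht, ?_⟩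
        intro x hx
        rcases Finset.mem_insert.1 hx with rfl | hx
        · rw [mul_assoc]; exact N'.mul_mem_left _ h'
        · rw [mul_comm s, mul_assoc]; exact N'.mul_mem_left _ (h x hx)
    obtain ⟨s, hs, h2⟩ := this
    refine ⟨s, hs, ?_⟩
    have : Ideal.span (S : Set R) ≤ an N' s := by
      rw [Ideal.span_le]
      intro x hx
      simpa [mul_comm] using h2 x hx
    intro x hx
    have := this hx
    simpa [mul_comm] using this
  · rintro ⟨s, hs, h⟩ x hx
    exact (mem_sat hq).2 ⟨s, hs, h x hx⟩

theorem le_sat_iff_cl [IsNoetherianRing R] {q N N' : Ideal R} (hq : q.IsPrime) :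
    N ≤ sat q N' ↔ ¬ cl N' N ≤ q := by
  rw [le_sat_iff hq (IsNoetherian.noetherian N), SetLike.not_le_iff_exists]
  constructor
  · rintro ⟨s, hs, h⟩; exact ⟨s, mem_cl.2 h, hs⟩
  · rintro ⟨s, h, hs⟩; exact ⟨s, hs, mem_cl.1 h⟩

theorem nak [IsNoetherianRing R] {q N N' : Ideal R} (hq : q.IsPrime)
    (h : N ≤ sat q (N' ⊔ q * N)) : N ≤ sat q N' := by
  rw [le_sat_iff_loc hq] at *
  rw [Ideal.map_sup, Ideal.map_mul] at h
  refine Submodule.le_of_le_smul_of_le_jacobson_bot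
    (I := maximalIdeal (Localization.AtPrime q)) ?_ ?_ (h.trans ?_)
  · exact IsNoetherian.noetherian _
  · exact IsLocalRing.maximalIdeal_le_jacobson _
  · rw [Localization.AtPrime.map_eq_maximalIdeal]; rfl

/-! associated primes -/

/-- associated primes of `R/K`, elementwise -/
def AssP (K q : Ideal R) : Prop := q.IsPrime ∧ ∃ w, q = an K w

theorem AssP.le {K q : Ideal R} (h : AssP K q) : K ≤ q := by
  obtain ⟨_, w, rfl⟩ := h
  intro x hx
  exact K.mul_mem_right _ hx

theorem exists_AssP [IsNoetherianRing R] {K p : Ideal R} (hp : p.IsPrime) {w : R}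
    (h : an K w ≤ p) : ∃ q, AssP K q ∧ q ≤ p ∧ an K w ≤ q := by
  let S : Set (Ideal R) := {I | ∃ t, I = an K (w * t) ∧ I ≤ p}
  obtain ⟨q, ⟨t, hqt, hqp⟩, hmax⟩ := set_has_maximal_iff_noetherian.2 ‹IsNoetherianRing R› S
    ⟨an K w, 1, by simp, h⟩
  refine ⟨q, ⟨⟨fun h => hp.ne_top (top_le_iff.1 (h ▸ hqp)), ?_⟩, _, hqt⟩, hqp, ?_⟩
  · intro a b hab
    by_contra hcon
    push Not at hcon
    obtain ⟨ha, hb⟩ := hcon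
    have hle : ∀ c, q ≤ an K (w * (t * c)) := by
      intro c x hx
      rw [hqt] at hx
      simp only [mem_an] at *
      have := K.mul_mem_right c hx
      convert this using 1; ring
    have key : ∀ c, an K (w * (t * c)) ≤ p → an K (w * (t * c)) = q := by
      intro c hc
      by_contra hne
      exact hmax _ ⟨t * c, rfl, hc⟩ (lt_of_le_of_ne (hle c) (Ne.symm hne))
    by_cases h1 : an K (w * (t * a)) ≤ p
    · apply hb
      rw [← key a h1]
      rw [hqt] at hab
      simp only [mem_an] at *
      convert hab using 1; ring
    · obtain ⟨c, hc, hcp⟩ := SetLike.not_le_iff_exists.1 h1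
      apply ha
      rw [← key c ?_]
      · simp only [mem_an] at *
        convert hc using 1; ring
      · intro r hr
        have : r * c ∈ q := by
          rw [hqt]; simp only [mem_an] at *
          convert hr using 1; ring
        exact (hp.mem_or_mem (hqp this)).resolve_right hcp
  · rw [hqt]
    intro x hx
    simp only [mem_an] at *
    rw [← mul_assoc]; exact K.mul_mem_right _ hx

theorem exists_AssP_le [IsNoetherianRing R] {K p : Ideal R} (hp : p.IsPrime) (h : K ≤ p) :
    ∃ q, AssP K q ∧ q ≤ p := by
  obtain ⟨q, h1, h2, -⟩ := exists_AssP (w := 1) hp (K := K) (fun x hx => h (by simpa using hx))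
  exact ⟨q, h1, h2⟩

theorem exists_AssP_of_notMem [IsNoetherianRing R] {K : Ideal R} {w : R} (h : w ∉ K) :
    ∃ q, AssP K q ∧ an K w ≤ q := by
  have : an K w ≠ ⊤ := by
    intro h1
    have : (1 : R) ∈ an K w := by rw [h1]; trivial
    exact h (by simpa using this)
  obtain ⟨p, hp, hle⟩ := Ideal.exists_le_maximal _ this
  obtain ⟨q, h1, h2, h3⟩ := exists_AssP hp.isPrime hle
  exact ⟨q, h1, h3⟩

/-- if `w` is not in `sat p K`, an associated prime below `p` -/
theorem exists_AssP_of_notMem_sat [IsNoetherianRing R] {K p : Ideal R} (hp : p.IsPrime) {w : R}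
    (h : w ∉ sat p K) : ∃ q, AssP K q ∧ q ≤ p ∧ an K w ≤ q := by
  apply exists_AssP hp
  intro r hr
  by_contra hrp
  exact h ((mem_sat hp).2 ⟨r, hrp, hr⟩)

theorem AssP.exists_notMem {K q : Ideal R} (h : AssP K q) :
    ∃ w, q = an K w ∧ w ∉ sat q K := by
  obtain ⟨hq, w, hw⟩ := h
  refine ⟨w, hw, fun hc => ?_⟩
  obtain ⟨s, hs, h⟩ := (mem_sat hq).1 hc
  exact hs (by rw [hw]; exact h)

/-- `x` is regular modulo `K` -/
def Reg (K : Ideal R) (x : R) : Prop := ∀ w, x * w ∈ K → w ∈ K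

theorem reg_of_AssP [IsNoetherianRing R] {K : Ideal R} {x : R} (h : ∀ q, AssP K q → x ∉ q) :
    Reg K x := by
  intro w hw
  by_contra hcon
  obtain ⟨q, hq, hle⟩ := exists_AssP_of_notMem hcon
  exact h q hq (hle hw)

theorem Reg.notMem {K q : Ideal R} {x : R} (h : Reg K x) (hq : AssP K q) : x ∉ q := by
  obtain ⟨hq, w, rfl⟩ := hq
  intro hx
  have : w ∈ K := h w hx
  exact hq.ne_top ((Ideal.eq_top_iff_one _).2 (by simpa using this))

theorem Reg.mul {K : Ideal R} {x y : R} (hx : Reg K x) (hy : Reg K y) : Reg K (x * y) := by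
  intro w hw
  exact hy w (hx _ (by rwa [← mul_assoc]))

theorem Reg.pow {K : Ideal R} {x : R} (hx : Reg K x) (n : ℕ) : Reg K (x ^ n) := by
  induction n with
  | zero => intro w hw; simpa using hw
  | succ n ih => rw [pow_succ]; exact ih.mul hx

theorem AssP_finite [IsNoetherianRing R] (K : Ideal R) : {q | AssP K q}.Finite := by
  refine (associatedPrimes.finite R (R ⧸ K)).subset ?_
  rintro q ⟨hq, w, rfl⟩
  refine ⟨hq, Ideal.Quotient.mk K w, ?_⟩
  have : an K w = Submodule.colon ⊥ {Ideal.Quotient.mk K w} := by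
    ext r
    rw [mem_an, Submodule.mem_colon_singleton, Submodule.mem_bot, ← Ideal.Quotient.eq_zero_iff_mem]
    simp [Algebra.smul_def]
  rw [← this, hq.radical]

/-! heights -/
theorem AssP_minimal [IsNoetherianRing R] {K p : Ideal R} (h : p ∈ K.minimalPrimes) : AssP K p := by
  obtain ⟨⟨hp, hK⟩, hmin⟩ := h
  obtain ⟨q, hq, hqp⟩ := exists_AssP_le hp hK
  have : p = q := le_antisymm (hmin ⟨hq.1, hq.le⟩ hqp) hqp
  rwa [this]

end Basic

section Local
variable {R : Type u} [CommRing R] [IsLocalRing R]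

/-- set-theoretic section of the residue map -/
noncomputable def lift (x : ResidueField R) : R := Function.surjInv (residue_surjective (R := R)) x

theorem residue_lift (x : ResidueField R) : residue R (lift x) = x :=
  Function.surjInv_eq _ x

theorem lift_sub_unit {x y : ResidueField R} (h : x ≠ y) : IsUnit (lift x - lift y : R) := by
  rw [← residue_ne_zero_iff_isUnit, map_sub, residue_lift, residue_lift]
  exact sub_ne_zero.2 h

theorem lift_unit {x : ResidueField R} (h : x ≠ 0) : IsUnit (lift x : R) := by
  rw [← residue_ne_zero_iff_isUnit, residue_lift]
  exact h

theorem line_finite {V : Ideal R} {z : R} (hz : z ∉ V) (y : R) :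
    {x : ResidueField R | z + lift x * y ∈ V}.Finite := by
  apply Set.Subsingleton.finite
  intro a ha b hb
  by_contra hab
  apply hz
  simp only [Set.mem_setOf_eq] at *
  have h1 : (lift a - lift b) * y ∈ V := by
    have := V.sub_mem ha hb
    convert this using 1; ring
  have h2 : y ∈ V := (Ideal.unit_mul_mem_iff_mem V (lift_sub_unit hab)).1 h1
  exact (Ideal.add_mem_iff_left V (V.mul_mem_left _ h2)).1 ha

/-- `P` holds for generic elements of `J` -/
def Generic (J : Ideal R) (P : R → Prop) : Prop :=
  ∃ S : Set (Ideal R), S.Finite ∧ (∀ V ∈ S, ¬ J ≤ V) ∧ ∀ z ∈ J, (∀ V ∈ S, z ∉ V) → P z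

theorem exists_avoid [Infinite (ResidueField R)] {J : Ideal R} {S : Set (Ideal R)} (hS : S.Finite)
    (h : ∀ V ∈ S, ¬ J ≤ V) : ∃ z ∈ J, ∀ V ∈ S, z ∉ V := by
  induction S, hS using Set.Finite.induction_on with
  | empty => exact ⟨0, J.zero_mem, by simp⟩
  | @insert V S hV hS ih =>
    obtain ⟨z, hzJ, hz⟩ := ih (fun W hW => h W (by simp [hW]))
    by_cases hzV : z ∈ V
    · obtain ⟨y, hyJ, hyV⟩ := SetLike.not_le_iff_exists.1 (h V (by simp))
      have hfin : (⋃ W ∈ S, {x : ResidueField R | z + lift x * y ∈ W}).Finite :=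
        hS.biUnion (fun W hW => line_finite (hz W hW) y)
      obtain ⟨x, hx⟩ := (hfin.union (Set.finite_singleton (0 : ResidueField R))).exists_notMem
      simp only [Set.mem_union, Set.mem_iUnion, Set.mem_setOf_eq, Set.mem_singleton_iff, not_or,
        not_exists] at hx
      refine ⟨z + lift x * y, J.add_mem hzJ (J.mul_mem_left _ hyJ), ?_⟩
      intro W hW
      rcases hW with rfl | hW
      · intro hc
        apply hyV
        have := (Ideal.add_mem_iff_right _ hzV).1 hc
        exact (Ideal.unit_mul_mem_iff_mem _ (lift_unit hx.2)).1 this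
      · exact hx.1 W hW
    · refine ⟨z, hzJ, ?_⟩
      intro W hW
      rcases hW with rfl | hW
      · exact hzV
      · exact hz W hW

theorem Generic.exists [Infinite (ResidueField R)] {J : Ideal R} {P : R → Prop}
    (h : Generic J P) : ∃ z ∈ J, P z := by
  obtain ⟨S, hS, h1, h2⟩ := h
  obtain ⟨z, hz, h3⟩ := exists_avoid hS h1
  exact ⟨z, hz, h2 z hz h3⟩

theorem Generic.and {J : Ideal R} {P Q : R → Prop} (h : Generic J P) (h' : Generic J Q) :
    Generic J (fun z => P z ∧ Q z) := by
  obtain ⟨S, hS, h1, h2⟩ := h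
  obtain ⟨S', hS', h1', h2'⟩ := h'
  refine ⟨S ∪ S', hS.union hS', ?_, ?_⟩
  · rintro V (hV | hV)
    exacts [h1 V hV, h1' V hV]
  · intro z hz h
    exact ⟨h2 z hz fun V hV => h V (Or.inl hV), h2' z hz fun V hV => h V (Or.inr hV)⟩

theorem Generic.mono {J : Ideal R} {P Q : R → Prop} (h : Generic J P) (hPQ : ∀ z ∈ J, P z → Q z) :
    Generic J Q := by
  obtain ⟨S, hS, h1, h2⟩ := h
  exact ⟨S, hS, h1, fun z hz h => hPQ z hz (h2 z hz h)⟩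

theorem Generic.of_forall {J : Ideal R} {P : R → Prop} (h : ∀ z ∈ J, P z) : Generic J P :=
  ⟨∅, Set.finite_empty, by simp, fun z hz _ => h z hz⟩

theorem Generic.notMem {J V : Ideal R} (h : ¬ J ≤ V) : Generic J (fun z => z ∉ V) :=
  ⟨{V}, Set.finite_singleton _, by simpa using h, fun z _ h => h V rfl⟩

theorem Generic.forall_finite {J : Ideal R} {ι : Type*} {s : Set ι} (hs : s.Finite)
    {P : ι → R → Prop} (h : ∀ i ∈ s, Generic J (P i)) : Generic J (fun z => ∀ i ∈ s, P i z) := by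
  induction s, hs using Set.Finite.induction_on with
  | empty => exact Generic.of_forall (by simp)
  | @insert a s _ hs ih =>
    refine ((h a (by simp)).and (ih fun i hi => h i (by simp [hi]))).mono ?_
    rintro z _ ⟨h1, h2⟩ i (rfl | hi)
    exacts [h1, h2 i hi]

/-- avoid those members of a finite family which do not contain `J` -/
theorem Generic.avoid {J : Ideal R} {S : Set (Ideal R)} (hS : S.Finite) :
    Generic J (fun z => ∀ V ∈ S, ¬ J ≤ V → z ∉ V) := by
  refine Generic.forall_finite hS ?_
  intro V _
  by_cases h : J ≤ V
  · exact Generic.of_forall (fun z _ h' => absurd h h')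
  · exact (Generic.notMem h).mono (fun z _ h _ => h)

end Local

section Heights
variable {R : Type u} [CommRing R]

/-- height of a prime as a natural number -/
noncomputable def hh (q : Ideal R) : ℕ := q.height.toNat

theorem coe_hh [IsNoetherianRing R] {q : Ideal R} (hq : q.IsPrime) : ((hh q : ℕ) : ℕ∞) = q.height :=
  ENat.natCast_toNat (Ideal.height_lt_top hq.ne_top).ne

theorem hh_mono [IsNoetherianRing R] {q p : Ideal R} (hq : q.IsPrime) (hp : p.IsPrime)
    (h : q ≤ p) : hh q ≤ hh p := by
  have := Ideal.height_mono h
  rw [← coe_hh hq, ← coe_hh hp] at this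
  exact_mod_cast this

theorem hh_lt [IsNoetherianRing R] {q p : Ideal R} (hq : q.IsPrime) (hp : p.IsPrime)
    (h : q < p) : hh q < hh p := by
  have := Ideal.height_strict_mono_of_isPrime_of_isPrime h
  rw [← coe_hh hq, ← coe_hh hp] at this
  exact_mod_cast this

theorem rDim_loc [IsNoetherianRing R] {q : Ideal R} (hq : q.IsPrime) :
    rDim (Localization.AtPrime q) = ((hh q : ℕ) : WithBot ℕ∞) := by
  rw [rDim, IsLocalization.AtPrime.ringKrullDim_eq_height q, ← coe_hh hq]
  rfl

/-- prime avoidance -/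
theorem prime_avoid {J : Ideal R} {S : Set (Ideal R)} (hS : S.Finite)
    (hp : ∀ V ∈ S, V.IsPrime) (h : ∀ V ∈ S, ¬ J ≤ V) : ∃ z ∈ J, ∀ V ∈ S, z ∉ V := by
  by_contra hcon
  push Not at hcon
  have : ((J : Set R) ⊆ ⋃ i ∈ S, ((id i : Ideal R) : Set R)) := by
    intro z hz
    obtain ⟨V, hV, hzV⟩ := hcon z hz
    exact Set.mem_biUnion hV hzV
  obtain ⟨V, hV, hle⟩ := (Ideal.subset_union_prime_finite hS ⊤ ⊤
    (fun i hi _ _ => hp i hi)).1 this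
  exact h V hV hle

end Heights

section Dep
variable {R : Type u} [CommRing R]

theorem mem_sup_span {K : Ideal R} {y x : R} :
    x ∈ K ⊔ Ideal.span {y} ↔ ∃ k ∈ K, ∃ t, x = k + y * t := by
  rw [Submodule.mem_sup]
  constructor
  · rintro ⟨k, hk, z, hz, rfl⟩
    obtain ⟨t, rfl⟩ := Ideal.mem_span_singleton'.1 hz
    exact ⟨k, hk, t, by ring⟩
  · rintro ⟨k, hk, t, rfl⟩
    exact ⟨k, hk, y * t, Ideal.mem_span_singleton'.2 ⟨t, by ring⟩, rfl⟩

theorem Reg.swap {K : Ideal R} {y z : R} (hy : Reg K y) (hz : Reg (K ⊔ Ideal.span {y}) z) :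
    Reg (K ⊔ Ideal.span {z}) y := by
  intro w hw
  obtain ⟨k, hk, t, e⟩ := mem_sup_span.1 hw
  have h1 : t ∈ K ⊔ Ideal.span {y} := by
    apply hz
    exact mem_sup_span.2 ⟨-k, K.neg_mem hk, w, by linear_combination -e⟩
  obtain ⟨k', hk', t', e'⟩ := mem_sup_span.1 h1
  have h2 : w - z * t' ∈ K := by
    apply hy
    have : y * (w - z * t') = k + z * k' := by rw [e'] at e; linear_combination e
    rw [this]
    exact K.add_mem hk (K.mul_mem_left _ hk')
  exact mem_sup_span.2 ⟨_, h2, t', by ring⟩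

/-- lifting associated primes along a regular element -/
theorem AssP.lift [IsNoetherianRing R] {K q p : Ideal R} (hq : AssP K q) (hp : p.IsPrime)
    (hqp : q ≤ p) {y : R} (hyp : y ∈ p) (hy : Reg K y) :
    ∃ q', AssP (K ⊔ Ideal.span {y}) q' ∧ q ≤ q' ∧ q' ≤ p ∧ y ∈ q' := by
  obtain ⟨w, hw, hws⟩ := hq.exists_notMem
  have hwN : w ∈ cl K q := by
    rw [mem_cl]; intro r hr; rw [mul_comm]; rw [hw] at hr; exact hr
  have hN : ¬ cl K q ≤ sat p (K ⊔ Ideal.span {y}) := by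
    intro hcon
    apply hws
    have : cl K q ≤ sat p K := by
      apply nak hp
      intro x hx
      obtain ⟨s, hs, h⟩ := (mem_sat hp).1 (hcon hx)
      obtain ⟨k, hk, v, e⟩ := mem_sup_span.1 h
      refine (mem_sat hp).2 ⟨s, hs, ?_⟩
      rw [e]
      refine Ideal.add_mem _ (Ideal.mem_sup_left hk) (Ideal.mem_sup_right ?_)
      refine Ideal.mul_mem_mul hyp (mem_cl.2 fun r hr => ?_)
      apply hy
      have h1 : s * (x * r) ∈ K := K.mul_mem_left _ (mem_cl.1 hx r hr)
      have : y * (v * r) = s * (x * r) - k * r := by linear_combination (-r) * e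
      rw [this]
      exact K.sub_mem h1 (K.mul_mem_right _ hk)
    exact sat_anti hqp (this hwN)
  obtain ⟨x, hxN, hx⟩ := SetLike.not_le_iff_exists.1 hN
  obtain ⟨q', h1, h2, h3⟩ := exists_AssP_of_notMem_sat hp hx
  refine ⟨q', h1, ?_, h2, h1.le (Ideal.mem_sup_right (Ideal.mem_span_singleton_self y))⟩
  intro r hr
  apply h3
  rw [mem_an, mul_comm]
  exact Ideal.mem_sup_left (mem_cl.1 hxN r hr)

variable [IsLocalRing R]

/-- depth of `R/K` at least `n` -/
def Dep : ℕ → Ideal R → Prop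
  | 0, _ => True
  | n + 1, K => ∃ y ∈ maximalIdeal R, Reg K y ∧ Dep n (K ⊔ Ideal.span {y})

theorem Dep.pred {n : ℕ} {K : Ideal R} (h : Dep (n + 1) K) : Dep n K := by
  induction n generalizing K with
  | zero => trivial
  | succ n ih =>
    obtain ⟨y, hy, hr, h'⟩ := h
    exact ⟨y, hy, hr, ih h'⟩

theorem Dep.mono {n m : ℕ} (hnm : n ≤ m) {K : Ideal R} (h : Dep m K) : Dep n K := by
  induction hnm with
  | refl => exact h
  | step _ ih => exact ih h.pred

variable [IsNoetherianRing R]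

theorem Dep.not_AssP {n : ℕ} {K : Ideal R} (h : Dep (n + 1) K) : ¬ AssP K (maximalIdeal R) := by
  obtain ⟨y, hy, hr, -⟩ := h
  exact fun hA => hr.notMem hA hy

theorem not_AssP_exchange {K : Ideal R} {x y : R} (hx : x ∈ maximalIdeal R)
    (hy : y ∈ maximalIdeal R) (hxr : Reg K x) (hyr : Reg K y)
    (h : ¬ AssP (K ⊔ Ideal.span {y}) (maximalIdeal R)) :
    ¬ AssP (K ⊔ Ideal.span {x}) (maximalIdeal R) := by
  rintro ⟨-, w, hw⟩
  have hyw : y ∈ an (K ⊔ Ideal.span {x}) w := hw ▸ hy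
  obtain ⟨k, hk, v, e⟩ := mem_sup_span.1 hyw
  have hmv : maximalIdeal R ≤ an (K ⊔ Ideal.span {y}) v := by
    intro r hr
    have hrw : r ∈ an (K ⊔ Ideal.span {x}) w := hw ▸ hr
    obtain ⟨k', hk', t, e'⟩ := mem_sup_span.1 hrw
    have h1 : r * v - y * t ∈ K := by
      apply hxr
      have : x * (r * v - y * t) = y * k' - r * k := by linear_combination (-r) * e + y * e'
      rw [this]
      exact K.sub_mem (K.mul_mem_left _ hk') (K.mul_mem_left _ hk)
    exact mem_sup_span.2 ⟨_, h1, t, by ring⟩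
  have htop : an (K ⊔ Ideal.span {y}) v = ⊤ := by
    by_contra hne
    have := (IsLocalRing.eq_maximalIdeal
      (Ideal.IsMaximal.eq_of_le (maximalIdeal.isMaximal R) hne hmv ▸ maximalIdeal.isMaximal R))
    exact h ⟨(maximalIdeal.isMaximal R).isPrime, v, this.symm⟩
  have hv : v ∈ K ⊔ Ideal.span {y} := by
    have : (1 : R) ∈ an (K ⊔ Ideal.span {y}) v := by rw [htop]; trivial
    simpa using this
  obtain ⟨k'', hk'', t', e''⟩ := mem_sup_span.1 hv
  have hwK : w ∈ K ⊔ Ideal.span {x} := by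
    have : w - x * t' ∈ K := by
      apply hyr
      have : y * (w - x * t') = x * k'' + k := by rw [e''] at e; linear_combination e
      rw [this]
      exact K.add_mem (K.mul_mem_left _ hk'') hk
    exact mem_sup_span.2 ⟨_, this, t', by ring⟩
  have : (1 : R) ∈ maximalIdeal R := by rw [hw, mem_an, one_mul]; exact hwK
  exact (Ideal.ne_top_iff_one _).1 (maximalIdeal.isMaximal R).ne_top this

theorem AssP_le_max {K q : Ideal R} (h : AssP K q) : q ≤ maximalIdeal R :=
  IsLocalRing.le_maximalIdeal h.1.ne_top

theorem max_not_le {K : Ideal R} (h : ¬ AssP K (maximalIdeal R)) {q : Ideal R} (hq : AssP K q) :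
    ¬ maximalIdeal R ≤ q := fun hle =>
  h (le_antisymm (AssP_le_max hq) hle ▸ hq)

theorem Dep.exchange {n : ℕ} {K : Ideal R} {x y : R} (hx : x ∈ maximalIdeal R)
    (hy : y ∈ maximalIdeal R) (hxr : Reg K x) (hyr : Reg K y)
    (h : Dep n (K ⊔ Ideal.span {y})) : Dep n (K ⊔ Ideal.span {x}) := by
  induction n generalizing K x y with
  | zero => trivial
  | succ n ih =>
    have hmy := h.not_AssP
    have hmx := not_AssP_exchange hx hy hxr hyr hmy
    have hmK : ¬ AssP K (maximalIdeal R) := fun hA => hyr.notMem hA hy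
    obtain ⟨z, hz, hz'⟩ := prime_avoid (J := maximalIdeal R)
      (((AssP_finite K).union (AssP_finite (K ⊔ Ideal.span {x}))).union
        (AssP_finite (K ⊔ Ideal.span {y}))) (by
          rintro V ((hV | hV) | hV) <;> exact hV.1) (by
          rintro V ((hV | hV) | hV)
          · exact max_not_le hmK hV
          · exact max_not_le hmx hV
          · exact max_not_le hmy hV)
    have hzK : Reg K z := reg_of_AssP fun q hq => hz' q (Or.inl (Or.inl hq))
    have hzx : Reg (K ⊔ Ideal.span {x}) z := reg_of_AssP fun q hq => hz' q (Or.inl (Or.inr hq))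
    have hzy : Reg (K ⊔ Ideal.span {y}) z := reg_of_AssP fun q hq => hz' q (Or.inr hq)
    obtain ⟨y2, hy2, hy2r, h2⟩ := h
    have h3 : Dep n (K ⊔ Ideal.span {y} ⊔ Ideal.span {z}) := ih hz hy2 hzy hy2r h2
    rw [sup_right_comm] at h3
    have h4 := ih hx hy (hxr.swap hzx) (hyr.swap hzy) h3
    rw [sup_right_comm] at h4
    exact ⟨z, hz, hzx, h4⟩

theorem Dep.of_reg {n : ℕ} {K : Ideal R} {x : R} (hx : x ∈ maximalIdeal R) (hxr : Reg K x)
    (h : Dep (n + 1) K) : Dep n (K ⊔ Ideal.span {x}) := by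
  obtain ⟨y, hy, hyr, h'⟩ := h
  exact h'.exchange hx hy hxr hyr

/-- unmixedness bound -/
theorem Dep.height {n : ℕ} {K q : Ideal R} (h : Dep n K) (hq : AssP K q) :
    hh q + n ≤ hh (maximalIdeal R) := by
  induction n generalizing K q with
  | zero => exact hh_mono hq.1 (maximalIdeal.isMaximal R).isPrime (AssP_le_max hq)
  | succ n ih =>
    obtain ⟨y, hy, hyr, h'⟩ := h
    obtain ⟨q', h1, h2, h3, h4⟩ := hq.lift (maximalIdeal.isMaximal R).isPrime (AssP_le_max hq) hy hyr
    have := ih h' h1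
    have hlt : q < q' := lt_of_le_of_ne h2 (fun e => hyr.notMem hq (e ▸ h4))
    have := hh_lt hq.1 h1.1 hlt
    omega

/-- building parameter ideals inside a prime -/
theorem exists_param (hD : Dep (hh (maximalIdeal R)) (⊥ : Ideal R)) {p : Ideal R} (hp : p.IsPrime)
    (j : ℕ) (hj : j ≤ hh p) : ∃ X ≤ p, Dep (hh (maximalIdeal R) - j) X ∧
      ∀ P : Ideal R, P.IsPrime → X ≤ P → j ≤ hh P := by
  have hpm : hh p ≤ hh (maximalIdeal R) := hh_mono hp (maximalIdeal.isMaximal R).isPrime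
    (IsLocalRing.le_maximalIdeal hp.ne_top)
  induction j with
  | zero => exact ⟨⊥, bot_le, hD, fun _ _ _ => Nat.zero_le _⟩
  | succ j ih =>
    obtain ⟨X, hXp, hX, hXh⟩ := ih (by omega)
    obtain ⟨y, hy, hy'⟩ := prime_avoid (J := p) (AssP_finite X) (fun V hV => hV.1) (by
      intro V hV hle
      have := hX.height hV
      have := hh_mono hp hV.1 hle
      omega)
    have hyr : Reg X y := reg_of_AssP hy'
    refine ⟨X ⊔ Ideal.span {y}, sup_le hXp (by simpa [Ideal.span_le] using hy), ?_, ?_⟩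
    · apply Dep.of_reg (IsLocalRing.le_maximalIdeal hp.ne_top hy) hyr
      convert hX using 1; omega
    · intro P hP hle
      obtain ⟨q, hq, hqP⟩ := exists_AssP_le hP (le_sup_left.trans hle)
      have hyP : y ∈ P := hle (Ideal.mem_sup_right (Ideal.mem_span_singleton_self y))
      have := hXh q hq.1 hq.le
      have := hh_lt hq.1 hP (lt_of_le_of_ne hqP (fun e => hyr.notMem hq (e ▸ hyP)))
      omega

/-- adjacent primes differ in height by one -/
theorem adjacent (hD : Dep (hh (maximalIdeal R)) (⊥ : Ideal R)) {q' q : Ideal R} (hq' : q'.IsPrime)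
    (hq : q.IsPrime) (hlt : q' < q) (hadj : ∀ P : Ideal R, P.IsPrime → q' < P → P ≤ q → P = q) :
    hh q ≤ hh q' + 1 := by
  have hqm : hh q ≤ hh (maximalIdeal R) := hh_mono hq (maximalIdeal.isMaximal R).isPrime
    (IsLocalRing.le_maximalIdeal hq.ne_top)
  have hlt' := hh_lt hq' hq hlt
  obtain ⟨X, hX1, hX2, hX3⟩ := exists_param hD hq' _ le_rfl
  have hAss : AssP X q' := by
    obtain ⟨q0, h1, h2⟩ := exists_AssP_le hq' hX1
    have h3 := hX3 q0 h1.1 h1.le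
    rcases eq_or_lt_of_le h2 with rfl | h4
    · exact h1
    · have := hh_lt h1.1 hq' h4; omega
  obtain ⟨y, hy, hy'⟩ := prime_avoid (J := q) (AssP_finite X) (fun V hV => hV.1) (by
      intro V hV hle
      have := hX2.height hV
      have := hh_mono hq hV.1 hle
      omega)
  have hyr : Reg X y := reg_of_AssP hy'
  obtain ⟨q'', h1, h2, h3, h4⟩ := hAss.lift hq hlt.le hy hyr
  have h5 : q'' = q := hadj q'' h1.1 (lt_of_le_of_ne h2 (fun e => hyr.notMem hAss (e ▸ h4))) h3
  have h6 : Dep (hh (maximalIdeal R) - hh q' - 1) (X ⊔ Ideal.span {y}) := by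
    apply Dep.of_reg (IsLocalRing.le_maximalIdeal hq.ne_top hy) hyr
    convert hX2 using 1; omega
  have := h6.height h1
  rw [h5] at this
  omega

open scoped Pointwise in
theorem Dep.of_weaklyRegular {M : Type v} [AddCommGroup M] [Module R M] (rs : List R)
    (hm : ∀ x ∈ rs, x ∈ maximalIdeal R) (K : Ideal R) (f : R →ₗ[R] M)
    (hf : Function.Surjective f) (hK : LinearMap.ker f = K)
    (h : RingTheory.Sequence.IsWeaklyRegular M rs) : Dep rs.length K := by
  induction rs generalizing M K with
  | nil => trivial
  | cons r rs ih =>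
    rw [RingTheory.Sequence.isWeaklyRegular_cons_iff] at h
    obtain ⟨h1, h2⟩ := h
    refine ⟨r, hm r (by simp), ?_, ?_⟩
    · intro w hw
      rw [← hK, LinearMap.mem_ker] at *
      rw [← smul_eq_mul, map_smul] at hw
      exact h1.right_eq_zero_of_smul hw
    · refine ih (fun x hx => hm x (by simp [hx])) _
        ((Submodule.mkQ (r • (⊤ : Submodule R M))).comp f)
        ((Submodule.mkQ_surjective _).comp hf) ?_ h2
      ext x
      rw [LinearMap.mem_ker, LinearMap.comp_apply, Submodule.mkQ_apply,
        Submodule.Quotient.mk_eq_zero, Submodule.mem_smul_pointwise_iff_exists, mem_sup_span]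
      constructor
      · rintro ⟨b, -, hb⟩
        obtain ⟨t, rfl⟩ := hf b
        refine ⟨x - r * t, ?_, t, by ring⟩
        rw [← hK, LinearMap.mem_ker, map_sub, ← smul_eq_mul r t, map_smul, hb, sub_self]
      · rintro ⟨k, hk, t, rfl⟩
        rw [← hK, LinearMap.mem_ker] at hk
        exact ⟨f t, trivial, by rw [map_add, hk, ← smul_eq_mul r t, map_smul, zero_add]⟩

theorem Dep.of_le_qDepth {K : Ideal R} {n : ℕ} (h : (n : ℕ∞) ≤ qDepth R K) : Dep n K := by
  rcases n with _ | n
  · trivial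
  rw [qDepth, mDepth] at h
  have : ∃ m ∈ {n : ℕ∞ | ∃ rs : List R, (∀ x ∈ rs, x ∈ maximalIdeal R) ∧
    RingTheory.Sequence.IsRegular (R ⧸ K) rs ∧ (rs.length : ℕ∞) = n}, (n : ℕ∞) < m := by
    apply lt_sSup_iff.1
    refine lt_of_lt_of_le ?_ h
    exact_mod_cast Nat.lt_succ_self n
  obtain ⟨m, ⟨rs, h1, h2, rfl⟩, hlt⟩ := this
  have := Dep.of_weaklyRegular rs h1 K (Submodule.mkQ K) (Submodule.mkQ_surjective _)
    (Submodule.ker_mkQ _) h2.toIsWeaklyRegular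
  exact this.mono (by exact_mod_cast hlt)

theorem Dep.of_CM (h : IsCMLocalRing R) : Dep (hh (maximalIdeal R)) (⊥ : Ideal R) := by
  apply Dep.of_le_qDepth
  rw [IsCMLocalRing, rDim, ← IsLocalRing.maximalIdeal_height_eq_ringKrullDim] at h
  rw [coe_hh (maximalIdeal.isMaximal R).isPrime]
  have : (maximalIdeal R).height = qDepth R ⊥ := by exact_mod_cast h
  exact this.le

end Dep

section S2
variable {R : Type u} [CommRing R] [IsNoetherianRing R]

theorem S2use {K : Ideal R} (hK : QuotS2 K) {x : R} (hx : Reg K x) {q : Ideal R}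
    (hq : AssP (K ⊔ Ideal.span {x}) q) {q' q'' : Ideal R} (hq' : q'.IsPrime) (hq'' : q''.IsPrime)
    (hKq : K ≤ q') (h1 : q' < q'') (h2 : q'' < q) : False := by
  haveI := hq.1
  let A := Localization.AtPrime q
  let f := algebraMap R A
  have hprime : ∀ P : Ideal R, P.IsPrime → P ≤ q → (P.map f).IsPrime ∧
      Ideal.comap f (P.map f) = P := by
    intro P hP hle
    have hd : Disjoint (q.primeCompl : Set R) (P : Set R) := by
      rw [Set.disjoint_left]
      intro a ha haP
      exact ha (hle haP)
    exact ⟨IsLocalization.isPrime_of_isPrime_disjoint q.primeCompl A P hP hd,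
      IsLocalization.under_map_of_isPrime_disjoint q.primeCompl A hP hd⟩
  have hlt : ∀ P P' : Ideal R, P.IsPrime → P'.IsPrime → P < P' → P' ≤ q → P.map f < P'.map f := by
    intro P P' hP hP' h hle
    refine lt_of_le_of_ne (Ideal.map_mono h.le) (fun e => h.ne ?_)
    rw [← (hprime P hP (h.le.trans hle)).2, ← (hprime P' hP' hle).2, e]
  have hS := hK q hq.1 (hKq.trans (h1.le.trans h2.le))
  have hdim : (2 : WithBot ℕ∞) ≤ rDim (A ⧸ (K.map f)) := by
    rw [rDim, ringKrullDim_quotient]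
    have hz : ∀ P : Ideal R, K ≤ P → ∀ hP : (P.map f).IsPrime,
        (⟨P.map f, hP⟩ : PrimeSpectrum A) ∈ PrimeSpectrum.zeroLocus ((K.map f : Ideal A) : Set A) := by
      intro P hle hP
      rw [PrimeSpectrum.mem_zeroLocus]
      exact Ideal.map_mono hle
    let z0 : PrimeSpectrum.zeroLocus ((K.map f : Ideal A) : Set A) :=
      ⟨⟨q'.map f, (hprime q' hq' (h1.le.trans h2.le)).1⟩, hz _ hKq _⟩
    let z1 : PrimeSpectrum.zeroLocus ((K.map f : Ideal A) : Set A) :=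
      ⟨⟨q''.map f, (hprime q'' hq'' h2.le).1⟩, hz _ (hKq.trans h1.le) _⟩
    let z2 : PrimeSpectrum.zeroLocus ((K.map f : Ideal A) : Set A) :=
      ⟨⟨q.map f, (hprime q hq.1 le_rfl).1⟩, hz _ (hKq.trans (h1.le.trans h2.le)) _⟩
    have h01 : z0 < z1 := hlt q' q'' hq' hq'' h1 h2.le
    have h12 : z1 < z2 := hlt q'' q hq'' hq.1 h2 le_rfl
    let s : LTSeries (PrimeSpectrum.zeroLocus ((K.map f : Ideal A) : Set A)) :=
      { length := 2
        toFun := ![z0, z1, z2]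
        step := by
          intro i
          fin_cases i
          · exact h01
          · exact h12 }
    exact le_iSup (fun s : LTSeries (PrimeSpectrum.zeroLocus ((K.map f : Ideal A) : Set A)) =>
      ((s.length : ℕ) : WithBot ℕ∞)) s
  rw [min_eq_left hdim] at hS
  have hD : Dep 2 (K.map f) := Dep.of_le_qDepth (WithBot.coe_le_coe.1 hS)
  have hmax : maximalIdeal A = q.map f := (Localization.AtPrime.map_eq_maximalIdeal).symm
  have hxq : x ∈ q := hq.le (Ideal.mem_sup_right (Ideal.mem_span_singleton_self x))
  have hxm : f x ∈ maximalIdeal A := by rw [hmax]; exact Ideal.mem_map_of_mem _ hxq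
  have hmap : ∀ (N : Ideal R) (a : R), f a ∈ N.map f ↔ a ∈ sat q N := fun N a =>
    (mem_sat_iff_loc hq.1).symm
  have hunit : ∀ s, s ∉ q → IsUnit (f s) := fun s hs =>
    IsLocalization.map_units A (⟨s, hs⟩ : q.primeCompl)
  have hxr : Reg (K.map f) (f x) := by
    intro w hw
    obtain ⟨a, s, rfl⟩ := IsLocalization.exists_mk'_eq q.primeCompl w
    have hs := hunit s s.2
    have e : f s * IsLocalization.mk' A a s = f a := IsLocalization.mk'_spec' A a s
    have h3 : f (x * a) ∈ K.map f := by
      rw [map_mul, ← e, mul_left_comm]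
      exact Ideal.mul_mem_left _ _ hw
    rw [hmap, mem_sat hq.1] at h3
    obtain ⟨t, ht, h4⟩ := h3
    have h5 : a ∈ sat q K := (mem_sat hq.1).2 ⟨t, ht, hx _ (by rwa [mul_left_comm] at h4)⟩
    rw [← hmap, ← e] at h5
    exact (Ideal.unit_mul_mem_iff_mem _ hs).1 h5
  have hD1 := Dep.of_reg hxm hxr hD
  apply hD1.not_AssP
  obtain ⟨w, hw, hws⟩ := hq.exists_notMem
  have e : Ideal.map f K ⊔ Ideal.span {f x} = Ideal.map f (K ⊔ Ideal.span {x}) := by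
    rw [Ideal.map_sup, Ideal.map_span, Set.image_singleton]
  rw [e]
  refine ⟨(maximalIdeal.isMaximal A).isPrime, f w, ?_⟩
  symm
  apply IsLocalRing.eq_maximalIdeal
  have hle : maximalIdeal A ≤ an (Ideal.map f (K ⊔ Ideal.span {x})) (f w) := by
    rw [hmax, Ideal.map_le_iff_le_comap]
    intro r hr
    rw [hw] at hr
    rw [Ideal.mem_comap, mem_an, ← map_mul]
    exact Ideal.mem_map_of_mem _ hr
  have hne : an (Ideal.map f (K ⊔ Ideal.span {x})) (f w) ≠ ⊤ := by
    intro htop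
    have : (1 : A) ∈ an (Ideal.map f (K ⊔ Ideal.span {x})) (f w) := by rw [htop]; trivial
    rw [mem_an, one_mul, hmap] at this
    exact hws this
  rw [← Ideal.IsMaximal.eq_of_le (maximalIdeal.isMaximal A) hne hle]
  exact maximalIdeal.isMaximal A

end S2

section Lists
variable {R : Type u} [CommRing R]

/-- ideal generated by a list -/
def sp (T : List R) : Ideal R := Ideal.span {x | x ∈ T}

@[simp] theorem sp_nil : sp ([] : List R) = ⊥ := by simp [sp]

theorem sp_cons (x : R) (T : List R) : sp (x :: T) = sp T ⊔ Ideal.span {x} := by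
  rw [sp, sp, ← Ideal.span_union]
  congr 1
  ext y
  simp [or_comm]

theorem sp_append (T T' : List R) : sp (T ++ T') = sp T ⊔ sp T' := by
  rw [sp, sp, sp, ← Ideal.span_union]
  congr 1
  ext y
  simp

theorem sp_perm {T T' : List R} (h : T.Perm T') : sp T = sp T' := by
  rw [sp, sp]
  congr 1
  ext y
  exact h.mem_iff

theorem mem_sp {T : List R} {x : R} (h : x ∈ T) : x ∈ sp T := Ideal.subset_span h

theorem sp_le {T : List R} {I : Ideal R} : sp T ≤ I ↔ ∀ x ∈ T, x ∈ I := by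
  rw [sp, Ideal.span_le]; rfl

theorem sp_mono {T T' : List R} (h : T ⊆ T') : sp T ≤ sp T' := sp_le.2 fun _ hx => mem_sp (h hx)

theorem mem_sp_dichotomy {q : Ideal R} {v : List R} {y : R} (hy : y ∈ sp v) :
    y ∈ q * sp v ∨ ∃ w v' c, v.Perm (w :: v') ∧ c ∉ q ∧ ∃ r ∈ sp v', y = r + w * c := by
  induction v generalizing y with
  | nil => left; simpa using hy
  | cons w v ih =>
    rw [sp_cons] at hy
    obtain ⟨r, hr, c, rfl⟩ := mem_sup_span.1 hy
    by_cases hc : c ∈ q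
    · rcases ih hr with h | ⟨w', v', c', hp, hc', r', hr', rfl⟩
      · left
        refine Ideal.add_mem _ (Ideal.mul_mono_right (sp_mono (List.subset_cons_self _ _)) h) ?_
        rw [mul_comm w c]
        exact Ideal.mul_mem_mul hc (mem_sp (by simp))
      · right
        refine ⟨w', w :: v', c', ?_, hc', r' + w * c, ?_, by ring⟩
        · exact (hp.cons w).trans (List.Perm.swap _ _ _)
        · rw [sp_cons]; exact mem_sup_span.2 ⟨r', hr', c, rfl⟩
    · right
      exact ⟨w, v, c, List.Perm.refl _, hc, r, hr, rfl⟩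

/-- `I/A` is generated by `n` elements at `q` -/
def Gen (A I q : Ideal R) (n : ℕ) : Prop :=
  ∃ v : List R, (∀ x ∈ v, x ∈ I) ∧ v.length ≤ n ∧ I ≤ sat q (A ⊔ sp v)

theorem Gen.mono {A A' I q : Ideal R} {n n' : ℕ} (h : Gen A I q n) (hA : A ≤ A') (hn : n ≤ n') :
    Gen A' I q n' := by
  obtain ⟨v, h1, h2, h3⟩ := h
  exact ⟨v, h1, h2.trans hn, h3.trans (sat_mono _ (sup_le_sup_right hA _))⟩

theorem Gen.zero {A I q : Ideal R} : Gen A I q 0 ↔ I ≤ sat q A := by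
  constructor
  · rintro ⟨v, h1, h2, h3⟩
    have : v = [] := List.length_eq_zero_iff.1 (Nat.le_zero.1 h2)
    subst this
    simpa using h3
  · intro h
    exact ⟨[], by simp, by simp, by simpa using h⟩

theorem Gen.exchange {A I q : Ideal R} (hq : q.IsPrime) {n : ℕ} (h : Gen A I q n) {x : R}
    (hxI : x ∈ I) (hx : x ∉ sat q (A ⊔ q * I)) : Gen (A ⊔ Ideal.span {x}) I q (n - 1) := by
  obtain ⟨v, h1, h2, h3⟩ := h
  obtain ⟨s, hs, h4⟩ := (mem_sat hq).1 (h3 hxI)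
  obtain ⟨a, ha, y, hy, e⟩ := Submodule.mem_sup.1 h4
  rcases mem_sp_dichotomy (q := q) hy with h5 | ⟨w, v', c, hp, hc, r, hr, e2⟩
  · exfalso
    apply hx
    refine (mem_sat hq).2 ⟨s, hs, ?_⟩
    rw [← e]
    exact Ideal.add_mem _ (Ideal.mem_sup_left ha)
      (Ideal.mem_sup_right (Ideal.mul_mono_right (sp_le.2 h1) h5))
  · have hlen := hp.length_eq
    simp only [List.length_cons] at hlen
    refine ⟨v', fun z hz => h1 z (hp.mem_iff.2 (by simp [hz])), by omega, ?_⟩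
    refine h3.trans (sat_le_sat ?_)
    rw [sp_perm hp, sp_cons]
    refine sup_le ((le_sup_left.trans le_sup_left).trans (le_sat _ _))
      (sup_le (le_sup_right.trans (le_sat _ _)) ?_)
    rw [Ideal.span_le, Set.singleton_subset_iff]
    refine (mem_sat hq).2 ⟨c, hc, ?_⟩
    have : c * w = s * x - a - r := by rw [← e, e2]; ring
    rw [this]
    refine Ideal.sub_mem _ (Ideal.sub_mem _ ?_ ?_) ?_
    · exact Ideal.mem_sup_left (Ideal.mem_sup_right
        (Ideal.mul_mem_left _ _ (Ideal.mem_span_singleton_self x)))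
    · exact Ideal.mem_sup_left (Ideal.mem_sup_left ha)
    · exact Ideal.mem_sup_right hr

theorem not_Gen_iff [IsNoetherianRing R] {A I q : Ideal R} (hq : q.IsPrime) {n : ℕ} :
    ¬ Gen A I q n ↔
      (⨆ (v : List R) (_ : (∀ x ∈ v, x ∈ I) ∧ v.length ≤ n), cl (A ⊔ sp v) I) ≤ q := by
  simp only [iSup_le_iff]
  constructor
  · intro h v ⟨h1, h2⟩
    by_contra h3
    exact h ⟨v, h1, h2, (le_sat_iff_cl hq).2 h3⟩
  · rintro h ⟨v, h1, h2, h3⟩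
    exact (le_sat_iff_cl hq).1 h3 (h v ⟨h1, h2⟩)

theorem le_of_reduction {J I q : Ideal R} (hq : q.IsPrime) (hJ : IsReduction J I) (h : J ≤ q) :
    I ≤ q := by
  obtain ⟨-, r, e⟩ := hJ
  have : I ^ (r + 1) ≤ q := by rw [e]; exact Ideal.mul_le_left.trans h
  exact hq.le_of_pow_le this

end Lists

section Residual
variable {R : Type u} [CommRing R] [IsNoetherianRing R] [IsLocalRing R]

/-- elementary form of the hypotheses -/
structure Setup (I : Ideal R) (l : ℕ) : Prop where
  dep : Dep (hh (maximalIdeal R)) (⊥ : Ideal R)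
  ne : I ≠ ⊤
  G : ∀ q : Ideal R, q.IsPrime → I ≤ q → hh q < l → Gen ⊥ I q (hh q)
  S : ∀ T : List R, (∀ x ∈ T, x ∈ I) → T.length < l → cl (sp T) I ≠ ⊤ →
    (∃ p : Ideal R, p.IsPrime ∧ I ≤ p ∧ hh p ≤ T.length) →
    (∀ P : Ideal R, P.IsPrime → cl (sp T) I ≤ P → T.length ≤ hh P) →
    (∀ P : Ideal R, P.IsPrime → I ≤ P → cl (sp T) I ≤ P → T.length + 1 ≤ hh P) →
    ∀ x, Reg (cl (sp T) I) x → ∀ q, AssP (cl (sp T) I ⊔ Ideal.span {x}) q →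
    ∀ q' q'' : Ideal R, q'.IsPrime → q''.IsPrime → cl (sp T) I ≤ q' → q' < q'' → q'' < q → False

/-- conditions on a partial list -/
structure Cnd (I : Ideal R) (s : ℕ) (T : List R) : Prop where
  mem : ∀ x ∈ T, x ∈ I
  gen : ∀ q : Ideal R, q.IsPrime → I ≤ q → hh q < s → Gen (sp T) I q (hh q - T.length)
  hgt : ∀ P : Ideal R, P.IsPrime → cl (sp T) I ≤ P → T.length ≤ hh P

/-- good lists -/
def Good (I : Ideal R) (s : ℕ) (T : List R) : Prop := ∀ T', T' <:+ T → Cnd I s T'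

theorem Good.cnd {I : Ideal R} {s : ℕ} {T : List R} (h : Good I s T) : Cnd I s T :=
  h T (List.suffix_refl T)

theorem Good.tail {I : Ideal R} {s : ℕ} {x : R} {T : List R} (h : Good I s (x :: T)) :
    Good I s T := fun T' hT' => h T' (hT'.trans (List.suffix_cons x T))

theorem Good.cons {I : Ideal R} {s : ℕ} {x : R} {T : List R} (h : Good I s T)
    (h' : Cnd I s (x :: T)) : Good I s (x :: T) := by
  intro T' hT'
  rcases List.suffix_cons_iff.1 hT' with rfl | h1
  · exact h'
  · exact h T' h1

theorem Cnd.hgt' {I : Ideal R} {s : ℕ} {T : List R} (h : Cnd I s T) (hs : T.length < s)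
    (P : Ideal R) (hP : P.IsPrime) (hI : I ≤ P) (hK : cl (sp T) I ≤ P) : T.length + 1 ≤ hh P := by
  by_cases h1 : hh P < s
  · by_contra h2
    have h3 := h.gen P hP hI h1
    have : hh P - T.length = 0 := by omega
    rw [this, Gen.zero, le_sat_iff_cl hP] at h3
    exact h3 hK
  · omega

theorem Good.nil {I : Ideal R} {l s : ℕ} (h : Setup I l) (hs : s ≤ l) : Good I s [] := by
  intro T' hT'
  have : T' = [] := List.suffix_nil.1 hT'
  subst this
  refine ⟨by simp, fun q hq hI hlt => ?_, fun _ _ _ => by simp⟩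
  simpa using h.G q hq hI (by omega)

/-- conclusions of the structure lemma -/
structure Struct (I : Ideal R) (T : List R) : Prop where
  al : ∀ q, AssP (cl (sp T) I) q → ¬ I ≤ q
  de : ∀ q, AssP (cl (sp T) I) q → hh q ≤ T.length
  be : ∀ x, x ∈ cl (sp T) I → x ∈ I → x ∈ sp T
  ga : ∀ x q, Reg (cl (sp T) I) x → AssP (cl (sp T) I ⊔ Ideal.span {x}) q → hh q ≤ T.length + 1
  ep : (∀ p : Ideal R, p.IsPrime → I ≤ p → T.length < hh p) →
    cl (sp T) I = sp T ∧ Dep (hh (maximalIdeal R) - T.length) (sp T)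

theorem struct_step {I : Ideal R} {l s : ℕ} (hset : Setup I l) (hsl : s ≤ l) {T : List R}
    (hc : Cnd I s T) (hT : T.length < s) {B : Ideal R} (hBT : sp T ≤ B)
    (hBI : ∀ x ∈ B, x ∈ I → x ∈ sp T) (hB : ∀ q, AssP B q → hh q ≤ T.length)
    (hep : (∀ p : Ideal R, p.IsPrime → I ≤ p → T.length < hh p) →
      B = sp T ∧ Dep (hh (maximalIdeal R) - T.length) (sp T)) : Struct I T := by
  have hcl : cl (sp T) I = cl B I := by
    ext x
    rw [mem_cl, mem_cl]
    exact ⟨fun h y hy => hBT (h y hy), fun h y hy => hBI _ (h y hy) (I.mul_mem_left _ hy)⟩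
  have hAss : ∀ q, AssP (cl (sp T) I) q → AssP B q := by
    intro q hq
    obtain ⟨w, hw, hws⟩ := hq.exists_notMem
    have : ¬ I * Ideal.span {w} ≤ sat q B := by
      intro hcon
      apply hws
      obtain ⟨t, ht, h⟩ := (le_sat_iff hq.1 (IsNoetherian.noetherian _)).1 hcon
      refine (mem_sat hq.1).2 ⟨t, ht, ?_⟩
      rw [hcl, mem_cl]
      intro y hy
      have := h (y * w) (Ideal.mul_mem_mul hy (Ideal.mem_span_singleton_self w))
      convert this using 1; ring
    obtain ⟨z, hz, hzs⟩ := SetLike.not_le_iff_exists.1 this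
    obtain ⟨y, hy, rfl⟩ := Ideal.mem_mul_span_singleton.1 hz
    obtain ⟨q0, h1, h2, h3⟩ := exists_AssP_of_notMem_sat hq.1 hzs
    have : q ≤ q0 := by
      intro r hr
      apply h3
      rw [hw, mem_an, hcl, mem_cl] at hr
      rw [mem_an]
      have := hr y hy
      convert this using 1; ring
    rwa [le_antisymm this h2]
  have hde : ∀ q, AssP (cl (sp T) I) q → hh q ≤ T.length := fun q hq => hB q (hAss q hq)
  have hal : ∀ q, AssP (cl (sp T) I) q → ¬ I ≤ q := by
    intro q hq hI
    have := hc.hgt' hT q hq.1 hI hq.le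
    have := hde q hq
    omega
  have hep' : (∀ p : Ideal R, p.IsPrime → I ≤ p → T.length < hh p) →
      cl (sp T) I = sp T ∧ Dep (hh (maximalIdeal R) - T.length) (sp T) := by
    intro h
    obtain ⟨h1, h2⟩ := hep h
    refine ⟨le_antisymm ?_ (le_cl _ _), h2⟩
    intro w hw
    by_contra hcon
    rw [← h1] at hcon
    obtain ⟨q, hq, hle⟩ := exists_AssP_of_notMem hcon
    have : I ≤ q := by
      intro y hy
      apply hle
      rw [mem_an, mul_comm, h1]
      exact mem_cl.1 hw y hy
    have := h q hq.1 this
    have := hB q hq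
    omega
  refine ⟨hal, hde, ?_, ?_, hep'⟩
  · intro x hxK hxI
    by_contra hcon
    have hxB : x ∉ B := fun h => hcon (hBI x h hxI)
    obtain ⟨q, hq, hle⟩ := exists_AssP_of_notMem hxB
    have h1 : I ≤ q := by
      intro y hy
      apply hle
      rw [mem_an, mul_comm]
      exact hBT (mem_cl.1 hxK y hy)
    have h2 : cl (sp T) I ≤ q := by
      intro y hy
      apply hle
      rw [mem_an]
      exact hBT (mem_cl.1 hy x hxI)
    have := hc.hgt' hT q hq.1 h1 h2
    have := hB q hq
    omega
  · intro x q hx hq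
    have hxq : x ∈ q := hq.le (Ideal.mem_sup_right (Ideal.mem_span_singleton_self x))
    by_cases hg : ∃ p : Ideal R, p.IsPrime ∧ I ≤ p ∧ hh p ≤ T.length
    · have hne : cl (sp T) I ≠ ⊤ := by
        intro h
        exact hq.1.ne_top (top_le_iff.1 (h ▸ le_sup_left.trans hq.le))
      have hS := hset.S T hc.mem (by omega) hne hg hc.hgt (hc.hgt' hT) x hx q hq
      obtain ⟨q0, h1, h2⟩ := exists_AssP_le hq.1 (le_sup_left.trans hq.le : cl (sp T) I ≤ q)
      have hlt : q0 < q := lt_of_le_of_ne h2 (fun e => hx.notMem h1 (e ▸ hxq))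
      have := adjacent hset.dep h1.1 hq.1 hlt (by
        intro P hP h3 h4
        by_contra hne
        exact hS q0 P h1.1 hP h1.le h3 (lt_of_le_of_ne h4 hne))
      have := hde q0 h1
      omega
    · push Not at hg
      obtain ⟨h1, h2⟩ := hep' hg
      have hm : hh (maximalIdeal R) > T.length :=
        hg _ (maximalIdeal.isMaximal R).isPrime (IsLocalRing.le_maximalIdeal hset.ne)
      have h3 : Dep (hh (maximalIdeal R) - T.length - 1) (cl (sp T) I ⊔ Ideal.span {x}) := by
        apply Dep.of_reg (IsLocalRing.le_maximalIdeal hq.1.ne_top hxq) hx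
        rw [h1]
        convert h2 using 1; omega
      have := h3.height hq
      omega

theorem struct_reg {I : Ideal R} {s : ℕ} {x : R} {T : List R}
    (hc : Cnd I s (x :: T)) (hS : Struct I T) : Reg (cl (sp T) I) x := by
  apply reg_of_AssP
  intro q hq hxq
  have hsp : sp (x :: T) ≤ q := by
    rw [sp_cons]
    exact sup_le ((le_cl _ _).trans hq.le) (by simpa [Ideal.span_le] using hxq)
  by_cases h : cl (sp (x :: T)) I ≤ q
  · have := hc.hgt q hq.1 h
    have := hS.de q hq
    simp only [List.length_cons] at *
    omega
  · rw [← le_sat_iff_cl hq.1] at h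
    exact hS.al q hq (h.trans (sat_le_prime hq.1 hsp))

theorem struct {I : Ideal R} {l s : ℕ} (hset : Setup I l) (hsl : s ≤ l) {T : List R}
    (hc : Good I s T) (hT : T.length < s) : Struct I T := by
  induction T with
  | nil =>
    refine struct_step hset hsl hc.cnd hT (B := ⊥) (by simp) (by simp) ?_ ?_
    · intro q hq
      have := hset.dep.height hq
      simp; omega
    · intro _
      refine ⟨by simp, by simpa using hset.dep⟩
  | cons x T ih =>
    have hS := ih hc.tail (by simp only [List.length_cons] at hT; omega)
    have hreg := struct_reg hc.cnd hS
    have hxI : x ∈ I := hc.cnd.mem x (by simp)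
    refine struct_step hset hsl hc.cnd hT (B := cl (sp T) I ⊔ Ideal.span {x}) ?_ ?_ ?_ ?_
    · rw [sp_cons]; exact sup_le_sup_right (le_cl _ _) _
    · intro y hy hyI
      obtain ⟨k, hk, t, rfl⟩ := mem_sup_span.1 hy
      have : k ∈ I := (Ideal.add_mem_iff_left I (I.mul_mem_right _ hxI)).1 hyI
      rw [sp_cons]
      exact mem_sup_span.2 ⟨k, hS.be k hk this, t, rfl⟩
    · intro q hq
      simpa using hS.ga x q hreg hq
    · intro h
      obtain ⟨h1, h2⟩ := hS.ep (fun p hp hI => by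
        have := h p hp hI
        simp only [List.length_cons] at this
        omega)
      refine ⟨by rw [h1, sp_cons], ?_⟩
      rw [sp_cons, ← h1]
      apply Dep.of_reg (IsLocalRing.le_maximalIdeal hset.ne hxI) hreg
      rw [h1]
      have := h _ (maximalIdeal.isMaximal R).isPrime (IsLocalRing.le_maximalIdeal hset.ne)
      simp only [List.length_cons] at *
      convert h2 using 1; omega

/-- the generic extension step -/
theorem good_step {I J : Ideal R} {l s : ℕ} (hset : Setup I l) (hsl : s ≤ l) (hJ : IsReduction J I)
    (hJs : ∀ q : Ideal R, q.IsPrime → I ≤ q → hh q < s → ¬ cl J I ≤ q) {T : List R}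
    (hc : Good I s T) (hT : T.length + 1 < s) : Generic J (fun z => Good I s (z :: T)) := by
  have hS := struct hset hsl hc (by omega)
  let bad : Set (Ideal R) := {q | q.IsPrime ∧ I ≤ q ∧ hh q < s ∧ T.length < hh q ∧
    ¬ Gen (sp T) I q (hh q - T.length - 1)}
  have hbad : bad.Finite := by
    have : bad ⊆ ⋃ e ∈ Finset.range (s + 1), (I ⊔ ⨆ (v : List R) (_ : (∀ x ∈ v, x ∈ I) ∧
        v.length ≤ e), cl (sp T ⊔ sp v) I).minimalPrimes := by
      rintro q ⟨hq, hI, hs, hTq, hG⟩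
      simp only [Set.mem_iUnion]
      refine ⟨hh q - T.length - 1, by simp; omega, ⟨⟨hq, sup_le hI ((not_Gen_iff hq).1 hG)⟩, ?_⟩⟩
      rintro P ⟨hP, hle⟩ hPq
      rcases eq_or_lt_of_le hPq with rfl | hlt
      · exact le_rfl
      exfalso
      have h1 := hh_lt hP hq hlt
      have h2 := hc.cnd.gen P hP (le_sup_left.trans hle) (by omega)
      exact (not_Gen_iff hP).2 (le_sup_right.trans hle) (h2.mono le_rfl (by omega))
    refine Set.Finite.subset (Set.Finite.biUnion (Finset.finite_toSet _) ?_) this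
    intro e _
    exact Ideal.finite_minimalPrimes_of_isNoetherianRing R _
  have g1 : Generic J (fun z => ∀ q ∈ bad, z ∉ sat q (sp T ⊔ q * I)) := by
    refine Generic.forall_finite hbad ?_
    rintro q ⟨hq, hI, hs, hTq, hG⟩
    apply Generic.notMem
    intro hle
    have h1 : I ≤ sat q J := (le_sat_iff_cl hq).2 (hJs q hq hI hs)
    have h2 : I ≤ sat q (sp T) := nak hq (h1.trans (sat_le_sat hle))
    exact hG ((Gen.zero.2 h2).mono le_rfl (Nat.zero_le _))
  have g2 : Generic J (fun z => ∀ q ∈ {q | AssP (cl (sp T) I) q}, z ∉ q) := by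
    refine Generic.forall_finite (AssP_finite _) ?_
    intro q hq
    apply Generic.notMem
    intro hle
    exact hS.al q hq (le_of_reduction hq.1 hJ hle)
  refine (g1.and g2).mono ?_
  rintro z hz ⟨h1, h2⟩
  have hzI : z ∈ I := hJ.1 hz
  apply hc.cons
  have hgen : ∀ q : Ideal R, q.IsPrime → I ≤ q → hh q < s →
      Gen (sp (z :: T)) I q (hh q - (z :: T).length) := by
    intro q hq hI hs
    have h3 := hc.cnd.gen q hq hI hs
    rw [sp_cons, List.length_cons, ← Nat.sub_sub]
    by_cases h4 : T.length < hh q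
    · by_cases h5 : Gen (sp T) I q (hh q - T.length - 1)
      · exact h5.mono le_sup_left le_rfl
      · exact h3.exchange hq hzI (h1 q ⟨hq, hI, hs, h4, h5⟩)
    · exact h3.mono le_sup_left (by omega)
  refine ⟨?_, hgen, ?_⟩
  · intro x hx
    rcases List.mem_cons.1 hx with rfl | hx
    exacts [hzI, hc.cnd.mem x hx]
  · intro P hP hle
    have hle' : cl (sp T) I ≤ P := by
      refine le_trans ?_ hle
      intro a ha
      rw [mem_cl] at *
      intro y hy
      exact sp_mono (List.subset_cons_self _ _) (ha y hy)
    by_cases hI : I ≤ P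
    · by_cases hs : hh P < s
      · by_contra hcon
        have h3 := hgen P hP hI hs
        have : hh P - (z :: T).length = 0 := by omega
        rw [this, Gen.zero, le_sat_iff_cl hP] at h3
        exact h3 hle
      · simp only [List.length_cons]; omega
    · obtain ⟨q0, h3, h4⟩ := exists_AssP_le hP hle'
      have hzP : z ∈ P := hle (le_cl _ _ (mem_sp (by simp)))
      have h5 := hh_lt h3.1 hP (lt_of_le_of_ne h4 (fun e => h2 q0 h3 (e ▸ hzP)))
      have h6 := hc.cnd.hgt q0 h3.1 h3.le
      simp only [List.length_cons]; omega

theorem exists_list [Infinite (ResidueField R)] {J : Ideal R} (n : ℕ) (P : List R → Prop)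
    (h0 : P []) (hstep : ∀ T, P T → T.length < n → (∀ x ∈ T, x ∈ J) →
      Generic J (fun z => P (z :: T))) : ∃ T, P T ∧ T.length = n ∧ ∀ x ∈ T, x ∈ J := by
  have : ∀ k ≤ n, ∃ T, P T ∧ T.length = k ∧ ∀ x ∈ T, x ∈ J := by
    intro k
    induction k with
    | zero => intro _; exact ⟨[], h0, rfl, by simp⟩
    | succ k ih =>
      intro hk
      obtain ⟨T, h1, h2, h3⟩ := ih (by omega)
      obtain ⟨z, hz, hP⟩ := (hstep T h1 (by omega) h3).exists
      exact ⟨z :: T, hP, by simp [h2], by simpa using ⟨hz, h3⟩⟩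
  exact this n le_rfl

theorem Struct.not_le {I : Ideal R} {T : List R} (hS : Struct I T) {q : Ideal R} (hq : q.IsPrime)
    {n : ℕ} (h : I ^ n ≤ sat q (cl (sp T) I)) : ¬ cl (sp T) I ≤ q := by
  intro hle
  obtain ⟨q0, h1, h2⟩ := exists_AssP_le hq hle
  exact hS.al q0 h1 (h1.1.le_of_pow_le
    (h.trans ((sat_anti h2).trans (sat_le_prime h1.1 h1.le))))

theorem pow_le_of_le {I J A q : Ideal R} (hq : q.IsPrime) {r : ℕ} (hr : I ^ (r + 1) = J * I ^ r)
    (h : J ≤ sat q (A ⊔ q * I)) : I ^ (r + 1) ≤ sat q A := by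
  have h1 : I ^ (r + 1) ≤ sat q (A * I ^ r) := by
    apply nak hq
    calc I ^ (r + 1) = J * I ^ r := hr
      _ ≤ sat q (A ⊔ q * I) * I ^ r := Ideal.mul_mono_left h
      _ ≤ sat q ((A ⊔ q * I) * I ^ r) := sat_mul_le _ _ _
      _ = sat q (A * I ^ r ⊔ q * I ^ (r + 1)) := by
        rw [Ideal.sup_mul, mul_assoc, ← pow_succ']
  exact h1.trans (sat_mono _ Ideal.mul_le_left)

theorem basic [Infinite (ResidueField R)] {I J : Ideal R} {l : ℕ} (hset : Setup I l)
    (hJ : IsReduction J I) (s : ℕ) (hsl : s ≤ l) (q : Ideal R) (hq : q.IsPrime) (hI : I ≤ q)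
    (hs : hh q = s) (hG : Gen ⊥ I q s) : ¬ cl J I ≤ q := by
  induction s using Nat.strong_induction_on generalizing q with
  | _ s ih =>
  have hJs : ∀ q : Ideal R, q.IsPrime → I ≤ q → hh q < s → ¬ cl J I ≤ q := fun P hP hIP hlt =>
    ih (hh P) hlt (by omega) P hP hIP rfl (hset.G P hP hIP (by omega))
  rcases s with _ | s
  · rw [← le_sat_iff_cl hq]
    exact (Gen.zero.1 hG).trans (sat_mono _ bot_le)
  obtain ⟨T, ⟨hT1, hT2⟩, hT3, hT4⟩ := exists_list (J := J) s
    (fun T => Good I (s + 1) T ∧ (J ≤ sat q (sp T ⊔ q * I) ∨ Gen (sp T) I q (s + 1 - T.length)))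
    ⟨Good.nil hset hsl, Or.inr (by simpa using hG)⟩ (by
      rintro T ⟨h1, h2⟩ hlen -
      refine ((good_step hset hsl hJ hJs h1 (by omega)).and (Generic.avoid
        (Set.finite_singleton (sat q (sp T ⊔ q * I))))).mono ?_
      rintro z hz ⟨h3, h4⟩
      refine ⟨h3, ?_⟩
      by_cases h5 : J ≤ sat q (sp T ⊔ q * I)
      · left
        refine h5.trans (sat_mono _ (sup_le_sup_right (sp_mono (List.subset_cons_self _ _)) _))
      · right
        have h6 := h2.resolve_left h5
        rw [sp_cons, List.length_cons, ← Nat.sub_sub]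
        exact h6.exchange hq (hJ.1 hz) (h4 _ rfl h5))
  have hS := struct hset hsl hT1 (by omega)
  have key : J ≤ sat q (sp T ⊔ q * I) → ¬ cl J I ≤ q := by
    intro h
    obtain ⟨-, r, hr⟩ := hJ
    have h1 := pow_le_of_le hq hr h
    have h2 := hS.not_le hq (h1.trans (sat_mono _ (le_cl _ _)))
    rw [← le_sat_iff_cl hq] at *
    exact h2.trans (sat_mono _ (sp_le.2 hT4))
  rcases hT2 with h | h
  · exact key h
  by_cases h5 : J ≤ sat q (sp T ⊔ q * I)
  · exact key h5
  obtain ⟨z, hz, hz'⟩ := SetLike.not_le_iff_exists.1 h5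
  have h6 := h.exchange hq (hJ.1 hz) hz'
  have : s + 1 - T.length - 1 = 0 := by omega
  rw [this, Gen.zero] at h6
  rw [← le_sat_iff_cl hq]
  refine h6.trans (sat_mono _ (sup_le (sp_le.2 hT4) ?_))
  simpa [Ideal.span_le] using hz

end Residual

section Fiber
open Polynomial

variable {S : Type u} [CommRing S]

/-- homogeneous elements of the Rees algebra -/
noncomputable def mon {I : Ideal S} (n : ℕ) (x : S) (hx : x ∈ I ^ n) : reesAlgebra I :=
  ⟨monomial n x, reesAlgebra.monomial_mem.2 hx⟩

theorem mon_mul {I : Ideal S} {n m : ℕ} {x y : S} (hx : x ∈ I ^ n) (hy : y ∈ I ^ m)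
    (h : x * y ∈ I ^ (n + m)) : mon n x hx * mon m y hy = mon (n + m) (x * y) h := by
  apply Subtype.ext
  exact monomial_mul_monomial n m x y

theorem mon_add {I : Ideal S} {n : ℕ} {x y : S} (hx : x ∈ I ^ n) (hy : y ∈ I ^ n)
    (h : x + y ∈ I ^ n) : mon n x hx + mon n y hy = mon n (x + y) h := by
  apply Subtype.ext
  exact ((monomial n).map_add x y).symm

theorem mon_zero' {I : Ideal S} (x : S) (hx : x ∈ I ^ 0) :
    mon 0 x hx = algebraMap S (reesAlgebra I) x := rfl

/-- degree n part of an ideal of the Rees algebra -/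
def deg {I : Ideal S} (n : ℕ) (P : Ideal (reesAlgebra I)) : Ideal S where
  carrier := {x | ∃ h : x ∈ I ^ n, mon n x h ∈ P}
  add_mem' := by
    rintro a b ⟨ha, ha'⟩ ⟨hb, hb'⟩
    refine ⟨add_mem ha hb, ?_⟩
    rw [← mon_add ha hb]
    exact add_mem ha' hb'
  zero_mem' := by
    refine ⟨zero_mem _, ?_⟩
    have : mon n 0 (zero_mem _) = (0 : reesAlgebra I) := Subtype.ext (monomial n).map_zero
    rw [this]; exact zero_mem _
  smul_mem' := by
    rintro c x ⟨hx, hx'⟩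
    refine ⟨Ideal.mul_mem_left _ _ hx, ?_⟩
    have : mon n (c • x) (Ideal.mul_mem_left _ _ hx) = algebraMap S (reesAlgebra I) c * mon n x hx := by
      apply Subtype.ext
      change monomial n (c * x) = C c * monomial n x
      rw [C_mul_monomial]
    rw [this]
    exact Ideal.mul_mem_left _ _ hx'

theorem mem_deg {I : Ideal S} {n : ℕ} {P : Ideal (reesAlgebra I)} {x : S} :
    x ∈ deg n P ↔ ∃ h : x ∈ I ^ n, mon n x h ∈ P := Iff.rfl

theorem deg_mono {I : Ideal S} (n : ℕ) {P Q : Ideal (reesAlgebra I)} (h : P ≤ Q) :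
    deg n P ≤ deg n Q := fun _ ⟨hx, hx'⟩ => ⟨hx, h hx'⟩

theorem deg_mul_le {I : Ideal S} (n m : ℕ) (P Q : Ideal (reesAlgebra I)) :
    deg n P * deg m Q ≤ deg (n + m) (P * Q) := by
  rw [Ideal.mul_le]
  rintro x ⟨hx, hx'⟩ y ⟨hy, hy'⟩
  have h : x * y ∈ I ^ (n + m) := by rw [pow_add]; exact Ideal.mul_mem_mul hx hy
  refine ⟨h, ?_⟩
  rw [← mon_mul hx hy]
  exact Ideal.mul_mem_mul hx' hy'

theorem deg_top {I : Ideal S} (n : ℕ) : deg n (⊤ : Ideal (reesAlgebra I)) = I ^ n := by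
  ext x; rw [mem_deg]; simp

theorem pow_le_deg {I : Ideal S} (P : Ideal (reesAlgebra I)) (h : I ≤ deg 1 P) (n : ℕ) :
    I ^ n ≤ deg n (P ^ n) := by
  induction n with
  | zero => rw [pow_zero P, Ideal.one_eq_top, deg_top]
  | succ n ih =>
    rw [pow_succ, pow_succ]
    exact (Ideal.mul_mono ih h).trans (deg_mul_le _ _ _ _)

/-- the degree-one ideal -/
noncomputable def gen1 {I : Ideal S} (N : Ideal S) : Ideal (reesAlgebra I) :=
  Ideal.span {f | ∃ (x : S) (h : x ∈ I ^ 1), x ∈ N ∧ f = mon 1 x h}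

theorem le_deg_gen1 {I N : Ideal S} (h : N ≤ I) : N ≤ deg 1 (gen1 (I := I) N) := by
  intro x hx
  have : x ∈ I ^ 1 := by rw [pow_one]; exact h hx
  exact ⟨this, Ideal.subset_span ⟨x, this, hx, rfl⟩⟩

theorem gen1_le {I N : Ideal S} {P : Ideal (reesAlgebra I)} (h : N ≤ deg 1 P) :
    gen1 (I := I) N ≤ P := by
  rw [gen1, Ideal.span_le]
  rintro f ⟨x, hx, hN, rfl⟩
  obtain ⟨h1, h2⟩ := h hN
  exact h2

/-- ideal of the Rees algebra with prescribed coefficient ideals -/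
def coefI {I : Ideal S} (W : ℕ → Ideal S) (hW : ∀ i j, I ^ i * W j ≤ W (i + j)) :
    Ideal (reesAlgebra I) where
  carrier := {f | ∀ n, (f : S[X]).coeff n ∈ W n}
  add_mem' := by
    intro a b ha hb n
    change ((a : S[X]) + (b : S[X])).coeff n ∈ W n
    rw [coeff_add]
    exact add_mem (ha n) (hb n)
  zero_mem' := by
    intro n
    change (0 : S[X]).coeff n ∈ W n
    simp
  smul_mem' := by
    intro c x hx n
    change ((c : S[X]) * (x : S[X])).coeff n ∈ W n
    rw [coeff_mul]
    refine Ideal.sum_mem _ ?_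
    rintro ⟨i, j⟩ h
    rw [← Finset.HasAntidiagonal.mem_antidiagonal.1 h]
    exact hW i j (Ideal.mul_mem_mul (c.2 i) (hx j))

theorem mem_coefI {I : Ideal S} {W : ℕ → Ideal S} {hW : ∀ i j, I ^ i * W j ≤ W (i + j)}
    {f : reesAlgebra I} : f ∈ coefI W hW ↔ ∀ n, (f : S[X]).coeff n ∈ W n := Iff.rfl

theorem reduction_of_primes [IsNoetherianRing S] [IsLocalRing S] {I N : Ideal S} (hN : N ≤ I)
    (h : ∀ P : Ideal (reesAlgebra I), P.IsPrime →
      Ideal.map (algebraMap S (reesAlgebra I)) (maximalIdeal S) ≤ P → N ≤ deg 1 P → I ≤ deg 1 P) :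
    IsReduction N I := by
  set Q : Ideal (reesAlgebra I) :=
    Ideal.map (algebraMap S (reesAlgebra I)) (maximalIdeal S) ⊔ gen1 N with hQ
  have h1 : gen1 (I := I) I ≤ Q.radical := by
    rw [Ideal.radical_eq_sInf]
    refine le_sInf ?_
    rintro P ⟨hP1, hP2⟩
    apply gen1_le
    exact h P hP2 (le_sup_left.trans hP1)
      ((le_deg_gen1 hN).trans (deg_mono 1 (le_sup_right.trans hP1)))
  obtain ⟨n, hn⟩ := Ideal.exists_pow_le_of_le_radical_of_fg h1 (IsNoetherian.noetherian _)
  let W : ℕ → Ideal S := fun n => maximalIdeal S * I ^ n ⊔ (if n = 0 then ⊥ else N * I ^ (n - 1))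
  have hW : ∀ i j, I ^ i * W j ≤ W (i + j) := by
    intro i j
    change I ^ i * (maximalIdeal S * I ^ j ⊔ (if j = 0 then ⊥ else N * I ^ (j - 1))) ≤
      maximalIdeal S * I ^ (i + j) ⊔ (if i + j = 0 then ⊥ else N * I ^ (i + j - 1))
    rw [Ideal.mul_sup]
    refine sup_le_sup ?_ ?_
    · rw [pow_add]; apply le_of_eq; ring
    · by_cases hj : j = 0
      · simp [hj]
      · rw [if_neg hj, if_neg (by omega), show i + j - 1 = i + (j - 1) by omega, pow_add]
        apply le_of_eq; ring
  have hQW : Q ≤ coefI W hW := by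
    refine sup_le ?_ ?_
    · rw [Ideal.map_le_iff_le_comap]
      intro x hx
      rw [Ideal.mem_comap, mem_coefI]
      intro n
      change (C x : S[X]).coeff n ∈ _
      rw [coeff_C]
      split_ifs with h0
      · subst h0
        exact Ideal.mem_sup_left (by simpa using hx)
      · exact zero_mem _
    · rw [gen1, Ideal.span_le]
      rintro f ⟨x, hx, hN, rfl⟩
      intro n
      change (monomial 1 x).coeff n ∈ _
      rw [coeff_monomial]
      split_ifs with h0
      · subst h0
        refine Ideal.mem_sup_right ?_
        simpa using hN
      · exact zero_mem _
  have h3 : I ^ (n + 1) ≤ N * I ^ n ⊔ maximalIdeal S • I ^ (n + 1) := by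
    intro x hx
    obtain ⟨hx1, hx2⟩ := pow_le_deg (gen1 (I := I) I) (le_deg_gen1 le_rfl) (n + 1) hx
    have := hQW (hn (Ideal.pow_le_pow_right (Nat.le_succ n) hx2)) (n + 1)
    change (monomial (n+1) x).coeff (n + 1) ∈ _ at this
    rw [coeff_monomial, if_pos rfl] at this
    rw [sup_comm]
    simpa [W] using this
  have h4 := Submodule.le_of_le_smul_of_le_jacobson_bot (IsNoetherian.noetherian _)
    (IsLocalRing.maximalIdeal_le_jacobson _) h3
  refine ⟨hN, n, le_antisymm h4 ?_⟩
  rw [pow_succ']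
  exact Ideal.mul_mono_left hN

theorem deg1_of_reduction {I N : Ideal S} (h : IsReduction N I) {P : Ideal (reesAlgebra I)}
    (hP : P.IsPrime) (hN : N ≤ deg 1 P) : I ≤ deg 1 P := by
  obtain ⟨hNI, r, hr⟩ := h
  intro x hx
  have hx1 : x ∈ I ^ 1 := by rwa [pow_one]
  refine ⟨hx1, ?_⟩
  have key : ∀ n, ∀ h : x ^ n ∈ I ^ n, mon 1 x hx1 ^ n = mon n (x ^ n) h := by
    intro n h
    apply Subtype.ext
    change (monomial 1 x) ^ n = monomial n (x ^ n)
    rw [monomial_pow, one_mul]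
  have h2 : x ^ (r + 1) ∈ deg (1 + r) P := by
    have e : P * (⊤ : Ideal (reesAlgebra I)) ≤ P := Ideal.mul_le_left
    have h6 : I ^ r ≤ deg (I := I) r ⊤ := (deg_top (I := I) r).ge
    have h3 : N * I ^ r ≤ deg (1 + r) P :=
      (Ideal.mul_mono hN h6).trans ((deg_mul_le 1 r P ⊤).trans (deg_mono (1 + r) e))
    have h7 : x ^ (r + 1) ∈ I ^ (r + 1) := Ideal.pow_mem_pow hx (r + 1)
    rw [hr] at h7
    exact h3 h7
  rw [add_comm] at h2
  obtain ⟨h4, h5⟩ := h2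
  rw [← key] at h5
  exact hP.mem_of_pow_mem _ h5

/-- homogeneous component -/
noncomputable def cmp {I : Ideal S} (i : ℕ) (f : reesAlgebra I) : reesAlgebra I :=
  mon i ((f : S[X]).coeff i) (f.2 i)

theorem cmp_mul {I : Ideal S} (n : ℕ) (f g : reesAlgebra I) :
    cmp n (f * g) = ∑ x ∈ Finset.HasAntidiagonal.antidiagonal n, cmp x.1 f * cmp x.2 g := by
  apply Subtype.ext
  change monomial n (((f : S[X]) * (g : S[X])).coeff n) = _
  rw [coeff_mul, map_sum, AddSubmonoidClass.coe_finsetSum]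
  refine Finset.sum_congr rfl ?_
  rintro ⟨i, j⟩ h
  change _ = monomial i ((f : S[X]).coeff i) * monomial j ((g : S[X]).coeff j)
  rw [monomial_mul_monomial, Finset.HasAntidiagonal.mem_antidiagonal.1 h]

theorem cmp_add {I : Ideal S} (n : ℕ) (f g : reesAlgebra I) :
    cmp n (f + g) = cmp n f + cmp n g := by
  apply Subtype.ext
  change monomial n (((f : S[X]) + (g : S[X])).coeff n) = _
  rw [coeff_add, map_add]; rfl

/-- homogeneous core -/
def hc {I : Ideal S} (P : Ideal (reesAlgebra I)) : Ideal (reesAlgebra I) where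
  carrier := {f | ∀ i, cmp i f ∈ P}
  add_mem' := by
    intro a b ha hb i
    rw [cmp_add]; exact add_mem (ha i) (hb i)
  zero_mem' := by
    intro i
    have : cmp i (0 : reesAlgebra I) = 0 := Subtype.ext (by
      change monomial i ((0 : S[X]).coeff i) = 0
      simp)
    rw [this]; exact zero_mem _
  smul_mem' := by
    intro c x hx i
    rw [smul_eq_mul, cmp_mul]
    exact Ideal.sum_mem _ fun y _ => Ideal.mul_mem_left _ _ (hx _)

theorem mem_hc {I : Ideal S} {P : Ideal (reesAlgebra I)} {f : reesAlgebra I} :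
    f ∈ hc P ↔ ∀ i, cmp i f ∈ P := Iff.rfl

theorem mon_mem_hc {I : Ideal S} {P : Ideal (reesAlgebra I)} {n : ℕ} {x : S} {hx : x ∈ I ^ n} :
    mon n x hx ∈ hc P ↔ mon n x hx ∈ P := by
  have h1 : cmp n (mon n x hx) = mon n x hx := by
    apply Subtype.ext
    change monomial n ((monomial n x).coeff n) = monomial n x
    simp
  have h2 : ∀ i, i ≠ n → cmp i (mon n x hx) = 0 := by
    intro i hi
    apply Subtype.ext
    change monomial i ((monomial n x).coeff i) = 0
    rw [coeff_monomial, if_neg hi.symm, map_zero]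
  constructor
  · intro h
    rw [← h1]; exact h n
  · intro h i
    by_cases hi : i = n
    · subst hi; rwa [h1]
    · rw [h2 i hi]; exact zero_mem _

theorem deg_hc {I : Ideal S} {P : Ideal (reesAlgebra I)} (n : ℕ) : deg n (hc P) = deg n P := by
  ext x
  rw [mem_deg, mem_deg]
  exact exists_congr fun h => mon_mem_hc

theorem hc_prime {I : Ideal S} {P : Ideal (reesAlgebra I)} (hP : P.IsPrime) : (hc P).IsPrime := by
  classical
  refine ⟨?_, ?_⟩
  · intro h
    apply hP.ne_top
    rw [Ideal.eq_top_iff_one] at h ⊢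
    have : (1 : reesAlgebra I) = mon 0 1 (by simp) := rfl
    rw [this] at h ⊢
    exact mon_mem_hc.1 h
  · intro f g hfg
    by_contra hcon
    push Not at hcon
    obtain ⟨hf, hg⟩ := hcon
    rw [mem_hc] at hf hg
    push Not at hf hg
    have hi := Nat.find_spec hf
    have hi' := fun {m} => Nat.find_min (m := m) hf
    have hj := Nat.find_spec hg
    have hj' := fun {m} => Nat.find_min (m := m) hg
    set i := Nat.find hf
    set j := Nat.find hg
    have h := hfg (i + j)
    rw [cmp_mul, Finset.sum_eq_add_sum_sdiff_singleton_of_mem (i := (i, j)) (by simp)] at h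
    have h2 : ∑ x ∈ Finset.HasAntidiagonal.antidiagonal (i + j) \ {(i, j)}, cmp x.1 f * cmp x.2 g ∈ P := by
      refine Ideal.sum_mem _ ?_
      rintro ⟨a, b⟩ hab
      rw [Finset.mem_sdiff, Finset.HasAntidiagonal.mem_antidiagonal, Finset.mem_singleton] at hab
      by_cases ha : a < i
      · exact Ideal.mul_mem_right _ _ (not_not.1 (hi' ha))
      · have : b < j := by
          have h1 := hab.1
          have h2 := hab.2
          by_contra hb
          apply h2
          simp only at h1
          rw [Prod.mk.injEq]
          omega
        exact Ideal.mul_mem_left _ _ (not_not.1 (hj' this))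
    have h3 := (Ideal.add_mem_iff_left _ h2).1 h
    rcases hP.mem_or_mem h3 with h4 | h4
    · exact hi h4
    · exact hj h4

/-- the irrelevant maximal ideal -/
noncomputable def irr [IsLocalRing S] (I : Ideal S) : Ideal (reesAlgebra I) :=
  Ideal.comap ((constantCoeff : S[X] →+* S).comp (reesAlgebra I).val.toRingHom) (maximalIdeal S)

theorem hc_lt_irr [IsLocalRing S] {I : Ideal S} {P : Ideal (reesAlgebra I)} (hP : P.IsPrime)
    (h : ¬ I ≤ deg 1 P) : hc P < irr I := by
  have h0 : I ≤ deg 1 (irr I) := by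
    intro x hx
    have hx1 : x ∈ I ^ 1 := by rwa [pow_one]
    refine ⟨hx1, ?_⟩
    change constantCoeff (monomial 1 x) ∈ maximalIdeal S
    rw [constantCoeff_apply, coeff_monomial, if_neg one_ne_zero]
    exact zero_mem _
  refine lt_of_le_of_ne ?_ ?_
  · intro f hf
    have h1 := hf 0
    change (f : S[X]).coeff 0 ∈ maximalIdeal S
    rw [mem_maximalIdeal, mem_nonunits_iff]
    intro hu
    apply hP.ne_top
    refine Ideal.eq_top_of_isUnit_mem _ h1 ?_
    exact hu.map (algebraMap S (reesAlgebra I))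
  · intro he
    apply h
    rw [← deg_hc, he]
    exact h0

end Fiber

section Fiber2
open Polynomial

theorem IsReduction.map {R : Type u} {S : Type u} [CommRing R] [CommRing S] (f : R →+* S)
    {J I : Ideal R} (h : IsReduction J I) : IsReduction (J.map f) (I.map f) := by
  obtain ⟨h1, r, hr⟩ := h
  refine ⟨Ideal.map_mono h1, r, ?_⟩
  rw [← Ideal.map_pow, hr, Ideal.map_mul, Ideal.map_pow]

variable {R S : Type u} [CommRing R] [CommRing S] [IsLocalRing S]

/-- fiber-genericity -/
def FG (f : R →+* S) (I : Ideal S) (T : List R) (e : ℕ) : Prop :=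
  ∀ P : PrimeSpectrum (reesAlgebra I),
    Ideal.map (algebraMap S (reesAlgebra I)) (maximalIdeal S) ≤ P.asIdeal →
    sp T ≤ (deg 1 P.asIdeal).comap f → ¬ I ≤ deg 1 P.asIdeal →
    Order.coheight P + (T.length : ℕ∞) ≤ (e : ℕ∞)

theorem FG.nil (f : R →+* S) {I : Ideal S} {e : ℕ} (h : fiberDim I ≤ ((e : ℕ∞) : WithBot ℕ∞)) :
    FG f I [] e := by
  intro P hP _ _
  have h1 : ((Order.coheight P : ℕ∞) : WithBot ℕ∞) ≤ fiberDim I := by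
    rw [Order.coheight_eq_krullDim_Ici, fiberDim, rDim, ringKrullDim_quotient]
    exact Order.krullDim_le_of_strictMono
      (fun x : Set.Ici P => ⟨x.1, by
        rw [PrimeSpectrum.mem_zeroLocus]
        exact hP.trans x.2⟩) (fun a b hab => hab)
  have := WithBot.coe_le_coe.1 (h1.trans h)
  simpa using this

theorem fg_step [IsNoetherianRing S] {f : R →+* S} {I : Ideal R} {T : List R} {e : ℕ}
    (hT : ∀ x ∈ T, x ∈ I) (h : FG f (I.map f) T e) :
    ∃ V : Set (Ideal R), V.Finite ∧ (∀ v ∈ V, ∀ J, IsReduction J I → ¬ J ≤ v) ∧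
      (∀ v ∈ V, sp T ≤ v) ∧ ∀ z ∈ I, (∀ v ∈ V, z ∉ v) → FG f (I.map f) (z :: T) e := by
  set IS := I.map f with hIS
  set Q : Ideal (reesAlgebra IS) :=
    Ideal.map (algebraMap S (reesAlgebra IS)) (maximalIdeal S) ⊔ gen1 ((sp T).map f) with hQ
  have hTS : (sp T).map f ≤ IS := Ideal.map_mono (sp_le.2 hT)
  have hmem : ∀ P, Q ≤ P ↔ Ideal.map (algebraMap S (reesAlgebra IS)) (maximalIdeal S) ≤ P ∧
      sp T ≤ (deg 1 P).comap f := by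
    intro P
    rw [hQ, sup_le_iff, ← Ideal.map_le_iff_le_comap]
    refine and_congr_right fun _ => ⟨fun h => ?_, gen1_le⟩
    exact (le_deg_gen1 hTS).trans (deg_mono 1 h)
  refine ⟨(fun P => (deg 1 P).comap f) '' {P | P ∈ Q.minimalPrimes ∧ ¬ IS ≤ deg 1 P},
    ((Ideal.finite_minimalPrimes_of_isNoetherianRing _ Q).subset (fun P hP => hP.1)).image _,
    ?_, ?_, ?_⟩
  · rintro _ ⟨P, ⟨hP, hP'⟩, rfl⟩ J hJ hle
    apply hP'
    have := hP.1.1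
    exact deg1_of_reduction (hJ.map f) this (Ideal.map_le_iff_le_comap.2 hle)
  · rintro _ ⟨P, ⟨hP, hP'⟩, rfl⟩
    exact ((hmem P).1 hP.1.2).2
  · intro z hz hav P hP1 hP2 hP3
    have hQP : Q ≤ P.asIdeal := (hmem _).2 ⟨hP1, (sp_mono (by simp)).trans hP2⟩
    obtain ⟨P0, h1, h2⟩ := Ideal.exists_minimalPrimes_le hQP
    have hp0 := h1.1.1
    have h3 : ¬ IS ≤ deg 1 P0 := fun h => hP3 (h.trans (deg_mono 1 h2))
    have h4 := hav _ ⟨P0, ⟨h1, h3⟩, rfl⟩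
    have h5 : (⟨P0, hp0⟩ : PrimeSpectrum (reesAlgebra IS)) < P := by
      refine lt_of_le_of_ne h2 ?_
      rintro rfl
      exact h4 (hP2 (mem_sp (by simp)))
    have h6 := h ⟨P0, hp0⟩ ((hmem _).1 h1.1.2).1 ((hmem _).1 h1.1.2).2 h3
    have h7 := Order.coheight_add_one_le h5
    calc _ = Order.coheight P + 1 + (T.length : ℕ∞) := by
          rw [List.length_cons]; push_cast; rw [add_assoc, add_comm (1 : ℕ∞)]
      _ ≤ _ := add_le_add_left h7 _
      _ ≤ _ := h6

theorem FG.reduction [IsNoetherianRing S] {f : R →+* S} {I : Ideal R} {T : List R} {e : ℕ}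
    (hT : ∀ x ∈ T, x ∈ I) (h : FG f (I.map f) T e) (hle : e ≤ T.length) :
    IsReduction ((sp T).map f) (I.map f) := by
  apply reduction_of_primes (Ideal.map_mono (sp_le.2 hT))
  intro P hP hm hN
  by_contra hcon
  have hp := hc_prime hP
  have hlt := hc_lt_irr hP hcon
  have hi : (irr (I.map f)).IsPrime := Ideal.comap_isPrime _ _
  have h1 := h ⟨hc P, hp⟩ (by
    rw [Ideal.map_le_iff_le_comap] at hm ⊢
    intro x hx
    exact (mon_mem_hc (n := 0) (x := x) (hx := by simp)).2 (hm hx)) (by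
    rw [deg_hc]
    exact Ideal.map_le_iff_le_comap.1 hN) (by rwa [deg_hc])
  have h2 := Order.coheight_add_one_le (show (⟨hc P, hp⟩ : PrimeSpectrum _) < ⟨irr _, hi⟩ from hlt)
  have h3 : (1 : ℕ∞) + T.length ≤ e :=
    (add_le_add_left ((le_add_self).trans h2) _).trans h1
  have : 1 + T.length ≤ e := by exact_mod_cast h3
  omega

end Fiber2

/-- an integral equation over a reduction -/
theorem integral_eq {R : Type u} [CommRing R] [IsNoetherianRing R] {J I : Ideal R}
    (hJ : IsReduction J I) {x : R} (hx : x ∈ I) :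
    ∃ p : Polynomial R, p.Monic ∧ (∀ k, p.coeff k ∈ J ^ (p.natDegree - k)) ∧ p.eval x = 0 := by
  obtain ⟨hJI, r, hr⟩ := hJ
  let g : Module.End R (I ^ r : Ideal R) := algebraMap R _ x
  have hg : LinearMap.range g ≤ J • ⊤ := by
    rintro _ ⟨y, rfl⟩
    have h1 : x * y ∈ J • (I ^ r) := by
      rw [smul_eq_mul, ← hr, pow_succ']
      exact Ideal.mul_mem_mul hx y.2
    have h2 : J • (I ^ r) = (J • (⊤ : Submodule R (I ^ r : Ideal R))).map (I ^ r).subtype := by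
      rw [Submodule.map_smul'', Submodule.map_top, Submodule.range_subtype]
    rw [h2] at h1
    obtain ⟨z, hz, hz'⟩ := h1
    have : z = g y := Subtype.ext hz'
    rwa [← this]
  obtain ⟨p, hp1, -, hp3, hp4⟩ :=
    LinearMap.exists_monic_and_natDegree_eq_and_coeff_mem_pow_and_aeval_eq_zero R g J hg
  have h5 : ∀ y ∈ I ^ r, p.eval x * y = 0 := by
    intro y hy
    have h6 := LinearMap.congr_fun hp4 ⟨y, hy⟩
    have h7 : Polynomial.aeval g p = algebraMap R _ (p.eval x) := by
      rw [Polynomial.aeval_algebraMap_apply, Polynomial.aeval_def, Polynomial.eval₂_eq_eval_map]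
      simp
    rw [h7] at h6
    exact congrArg Subtype.val h6
  nontriviality R
  refine ⟨p * Polynomial.X ^ r, hp1.mul (Polynomial.monic_X_pow r), ?_, ?_⟩
  · intro k
    rw [hp1.natDegree_mul (Polynomial.monic_X_pow r), Polynomial.natDegree_X_pow,
      Polynomial.coeff_mul_X_pow']
    split_ifs with hk
    · have := hp3 (k - r)
      rwa [show p.natDegree - (k - r) = p.natDegree + r - k by omega] at this
    · exact zero_mem _
  · rw [Polynomial.eval_mul, Polynomial.eval_pow, Polynomial.eval_X]
    exact h5 _ (Ideal.pow_mem_pow hx r)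

section RA5
open Polynomial

theorem fiberDim_le {S : Type u} [CommRing S] [IsLocalRing S] [IsNoetherianRing S] {I : Ideal S}
    {T : List S} (h : IsReduction (sp T) I) :
    fiberDim I ≤ ((T.length : ℕ∞) : WithBot ℕ∞) := by
  have hTI : ∀ i : Fin T.length, T.get i ∈ I ^ 1 := fun i => by
    rw [pow_one]; exact h.1 (mem_sp (T.get_mem i))
  let ψ : MvPolynomial (Fin T.length) S →ₐ[S] reesAlgebra I :=
    MvPolynomial.aeval (fun i => mon 1 (T.get i) (hTI i))
  letI : Algebra (MvPolynomial (Fin T.length) S) (reesAlgebra I) := ψ.toRingHom.toAlgebra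
  have hψ : ∀ a, algebraMap (MvPolynomial (Fin T.length) S) (reesAlgebra I) a = ψ a := fun _ => rfl
  have hψC : ∀ a, ψ (MvPolynomial.C a) = algebraMap S (reesAlgebra I) a := fun a => by
    exact ψ.commutes a
  have hJ : ∀ j : ℕ, ∀ c ∈ (sp T) ^ j, ∃ hc : c ∈ I ^ j, ∃ a, ψ a = mon j c hc := by
    have h1 : ∀ c ∈ sp T, ∃ hc : c ∈ I ^ 1, ∃ a, ψ a = mon 1 c hc := by
      intro c hc
      refine Submodule.span_induction (p := fun c _ => ∃ hc : c ∈ I ^ 1, ∃ a, ψ a = mon 1 c hc)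
        ?_ ?_ ?_ ?_ hc
      · intro x hx
        obtain ⟨i, rfl⟩ := List.mem_iff_get.1 hx
        exact ⟨hTI i, MvPolynomial.X i, by simp [ψ]⟩
      · refine ⟨zero_mem _, 0, ?_⟩
        rw [map_zero]
        exact (Subtype.ext (monomial 1).map_zero).symm
      · rintro x y _ _ ⟨hx, a, ha⟩ ⟨hy, b, hb⟩
        exact ⟨add_mem hx hy, a + b, by rw [map_add, ha, hb, mon_add hx hy]⟩
      · rintro r x _ ⟨hx, a, ha⟩
        refine ⟨Ideal.mul_mem_left _ _ hx, MvPolynomial.C r * a, ?_⟩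
        rw [map_mul, ha, hψC]
        apply Subtype.ext
        change C r * monomial 1 x = monomial 1 (r * x)
        rw [C_mul_monomial]
    intro j
    induction j with
    | zero =>
      intro c _
      exact ⟨by simp, MvPolynomial.C c, hψC c⟩
    | succ j ih =>
      intro c hc
      rw [pow_succ] at hc
      refine Submodule.mul_induction_on hc ?_ ?_
      · intro x hx y hy
        obtain ⟨hx, a, ha⟩ := ih x hx
        obtain ⟨hy, b, hb⟩ := h1 y hy
        have hxy : x * y ∈ I ^ (j + 1) := by rw [pow_add]; exact Ideal.mul_mem_mul hx hy
        exact ⟨hxy, a * b, by rw [map_mul, ha, hb, mon_mul hx hy]⟩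
      · rintro x y ⟨hx, a, ha⟩ ⟨hy, b, hb⟩
        exact ⟨add_mem hx hy, a + b, by rw [map_add, ha, hb, mon_add hx hy]⟩
  have hint1 : ∀ x (hx : x ∈ I ^ 1), IsIntegral (MvPolynomial (Fin T.length) S) (mon 1 x hx) := by
    intro x hx
    obtain ⟨p, hp1, hp2, hp3⟩ := integral_eq h (x := x) (by rwa [pow_one] at hx)
    choose hc a ha using fun k => hJ _ _ (hp2 k)
    nontriviality S
    refine ⟨X ^ p.natDegree + ∑ k ∈ Finset.range p.natDegree, C (a k) * X ^ k, ?_, ?_⟩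
    · apply monic_X_pow_add
      refine lt_of_le_of_lt (degree_sum_le _ _) ?_
      rw [Finset.sup_lt_iff (by exact bot_lt_iff_ne_bot.2 (by simp))]
      intro k hk
      refine lt_of_le_of_lt (degree_C_mul_X_pow_le _ _) ?_
      exact_mod_cast Finset.mem_range.1 hk
    · rw [eval₂_add, eval₂_finsetSum, eval₂_X_pow]
      simp only [eval₂_mul, eval₂_C, eval₂_X_pow, hψ, ha]
      have key : ∀ n, mon 1 x hx ^ n = (⟨monomial n (x ^ n), by
          rw [reesAlgebra.monomial_mem]; rw [pow_one] at hx; exact Ideal.pow_mem_pow hx n⟩ :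
          reesAlgebra I) := by
        intro n
        apply Subtype.ext
        change (monomial 1 x) ^ n = monomial n (x ^ n)
        rw [monomial_pow, one_mul]
      simp only [key]
      apply Subtype.ext
      rw [Subalgebra.coe_add, AddSubmonoidClass.coe_finsetSum]
      change monomial p.natDegree (x ^ p.natDegree) + ∑ k ∈ Finset.range p.natDegree,
        (monomial (p.natDegree - k) (p.coeff k)) * (monomial k (x ^ k)) = 0
      have : ∑ k ∈ Finset.range p.natDegree,
        (monomial (p.natDegree - k) (p.coeff k)) * (monomial k (x ^ k)) =
        ∑ k ∈ Finset.range p.natDegree, monomial p.natDegree (p.coeff k * x ^ k) := by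
        refine Finset.sum_congr rfl fun k hk => ?_
        rw [monomial_mul_monomial]
        have := Finset.mem_range.1 hk
        rw [show p.natDegree - k + k = p.natDegree by omega]
      rw [this, ← map_sum, ← map_add]
      rw [eval_eq_sum_range, Finset.sum_range_succ, hp1.coeff_natDegree, one_mul] at hp3
      rw [add_comm, hp3, map_zero]
  have hintn : ∀ n x (hx : x ∈ I ^ n), IsIntegral (MvPolynomial (Fin T.length) S) (mon n x hx) := by
    intro n
    induction n with
    | zero =>
      intro x hx
      rw [mon_zero', ← hψC, ← hψ]
      exact isIntegral_algebraMap
    | succ n ih =>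
      intro x hx
      have hx' := hx
      rw [pow_succ] at hx'
      have : ∃ h, IsIntegral (MvPolynomial (Fin T.length) S) (mon (I := I) (n+1) x h) := by
        refine Submodule.mul_induction_on hx' ?_ ?_
        · intro y hy z hz
          have hz : z ∈ I ^ 1 := by rwa [pow_one]
          have hxy : y * z ∈ I ^ (n + 1) := by rw [pow_add]; exact Ideal.mul_mem_mul hy hz
          refine ⟨hxy, ?_⟩
          rw [← mon_mul hy hz]
          exact (ih y hy).mul (hint1 z hz)
        · rintro y z ⟨hy, hy'⟩ ⟨hz, hz'⟩
          refine ⟨add_mem hy hz, ?_⟩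
          rw [← mon_add hy hz]
          exact hy'.add hz'
      exact this.2
  haveI hint : Algebra.IsIntegral (MvPolynomial (Fin T.length) S) (reesAlgebra I) := by
    refine ⟨fun g => ?_⟩
    have hg : g = ∑ i ∈ (g : S[X]).support, cmp i g := by
      apply Subtype.ext
      rw [AddSubmonoidClass.coe_finsetSum]
      exact (g : S[X]).as_sum_support
    rw [hg]
    exact IsIntegral.sum _ fun i _ => hintn i _ _
  set m' : Ideal (MvPolynomial (Fin T.length) S) := Ideal.map MvPolynomial.C (maximalIdeal S)
  have hd : ringKrullDim (MvPolynomial (Fin T.length) S ⧸ m') = ((T.length : ℕ∞) : WithBot ℕ∞) := by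
    rw [ringKrullDim_eq_of_ringEquiv
      (MvPolynomial.quotientEquivQuotientMvPolynomial (σ := Fin T.length) (maximalIdeal S)).symm.toRingEquiv]
    letI := Ideal.Quotient.field (maximalIdeal S)
    rw [MvPolynomial.ringKrullDim_of_isNoetherianRing, ringKrullDim_eq_zero_of_field]
    simp
  rw [fiberDim, rDim, ringKrullDim_quotient, ← hd, ringKrullDim_quotient]
  refine Order.krullDim_le_of_strictMono
    (fun x => ⟨PrimeSpectrum.comap (algebraMap (MvPolynomial (Fin T.length) S) (reesAlgebra I)) x.1, ?_⟩) ?_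
  · have hx := x.2
    rw [PrimeSpectrum.mem_zeroLocus] at hx ⊢
    change m' ≤ Ideal.comap (algebraMap _ _) x.1.asIdeal
    rw [Ideal.map_le_iff_le_comap]
    intro y hy
    rw [Ideal.mem_comap, Ideal.mem_comap, hψ, hψC]
    exact hx (Ideal.mem_map_of_mem _ hy)
  · rintro ⟨x, hx⟩ ⟨y, hy⟩ hxy
    haveI := x.2
    have h1 : x.asIdeal < y.asIdeal := hxy
    exact (Ideal.IsIntegral.comap_lt_comap (R := MvPolynomial (Fin T.length) S) h1 :)

end RA5

section MinRed
variable {R : Type u} [CommRing R] [IsNoetherianRing R] [IsLocalRing R]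


theorem sat_max (N : Ideal R) : sat (maximalIdeal R) N = N := by
  refine le_antisymm ?_ (le_sat _ _)
  intro x hx
  obtain ⟨s, hs, h⟩ := (mem_sat (maximalIdeal.isMaximal R).isPrime).1 hx
  have hu : IsUnit s := by
    by_contra hcon
    exact hs ((mem_maximalIdeal s).2 hcon)
  exact (Ideal.unit_mul_mem_iff_mem _ hu).1 h

theorem isReduction_self (I : Ideal R) : IsReduction I I := ⟨le_rfl, 0, by simp⟩

theorem IsReduction.of_le {J J' I : Ideal R} (h : IsReduction J I) (h1 : J ≤ J') (h2 : J' ≤ I) :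
    IsReduction J' I := by
  obtain ⟨_, r, hr⟩ := h
  refine ⟨h2, r, le_antisymm ?_ ?_⟩
  · rw [hr]; exact Ideal.mul_mono_left h1
  · rw [pow_succ']; exact Ideal.mul_mono_left h2

theorem reduction_of_le_sup {J A I : Ideal R} (hJ : IsReduction J I) (hA : A ≤ I)
    (h : J ≤ A ⊔ maximalIdeal R * I) : IsReduction A I := by
  obtain ⟨hJI, r, hr⟩ := hJ
  have h1 : I ^ (r + 1) ≤ A * I ^ r := by
    refine Submodule.le_of_le_smul_of_le_jacobson_bot (IsNoetherian.noetherian _)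
      (IsLocalRing.maximalIdeal_le_jacobson _) (?_ : _ ≤ _ ⊔ maximalIdeal R • I ^ (r + 1))
    calc I ^ (r + 1) = J * I ^ r := hr
      _ ≤ (A ⊔ maximalIdeal R * I) * I ^ r := Ideal.mul_mono_left h
      _ = _ := by rw [Ideal.sup_mul, mul_assoc, ← pow_succ', smul_eq_mul]
  refine ⟨hA, r, le_antisymm h1 ?_⟩
  rw [pow_succ']; exact Ideal.mul_mono_left hA

theorem exists_minimalReduction {J I : Ideal R} (hJ : IsReduction J I) :
    ∃ J0 ≤ J, IsMinimalReduction J0 I := by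
  classical
  have hm := (maximalIdeal.isMaximal R).isPrime
  have hex : ∃ n, ∃ T : List R, T.length = n ∧ sp T ≤ J ∧ IsReduction (sp T) I := by
    obtain ⟨s, hs⟩ := IsNoetherian.noetherian J
    refine ⟨_, s.toList, rfl, ?_⟩
    have : sp s.toList = J := by
      rw [← hs, sp]
      congr 1
      ext x; simp
    rw [this]
    exact ⟨le_rfl, hJ⟩
  obtain ⟨T, hT1, hT2, hT3⟩ := Nat.find_spec hex
  have hmin := fun {m} => Nat.find_min (m := m) hex
  set n := Nat.find hex
  refine ⟨sp T, hT2, hT3, ?_⟩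
  intro J' hJ' hle
  have key : ∀ k ≤ n, ∃ w : List R, (∀ x ∈ w, x ∈ J') ∧ w.length = k ∧
      Gen (sp w) (sp T) (maximalIdeal R) (n - k) := by
    intro k
    induction k with
    | zero =>
      intro _
      exact ⟨[], by simp, rfl, T, fun x hx => mem_sp hx, by omega, by simpa using le_sat _ _⟩
    | succ k ih =>
      intro hk
      obtain ⟨w, h1, h2, h3⟩ := ih (by omega)
      by_cases hc : J' ≤ sat (maximalIdeal R) (sp w ⊔ maximalIdeal R * sp T)
      · exfalso
        rw [sat_max] at hc
        apply hmin (m := k) (by omega)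
        refine ⟨w, h2, (sp_le.2 h1).trans (hle.trans hT2), ?_⟩
        exact reduction_of_le_sup hJ' ((sp_le.2 h1).trans hJ'.1)
          (hc.trans (sup_le_sup_left (Ideal.mul_mono_right hT3.1) _))
      · obtain ⟨x, hx, hx'⟩ := SetLike.not_le_iff_exists.1 hc
        refine ⟨x :: w, ?_, by simp [h2], ?_⟩
        · intro z hz
          rcases List.mem_cons.1 hz with rfl | hz
          exacts [hx, h1 z hz]
        · rw [sp_cons]
          have := h3.exchange hm (hle hx) hx'
          rwa [show n - k - 1 = n - (k + 1) by omega] at this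
  obtain ⟨w, h1, h2, h3⟩ := key n le_rfl
  rw [Nat.sub_self, Gen.zero, sat_max] at h3
  exact le_antisymm hle (h3.trans (sp_le.2 h1))

theorem core_le {J I : Ideal R} (hJ : IsReduction J I) : core I ≤ J := by
  obtain ⟨J0, h1, h2⟩ := exists_minimalReduction hJ
  have h3 : core I ≤ J0 := sInf_le (show J0 ∈ {J | IsMinimalReduction J I} from h2)
  exact h3.trans h1

/-- the genericity condition -/
def GG (I : Ideal R) (l : ℕ) (T : List R) : Prop :=
  (T.length < l → Good I l T) ∧ FG (RingHom.id R) (I.map (RingHom.id R)) T l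

theorem GG.reduction {I : Ideal R} {l : ℕ} {T : List R} (h : GG I l T) (hT : ∀ x ∈ T, x ∈ I)
    (hl : T.length = l) : IsReduction (sp T) I := by
  have := h.2.reduction hT hl.ge
  rwa [Ideal.map_id, Ideal.map_id] at this

theorem GG.nil {I : Ideal R} {l : ℕ} (hset : Setup I l) (hl : fiberDim I = ((l : ℕ∞) : WithBot ℕ∞)) :
    GG I l [] := ⟨fun _ => Good.nil hset le_rfl, FG.nil _ (by rw [Ideal.map_id, hl])⟩

variable [Infinite (ResidueField R)]

theorem Setup.hJs {I J : Ideal R} {l : ℕ} (hset : Setup I l) (hJ : IsReduction J I) :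
    ∀ q : Ideal R, q.IsPrime → I ≤ q → hh q < l → ¬ cl J I ≤ q := fun q hq hI hlt =>
  basic hset hJ (hh q) hlt.le q hq hI rfl (hset.G q hq hI hlt)

theorem gg_step {I J : Ideal R} {l : ℕ} (hset : Setup I l) (hJ : IsReduction J I) {T : List R}
    (hT : ∀ x ∈ T, x ∈ I) (h : GG I l T) (hlt : T.length < l) :
    Generic J (fun z => GG I l (z :: T)) := by
  have h1 : Generic J (fun z => (z :: T).length < l → Good I l (z :: T)) := by
    by_cases hl : T.length + 1 < l
    · exact (good_step hset le_rfl hJ (hset.hJs hJ) (h.1 hlt) hl).mono fun z _ h _ => h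
    · exact Generic.of_forall fun z _ h' => absurd h' (by simpa using hl)
  have h2 : Generic J (fun z => FG (RingHom.id R) (I.map (RingHom.id R)) (z :: T) l) := by
    obtain ⟨V, h3, h4, -, h5⟩ := fg_step hT h.2
    exact ⟨V, h3, fun v hv => h4 v hv J hJ, fun z hz => h5 z (hJ.1 hz)⟩
  exact (h1.and h2)

theorem exists_gg {I J : Ideal R} {l : ℕ} (hset : Setup I l)
    (hl : fiberDim I = ((l : ℕ∞) : WithBot ℕ∞)) (hJ : IsReduction J I) :
    ∃ A : List R, (∀ S, S.Sublist A → GG I l S) ∧ A.length = l ∧ ∀ x ∈ A, x ∈ J := by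
  refine exists_list l (fun A => ∀ S, S.Sublist A → GG I l S) ?_ ?_
  · intro S hS
    rw [List.sublist_nil.1 hS]
    exact GG.nil hset hl
  · intro T hT hlt hTJ
    have hfin : {S : List R | S.Sublist T}.Finite :=
      (List.finite_toSet T.sublists).subset (fun S hS => List.mem_sublists.2 hS)
    refine (Generic.forall_finite hfin (P := fun S z => GG I l (z :: S)) ?_).mono ?_
    · intro S hS
      exact gg_step hset hJ (fun x hx => hJ.1 (hTJ x (hS.subset hx))) (hT S hS)
        (lt_of_le_of_lt hS.length_le hlt)
    · intro z _ h S hS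
      rcases List.sublist_cons_iff.1 hS with h1 | ⟨S', rfl, h1⟩
      · exact hT S h1
      · exact h S' h1

/-- second list, adapted to the first -/
theorem exists_gg2 {I J J' : Ideal R} {l : ℕ} (hset : Setup I l) (hJ : IsReduction J I)
    (hJ' : IsReduction J' I) {A : List R} (hA : ∀ S, S.Sublist A → GG I l S)
    (hAJ : ∀ x ∈ A, x ∈ J) :
    ∃ B : List R, (∀ B' S, B' <:+ B → S <:+ A → B'.length + S.length ≤ l → GG I l (B' ++ S)) ∧
      B.length = l ∧ ∀ x ∈ B, x ∈ J' := by
  refine exists_list l (fun B => ∀ B' S, B' <:+ B → S <:+ A → B'.length + S.length ≤ l →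
    GG I l (B' ++ S)) ?_ ?_
  · intro B' S hB' hS _
    rw [List.suffix_nil.1 hB']
    exact hA S hS.sublist
  · intro T hT hlt hTJ
    have hfin : {S : List R | S <:+ A}.Finite :=
      (List.finite_toSet A.sublists).subset (fun S hS => List.mem_sublists.2 hS.sublist)
    refine (Generic.forall_finite hfin
      (P := fun S z => (T.length + 1) + S.length ≤ l → GG I l (z :: (T ++ S))) ?_).mono ?_
    · intro S hS
      by_cases h : (T.length + 1) + S.length ≤ l
      · refine (gg_step hset hJ' ?_ (hT T S (List.suffix_refl T) hS (by omega))
          (by rw [List.length_append]; omega)).mono fun z _ h _ => h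
        intro x hx
        rcases List.mem_append.1 hx with h1 | h1
        · exact hJ'.1 (hTJ x h1)
        · exact hJ.1 (hAJ x (hS.subset h1))
      · exact Generic.of_forall fun _ _ h' => absurd h' h
    · intro z _ h B' S hB' hS hle
      rcases List.suffix_cons_iff.1 hB' with rfl | h1
      · exact h S hS (by simpa using hle)
      · exact hT B' S h1 hS hle

end MinRed

section Pencil
variable {A : Type u} [CommRing A] {ι : Type v}

theorem pencil_aux (a y c : A) (b : ι → A) (hb : ∀ i j, i ≠ j →
    Ideal.span {a, y} ≤ Ideal.span {b i} ⊔ Ideal.span {b j}) (hc : ∀ i, c * a ∈ Ideal.span {b i})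
    (k : ℕ) : ∀ F : Finset ι, F.card = k + 1 → Ideal.span {c * a} * Ideal.span {a, y} ^ k ≤
      Ideal.span {∏ i ∈ F, b i} := by
  classical
  induction k with
  | zero =>
    intro F hF
    obtain ⟨i, rfl⟩ := Finset.card_eq_one.1 hF
    simpa [Ideal.span_le] using hc i
  | succ k ih =>
    intro F hF
    obtain ⟨i, hi, j, hj, hij⟩ := Finset.one_lt_card.1 (by omega : 1 < F.card)
    have h1 := ih (F.erase i) (by rw [Finset.card_erase_of_mem hi]; omega)
    have h2 := ih (F.erase j) (by rw [Finset.card_erase_of_mem hj]; omega)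
    have e1 : Ideal.span {∏ i ∈ F, b i} = Ideal.span {b i} * Ideal.span {∏ i ∈ F.erase i, b i} := by
      rw [Ideal.span_singleton_mul_span_singleton, Finset.mul_prod_erase F b hi]
    have e2 : Ideal.span {∏ i ∈ F, b i} = Ideal.span {b j} * Ideal.span {∏ i ∈ F.erase j, b i} := by
      rw [Ideal.span_singleton_mul_span_singleton, Finset.mul_prod_erase F b hj]
    calc Ideal.span {c * a} * Ideal.span {a, y} ^ (k + 1)
        = Ideal.span {a, y} * (Ideal.span {c * a} * Ideal.span {a, y} ^ k) := by ring
      _ ≤ (Ideal.span {b i} ⊔ Ideal.span {b j}) * (Ideal.span {c * a} * Ideal.span {a, y} ^ k) :=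
          Ideal.mul_mono_left (hb i j hij)
      _ ≤ _ := by
          rw [Ideal.sup_mul]
          refine sup_le ?_ ?_
          · rw [e1]; exact Ideal.mul_mono_right h1
          · rw [e2]; exact Ideal.mul_mono_right h2

theorem pencil (a y c : A) (b : ι → A) (hb : ∀ i j, i ≠ j →
    Ideal.span {a, y} ≤ Ideal.span {b i} ⊔ Ideal.span {b j}) (hc : ∀ i, c * a ∈ Ideal.span {b i})
    (hbm : ∀ i, b i ∈ Ideal.span {a, y}) (hreg : ∀ i w, b i * w = 0 → w = 0)
    (n : ℕ) (hn : y ^ (n + 1) ∈ Ideal.span {a} * Ideal.span {a, y} ^ n) (F : Finset ι)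
    (hF : F.card = n + 1) : c * y ∈ Ideal.span {a} := by
  have hq : Ideal.span {a, y} ^ (n + 1) ≤ Ideal.span {a} * Ideal.span {a, y} ^ n := by
    have : ∀ k, Ideal.span {a, y} ^ k ≤ Ideal.span {y ^ k} ⊔
        (if k = 0 then ⊥ else Ideal.span {a} * Ideal.span {a, y} ^ (k - 1)) := by
      intro k
      induction k with
      | zero => simp
      | succ k ih =>
        rw [if_neg (by omega), Nat.add_sub_cancel, pow_succ]
        refine (Ideal.mul_mono_left ih).trans ?_
        have e : Ideal.span {a, y} = Ideal.span {a} ⊔ Ideal.span {y} := Ideal.span_insert _ _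
        rw [Ideal.sup_mul]
        refine sup_le ?_ ?_
        · conv_lhs => rw [e]
          rw [Ideal.mul_sup, sup_comm]
          refine sup_le_sup ?_ ?_
          · rw [Ideal.span_singleton_mul_span_singleton, ← pow_succ]
          · rw [mul_comm]
            refine Ideal.mul_mono_right ?_
            rw [← Ideal.span_singleton_pow]
            exact Ideal.pow_right_mono (e ▸ le_sup_right) _
        · refine le_sup_of_le_right ?_
          split_ifs with h0
          · simp
          · rw [mul_assoc, ← pow_succ, Nat.sub_add_cancel (by omega)]
    refine (this (n + 1)).trans (sup_le ?_ ?_)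
    · rwa [Ideal.span_le, Set.singleton_subset_iff]
    · rw [if_neg (by omega), Nat.add_sub_cancel]
  set D := ∏ i ∈ F, b i with hD
  have hDm : y * D ∈ Ideal.span {a, y} ^ (n + 1 + 1) := by
    rw [pow_succ']
    refine Ideal.mul_mem_mul (Ideal.subset_span (by simp)) ?_
    rw [← hF, hD]
    have := Ideal.prod_mem_prod (s := F) (x := b) (I := fun _ => Ideal.span {a, y}) (fun i _ => hbm i)
    rwa [Finset.prod_const] at this
  have h2 : Ideal.span {a, y} ^ (n + 1 + 1) ≤ Ideal.span {a * a} * Ideal.span {a, y} ^ n := by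
    rw [← Ideal.span_singleton_mul_span_singleton, pow_succ']
    calc _ ≤ Ideal.span {a, y} * (Ideal.span {a} * Ideal.span {a, y} ^ n) := Ideal.mul_mono_right hq
      _ = Ideal.span {a} * Ideal.span {a, y} ^ (n + 1) := by ring
      _ ≤ Ideal.span {a} * (Ideal.span {a} * Ideal.span {a, y} ^ n) := Ideal.mul_mono_right hq
      _ = _ := by ring
  obtain ⟨e, he, h3⟩ := Ideal.mem_span_singleton_mul.1 (h2 hDm)
  have h4 := pencil_aux a y c b hb hc n F hF (Ideal.mul_mem_mul (Ideal.mem_span_singleton_self _) he)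
  obtain ⟨f, hf⟩ := Ideal.mem_span_singleton.1 h4
  have hregD : ∀ w, D * w = 0 → w = 0 := by
    have : ∀ G : Finset ι, ∀ w, (∏ i ∈ G, b i) * w = 0 → w = 0 := by
      classical
      intro G
      induction G using Finset.induction_on with
      | empty => intro w; simp
      | insert i G hi ih =>
        intro w hw
        rw [Finset.prod_insert hi, mul_assoc] at hw
        exact ih w (hreg i _ hw)
    exact this F
  rw [Ideal.mem_span_singleton]
  refine ⟨f, ?_⟩
  have := hregD (c * y - a * f) (by
    have e1 : D * (c * y - a * f) = c * (y * D) - a * (D * f) := by ring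
    rw [e1, ← hf, ← h3]; ring)
  exact sub_eq_zero.1 this

end Pencil

section Main
variable {R : Type u} [CommRing R] [IsNoetherianRing R] [IsLocalRing R]

theorem reg_of_reduction {I : Ideal R} {L : List R} (hS : Struct I L) {b : R}
    (hb : IsReduction (sp (b :: L)) I) : Reg (cl (sp L) I) b := by
  apply reg_of_AssP
  intro q hq hbq
  apply hS.al q hq
  apply le_of_reduction hq.1 hb
  rw [sp_cons]
  exact sup_le ((le_cl _ _).trans hq.le) (by simpa [Ideal.span_le] using hbq)

theorem u_lemma {I : Ideal R} {L : List R} (hS : Struct I L) {a y : R}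
    (hred : IsReduction (sp (a :: L)) I) (hy : y ∈ I) {p : Ideal R} (hp : p.IsPrime) {c : R}
    (hc : c * y ∉ sat p (sp (a :: L))) :
    {u : ResidueField R | IsReduction (sp ((a + lift u * y) :: L)) I ∧
      c * a ∈ sat p (sp ((a + lift u * y) :: L))}.Finite := by
  classical
  by_contra hinf
  have hinf : Set.Infinite _ := hinf
  set U := {u : ResidueField R | IsReduction (sp ((a + lift u * y) :: L)) I ∧
      c * a ∈ sat p (sp ((a + lift u * y) :: L))} with hU
  have haI : a ∈ I := hred.1 (mem_sp (by simp))
  set H := cl (sp L) I with hH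
  have hLH : sp L ≤ H := le_cl _ _
  -- integral equation
  obtain ⟨P, hP1, hP2, hP3⟩ := integral_eq hred hy
  have hd : P.natDegree ≠ 0 := by
    intro h0
    rw [hP1.natDegree_eq_zero.1 h0] at hP3
    simp at hP3
  obtain ⟨n, hn⟩ := Nat.exists_eq_succ_of_ne_zero hd
  let π := Ideal.Quotient.mk H
  have hJπ : (sp (a :: L)).map π = Ideal.span {π a} := by
    rw [sp_cons, Ideal.map_sup, Ideal.map_span, Set.image_singleton]
    have : (sp L).map π = ⊥ := by
      rw [Ideal.map_eq_bot_iff_le_ker, Ideal.mk_ker]; exact hLH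
    rw [this, bot_sup_eq]
  have hyn : π y ^ (n + 1) ∈ Ideal.span {π a} * Ideal.span {π a, π y} ^ n := by
    rw [Polynomial.eval_eq_sum_range, Finset.sum_range_succ, hP1.coeff_natDegree, one_mul, hn,
      Nat.succ_eq_add_one] at hP3
    have h1 : π y ^ (n + 1) = - ∑ k ∈ Finset.range (n + 1), π (P.coeff k) * π y ^ k := by
      rw [eq_neg_iff_add_eq_zero, add_comm, ← map_pow]
      simp only [← map_pow, ← map_mul]
      rw [← map_sum, ← map_add, hP3, map_zero]
    rw [h1, neg_mem_iff]
    refine Ideal.sum_mem _ fun k hk => ?_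
    have hk := Finset.mem_range.1 hk
    have h2 : π (P.coeff k) ∈ Ideal.span {π a} ^ (n + 1 - k) := by
      rw [← hJπ, ← Ideal.map_pow]
      have := hP2 k
      rw [hn] at this
      exact Ideal.mem_map_of_mem _ this
    have h3 : π (P.coeff k) * π y ^ k ∈ Ideal.span {π a} ^ (n + 1 - k) * Ideal.span {π a, π y} ^ k :=
      Ideal.mul_mem_mul h2 (Ideal.pow_mem_pow (Ideal.subset_span (by simp)) _)
    have h4 : Ideal.span {π a} ^ (n + 1 - k) * Ideal.span {π a, π y} ^ k ≤
        Ideal.span {π a} * Ideal.span {π a, π y} ^ n := by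
      rw [show n + 1 - k = (n - k) + 1 by omega, pow_succ', mul_assoc]
      refine Ideal.mul_mono_right ?_
      calc _ ≤ Ideal.span {π a, π y} ^ (n - k) * Ideal.span {π a, π y} ^ k :=
            Ideal.mul_mono_left (Ideal.pow_right_mono (Ideal.span_mono (by simp)) _)
        _ = _ := by rw [← pow_add, Nat.sub_add_cancel (by omega)]
    exact h4 h3
  obtain ⟨F, hFU, hF⟩ := hinf.exists_subset_card_eq (n + 1)
  have hs : ∀ u : F, ∃ s, s ∉ p ∧ s * (c * a) ∈ sp ((a + lift u.1 * y) :: L) := fun u => by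
    obtain ⟨s, h1, h2⟩ := (mem_sat hp).1 (hFU u.2).2
    exact ⟨s, h1, h2⟩
  choose s hs1 hs2 using hs
  have hsp : ∏ u : F, s u ∉ p := by
    intro h
    obtain ⟨u, -, h⟩ := (hp.prod_mem_iff).1 h
    exact hs1 u h
  have hab : ∀ u : ResidueField R, π (a + lift u * y) ∈ Ideal.span {π a, π y} := by
    intro u
    rw [map_add, map_mul]
    exact add_mem (Ideal.subset_span (by simp)) (Ideal.mul_mem_left _ _ (Ideal.subset_span (by simp)))
  have key := pencil (ι := F) (π a) (π y) (π ((∏ u : F, s u) * c)) (fun u => π (a + lift u.1 * y))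
    ?_ ?_ (fun u => hab _) ?_ n hyn Finset.univ (by simpa using hF)
  · rw [← map_mul, Ideal.mem_span_singleton] at key
    obtain ⟨f, hf⟩ := key
    obtain ⟨f, rfl⟩ := Ideal.Quotient.mk_surjective f
    rw [← map_mul, Ideal.Quotient.eq] at hf
    apply hc
    refine (mem_sat hp).2 ⟨_, hsp, ?_⟩
    have h1 := hS.be _ hf (I.sub_mem (I.mul_mem_left _ hy) (I.mul_mem_right _ haI))
    rw [sp_cons, mem_sup_span]
    exact ⟨_, h1, f, by ring⟩
  · intro u w huw
    have hu := lift_sub_unit (R := R) (fun h => huw (Subtype.ext h) : u.1 ≠ w.1)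
    have h0 : π (lift u.1 - lift w.1) * π y = π (a + lift u.1 * y) - π (a + lift w.1 * y) := by
      rw [← map_mul, ← map_sub]; congr 1; ring
    have h1 : π y ∈ Ideal.span {π (a + lift u.1 * y)} ⊔ Ideal.span {π (a + lift w.1 * y)} := by
      refine (Ideal.unit_mul_mem_iff_mem _ (hu.map π)).1 ?_
      rw [h0]
      exact sub_mem (Ideal.mem_sup_left (Ideal.mem_span_singleton_self _))
        (Ideal.mem_sup_right (Ideal.mem_span_singleton_self _))
    rw [Ideal.span_le]
    rintro z hz
    rcases hz with rfl | hz
    · have : π a = π (a + lift u.1 * y) - π (lift u.1) * π y := by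
        rw [← map_mul, ← map_sub]; congr 1; ring
      rw [this]
      exact sub_mem (Ideal.mem_sup_left (Ideal.mem_span_singleton_self _))
        (Ideal.mul_mem_left _ _ h1)
    · rw [Set.mem_singleton_iff.1 hz]; exact h1
  · intro u
    have h1 := hs2 u
    rw [sp_cons, mem_sup_span] at h1
    obtain ⟨k, hk, t, h2⟩ := h1
    rw [← map_mul, Ideal.mem_span_singleton]
    have h3 : π (s u * (c * a)) = π (a + lift u.1 * y) * π t := by
      rw [h2, map_add, Ideal.Quotient.eq_zero_iff_mem.2 (hLH hk), zero_add, map_mul]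
    have h4 : π ((∏ u : F, s u) * c * a) = π (s u * (c * a)) *
        π (∏ w ∈ Finset.univ.erase u, s w) := by
      rw [← map_mul]; congr 1
      rw [← Finset.mul_prod_erase Finset.univ s (Finset.mem_univ u)]; ring
    rw [h4, h3, mul_assoc]
    exact Dvd.intro _ rfl
  · intro u w hw
    obtain ⟨w, rfl⟩ := Ideal.Quotient.mk_surjective w
    rw [← map_mul, Ideal.Quotient.eq_zero_iff_mem] at hw
    rw [Ideal.Quotient.eq_zero_iff_mem]
    exact reg_of_reduction hS (hFU u.2).1 w hw

variable [Infinite (ResidueField R)]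

theorem fg_line {I : Ideal R} {l : ℕ} {L : List R} (hLI : ∀ x ∈ L, x ∈ I)
    (hfg : FG (RingHom.id R) (I.map (RingHom.id R)) L l) (hL : L.length + 1 = l) {a y : R}
    (hred : IsReduction (sp (a :: L)) I) (hy : y ∈ I) :
    {u : ResidueField R | ¬ IsReduction (sp ((a + lift u * y) :: L)) I}.Finite := by
  obtain ⟨V, h3, h4, h6, h5⟩ := fg_step hLI hfg
  have haI : a ∈ I := hred.1 (mem_sp (by simp))
  have ha : ∀ v ∈ V, a ∉ v := by
    intro v hv hav
    apply h4 v hv _ hred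
    rw [sp_cons]
    exact sup_le (h6 v hv) (by simpa [Ideal.span_le] using hav)
  refine (h3.biUnion (fun v hv => line_finite (ha v hv) y)).subset ?_
  intro u hu
  by_contra hcon
  simp only [Set.mem_iUnion, Set.mem_setOf_eq, not_exists] at hcon
  apply hu
  have hz : a + lift u * y ∈ I := I.add_mem haI (I.mul_mem_left _ hy)
  have h7 := (h5 _ hz hcon).reduction (by
    intro x hx
    rcases List.mem_cons.1 hx with rfl | hx
    exacts [hz, hLI x hx]) (by simp; omega)
  rwa [Ideal.map_id, Ideal.map_id] at h7

theorem core_coeff {I : Ideal R} {l : ℕ} {L : List R} (hset : Setup I l) (hLI : ∀ x ∈ L, x ∈ I)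
    (hL : L.length + 1 = l) (hg : GG I l L) {a X c : R} (hred : IsReduction (sp (a :: L)) I)
    (hX : X ∈ core I) (hXc : X - c * a ∈ sp L) : c ∈ cl (sp (a :: L)) I := by
  have hS := struct hset le_rfl (hg.1 (by omega)) (by omega)
  rw [mem_cl]
  by_contra hcon
  push Not at hcon
  obtain ⟨y, hy, hcy⟩ := hcon
  have h1 := u_lemma hS hred hy (maximalIdeal.isMaximal R).isPrime (by rwa [sat_max])
  have h2 := fg_line hLI hg.2 hL hred hy
  obtain ⟨u, hu⟩ := (h1.union h2).exists_notMem
  simp only [Set.mem_union, not_or, Set.mem_setOf_eq, not_not] at hu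
  obtain ⟨hu1, hu2⟩ := hu
  apply hu1
  refine ⟨hu2, le_sat _ _ ?_⟩
  have h3 := core_le hu2 hX
  have : c * a = X - (X - c * a) := by ring
  rw [this]
  exact sub_mem h3 (sp_mono (by simp) hXc)

theorem exch {I : Ideal R} {l : ℕ} {L : List R} (hset : Setup I l) (hLI : ∀ x ∈ L, x ∈ I)
    (hL : L.length + 1 = l) (hg : GG I l L) {a b : R} (hra : IsReduction (sp (a :: L)) I)
    (hrb : IsReduction (sp (b :: L)) I) (hK : cl (sp (a :: L)) I * I ≤ core I) :
    cl (sp (b :: L)) I = cl (sp (a :: L)) I := by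
  have hS := struct hset le_rfl (hg.1 (by omega)) (by omega)
  have haI : a ∈ I := hra.1 (mem_sp (by simp))
  have hbI : b ∈ I := hrb.1 (mem_sp (by simp))
  apply le_antisymm
  · intro c hc
    have h1 := mem_cl.1 hc a haI
    rw [sp_cons, mem_sup_span] at h1
    obtain ⟨m, hm, k, h1⟩ := h1
    have hk : k ∈ cl (sp (a :: L)) I := by
      rw [mem_cl]
      intro y hy
      have h2 := mem_cl.1 hc y hy
      rw [sp_cons, mem_sup_span] at h2
      obtain ⟨m', hm', w, h2⟩ := h2
      have h3 : b * (k * y - a * w) ∈ cl (sp L) I := by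
        have : b * (k * y - a * w) = a * m' - m * y := by
          linear_combination (-y) * h1 + a * h2
        rw [this]
        exact le_cl _ _ (sub_mem (Ideal.mul_mem_left _ _ hm') (Ideal.mul_mem_right _ _ hm))
      have h4 := hS.be _ (reg_of_reduction hS hrb _ h3)
        (I.sub_mem (I.mul_mem_left _ hy) (I.mul_mem_right _ haI))
      rw [sp_cons, mem_sup_span]
      exact ⟨_, h4, w, by ring⟩
    refine core_coeff hset hLI hL hg hra (X := k * b) (hK (Ideal.mul_mem_mul hk hbI)) ?_
    have : k * b - c * a = - m := by rw [h1]; ring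
    rw [this]
    exact neg_mem hm
  · intro k hk
    rw [mem_cl]
    intro y hy
    exact core_le hrb (hK (Ideal.mul_mem_mul hk hy))

theorem a_imp_c {I J J' : Ideal R} {l : ℕ} (hset : Setup I l)
    (hl : fiberDim I = ((l : ℕ∞) : WithBot ℕ∞)) (hJ : IsMinimalReduction J I)
    (hJ' : IsMinimalReduction J' I) (hK : cl J I * I ≤ core I) : cl J' I = cl J I := by
  obtain ⟨A, hA1, hA2, hA3⟩ := exists_gg hset hl hJ.1
  obtain ⟨B, hB1, hB2, hB3⟩ := exists_gg2 hset hJ.1 hJ'.1 hA1 hA3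
  have hAI : ∀ x ∈ A, x ∈ I := fun x hx => hJ.1.1 (hA3 x hx)
  have hBI : ∀ x ∈ B, x ∈ I := fun x hx => hJ'.1.1 (hB3 x hx)
  have eA : sp A = J := hJ.2 _ ((hA1 A (List.Sublist.refl A)).reduction hAI hA2) (sp_le.2 hA3)
  have hBg : GG I l B := by simpa using hB1 B [] (List.suffix_refl B) (List.nil_suffix) (by simp [hB2])
  have eB : sp B = J' := hJ'.2 _ (hBg.reduction hBI hB2) (sp_le.2 hB3)
  have key : ∀ B' : List R, B' <:+ B → ∀ S, S <:+ A → B'.length + S.length = l →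
      cl (sp (B' ++ S)) I = cl J I := by
    intro B'
    induction B' with
    | nil =>
      intro _ S hS hlen
      have : S = A := hS.eq_of_length (by simpa [hA2] using hlen)
      rw [this, List.nil_append, eA]
    | cons b B' ih =>
      intro hB' S hS hlen
      have hb : b ∈ B := hB'.subset (by simp)
      have hB'' : B' <:+ B := (List.suffix_cons b B').trans hB'
      simp only [List.length_cons] at hlen
      obtain ⟨W, hW⟩ := hS
      have hWl : W ≠ [] := by
        rintro rfl
        have : S.length = l := by rw [← hA2, ← hW]; simp
        omega
      obtain ⟨W', a, rfl⟩ : ∃ W' a, W = W' ++ [a] := by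
        rcases List.eq_nil_or_concat W with h | ⟨W', a, h⟩
        · exact absurd h hWl
        · exact ⟨W', a, by simpa using h⟩
      have haS : (a :: S) <:+ A := ⟨W', by rw [← hW]; simp⟩
      have hS : S <:+ A := (List.suffix_cons a S).trans haS
      have ha : a ∈ A := haS.subset (by simp)
      have h1 := ih hB'' (a :: S) haS (by simp; omega)
      have hperm : (B' ++ a :: S).Perm (a :: (B' ++ S)) := List.perm_middle
      have hmem : ∀ x ∈ B' ++ S, x ∈ I := by
        intro x hx
        rcases List.mem_append.1 hx with hx | hx
        · exact hBI x (hB''.subset hx)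
        · exact hAI x (hS.subset hx)
      have hga := (hB1 B' (a :: S) hB'' haS (by simp; omega)).reduction (by
        intro x hx
        rcases List.mem_cons.1 (hperm.mem_iff.1 hx) with rfl | hx
        exacts [hAI _ ha, hmem x hx]) (by simp; omega)
      have hgb := (hB1 (b :: B') S hB' hS (by simp; omega)).reduction (by
        intro x hx
        rcases List.mem_cons.1 hx with rfl | hx
        exacts [hBI _ hb, hmem x hx]) (by simp; omega)
      rw [sp_perm hperm] at h1 hga
      rw [← h1]
      exact exch hset hmem (by simp; omega) (hB1 B' S hB'' hS (by omega)) hga hgb (by rwa [h1])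
  have := key B (List.suffix_refl B) [] (List.nil_suffix) (by simp [hB2])
  rwa [List.append_nil, eB] at this

end Main

section Gam
variable {R : Type u} [CommRing R] [IsNoetherianRing R] [IsLocalRing R]

theorem Gen.sub {K N N' p : Ideal R} (hp : p.IsPrime) {n : ℕ} (h : Gen K N p n) (hpN : p * N ≤ K)
    (hN : N' ≤ N) (hnot : ¬ N ≤ sat p (K ⊔ N')) : Gen K N' p (n - 1) := by
  have key : ∀ k ≤ n, (∃ w : List R, (∀ x ∈ w, x ∈ N') ∧ w.length = k ∧
      Gen (K ⊔ sp w) N p (n - k)) ∨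
      (∃ w : List R, (∀ x ∈ w, x ∈ N') ∧ w.length < k ∧ N' ≤ sat p (K ⊔ sp w)) := by
    intro k
    induction k with
    | zero =>
      intro _
      exact Or.inl ⟨[], by simp, rfl, by simpa using h⟩
    | succ k ih =>
      intro hk
      rcases ih (by omega) with ⟨w, h1, h2, h3⟩ | ⟨w, h1, h2, h3⟩
      · by_cases hc : N' ≤ sat p (K ⊔ sp w)
        · exact Or.inr ⟨w, h1, by omega, hc⟩
        · left
          obtain ⟨x, hx, hx'⟩ := SetLike.not_le_iff_exists.1 hc
          refine ⟨x :: w, ?_, by simp [h2], ?_⟩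
          · intro z hz
            rcases List.mem_cons.1 hz with rfl | hz
            exacts [hx, h1 z hz]
          · rw [sp_cons, ← sup_assoc]
            have := h3.exchange hp (hN hx) (by
              rwa [sup_eq_left.2 (hpN.trans le_sup_left)])
            rwa [show n - k - 1 = n - (k + 1) by omega] at this
      · exact Or.inr ⟨w, h1, by omega, h3⟩
  rcases key n le_rfl with ⟨w, h1, h2, h3⟩ | ⟨w, h1, h2, h3⟩
  · exfalso
    rw [Nat.sub_self, Gen.zero] at h3
    exact hnot (h3.trans (sat_mono _ (sup_le_sup_left (sp_le.2 h1) _)))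
  · exact ⟨w, h1, by omega, h3⟩

theorem mem_coeffs {A : List R} {X : R} (hX : X ∈ sp A) : ∃ c : Fin A.length → R,
    X = ∑ i, c i * A.get i := by
  have : {x | x ∈ A} = Set.range A.get := by
    rw [Set.range_list_get]
  rw [sp, this] at hX
  obtain ⟨c, hc⟩ := (Ideal.mem_span_range_iff_exists_fun).1 hX
  exact ⟨c, hc.symm⟩

theorem eraseIdx_perm (A : List R) (i : Fin A.length) : (A.get i :: A.eraseIdx i).Perm A :=
  List.getElem_cons_eraseIdx_perm i.2

theorem coeff_sub {A : List R} {X : R} {c : Fin A.length → R}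
    (hX : X = ∑ i, c i * A.get i) (i : Fin A.length) : X - c i * A.get i ∈ sp (A.eraseIdx i) := by
  classical
  rw [hX, ← Finset.add_sum_erase _ _ (Finset.mem_univ i), add_sub_cancel_left]
  refine Ideal.sum_mem _ fun j hj => Ideal.mul_mem_left _ _ (mem_sp ?_)
  have hne : j ≠ i := (Finset.mem_erase.1 hj).1
  rw [List.mem_eraseIdx_iff_getElem]
  exact ⟨j, j.2, fun h => hne (Fin.ext h), rfl⟩

variable [Infinite (ResidueField R)]

theorem core_le_mul {I J : Ideal R} {l : ℕ} (hset : Setup I l)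
    (hl : fiberDim I = ((l : ℕ∞) : WithBot ℕ∞)) (hJ : IsMinimalReduction J I) :
    core I ≤ cl J I * J := by
  obtain ⟨A, hA1, hA2, hA3⟩ := exists_gg hset hl hJ.1
  have hAI : ∀ x ∈ A, x ∈ I := fun x hx => hJ.1.1 (hA3 x hx)
  have eA : sp A = J := hJ.2 _ ((hA1 A (List.Sublist.refl A)).reduction hAI hA2) (sp_le.2 hA3)
  intro X hX
  have hXJ := core_le hJ.1 hX
  rw [← eA] at hXJ
  obtain ⟨c, hc⟩ := mem_coeffs hXJ
  rw [hc]
  refine Ideal.sum_mem _ fun i _ => Ideal.mul_mem_mul ?_ (hA3 _ (A.get_mem i))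
  have e : sp (A.get i :: A.eraseIdx i) = J := by rw [sp_perm (eraseIdx_perm A i), eA]
  have hsub : (A.eraseIdx i).Sublist A := List.eraseIdx_sublist A i
  have hlen := (eraseIdx_perm A i).length_eq
  rw [List.length_cons] at hlen
  replace hlen := hlen.trans hA2
  have := core_coeff hset (fun x hx => hAI x (hsub.subset hx)) hlen (hA1 _ hsub)
    (by rw [e]; exact hJ.1) hX (coeff_sub hc i)
  rwa [e] at this

theorem a_imp_b {I J : Ideal R} {l : ℕ} (hset : Setup I l)
    (hl : fiberDim I = ((l : ℕ∞) : WithBot ℕ∞)) (hJ : IsMinimalReduction J I)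
    (hK : cl J I * I ≤ core I) : cl J I * J = cl J I * I ∧ cl J I * I = core I := by
  have h1 := core_le_mul hset hl hJ
  have h2 : cl J I * J ≤ cl J I * I := Ideal.mul_mono_right hJ.1.1
  exact ⟨le_antisymm h2 (hK.trans h1), le_antisymm hK (h1.trans h2)⟩

theorem gamma_claim {I : Ideal R} {l : ℕ} {L : List R} (hset : Setup I l) (hLI : ∀ x ∈ L, x ∈ I)
    (hL : L.length + 1 = l) (hg : GG I l L) {a : R} (hred : IsReduction (sp (a :: L)) I)
    (hK : cl (sp (a :: L)) I * I ≤ core I) (n : ℕ) : ∀ 𝔠 : Ideal R,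
    (∀ p, AssP (cl (sp (a :: L)) I) p →
      Gen (cl (sp (a :: L)) I) (𝔠 ⊓ cl (cl (sp (a :: L)) I) p) p n) →
    ∃ F : Fin n → Ideal R, (∀ j, IsReduction (F j) I) ∧ (∀ j, sp L ≤ F j) ∧
      ∀ c ∈ 𝔠, (∀ j, c * a ∈ F j) → c ∈ cl (sp (a :: L)) I := by
  classical
  have hS := struct hset le_rfl (hg.1 (by omega)) (by omega)
  have haI : a ∈ I := hred.1 (mem_sp (by simp))
  set J := sp (a :: L) with hJ
  set K := cl J I with hKdef
  induction n with
  | zero =>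
    intro 𝔠 h
    refine ⟨fun j => j.elim0, fun j => j.elim0, fun j => j.elim0, ?_⟩
    intro c hc _
    by_contra hcon
    obtain ⟨q, hq, hle⟩ : ∃ q, q.IsPrime ∧ ∃ r, q = an K (r * c) := by
      have hne : an K c ≠ ⊤ := by
        intro h1
        apply hcon
        have : (1 : R) ∈ an K c := by rw [h1]; trivial
        simpa using this
      obtain ⟨q, hq⟩ := Ideal.exists_minimalPrimes_le (I := an K c)
        (le_maximalIdeal hne)
      obtain ⟨hqp, r, hr⟩ := AssP_minimal hq.1
      refine ⟨q, hqp, r, ?_⟩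
      rw [hr]; ext z; simp [mul_assoc]
    obtain ⟨r, hr⟩ := hle
    have hA : AssP K q := ⟨hq, r * c, hr⟩
    have h1 := Gen.zero.1 (h q hA)
    have h2 : r * c ∈ 𝔠 ⊓ cl K q := by
      refine ⟨𝔠.mul_mem_left _ hc, ?_⟩
      refine mem_cl.2 ?_
      intro y hy
      rw [hr, mem_an] at hy
      rwa [mul_comm]
    obtain ⟨s, hs, h3⟩ := (mem_sat hq).1 (h1 h2)
    apply hs
    rw [hr]; exact h3
  | succ n ih =>
    intro 𝔠 h
    set S : Set (Ideal R) := {p | AssP K p ∧ ¬ 𝔠 ⊓ cl K p ≤ sat p K} with hSd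
    have hSfin : S.Finite := (AssP_finite K).subset fun p hp => hp.1
    have hex : ∀ p, ∃ c, p ∈ S → (c ∈ 𝔠 ⊓ cl K p ∧ c ∉ sat p K) := by
      intro p
      by_cases hp : p ∈ S
      · obtain ⟨c, h1, h2⟩ := SetLike.not_le_iff_exists.1 hp.2
        exact ⟨c, fun _ => ⟨h1, h2⟩⟩
      · exact ⟨0, fun h => absurd h hp⟩
    choose cc hcc using hex
    have hav : ∀ p ∈ S, ¬ I ≤ an (sat p J) (cc p) := by
      intro p hp hle
      apply (hcc p hp).2
      have h1 : I * Ideal.span {cc p} ≤ sat p J := by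
        intro z hz
        obtain ⟨y, hy, rfl⟩ := Ideal.mem_mul_span_singleton.1 hz
        exact hle hy
      obtain ⟨s, hs, h2⟩ := (le_sat_iff hp.1.1 (IsNoetherian.noetherian _)).1 h1
      refine (mem_sat hp.1.1).2 ⟨s, hs, ?_⟩
      rw [hKdef, mem_cl]
      intro y hy
      have := h2 (y * cc p) (Ideal.mul_mem_mul hy (Ideal.mem_span_singleton_self _))
      convert this using 1; ring
    obtain ⟨y, hyI, hy⟩ := exists_avoid (J := I) (S := (fun p => an (sat p J) (cc p)) '' S)
      (hSfin.image _) (by rintro _ ⟨p, hp, rfl⟩; exact hav p hp)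
    have hfin : (⋃ p ∈ S, {u : ResidueField R | IsReduction (sp ((a + lift u * y) :: L)) I ∧
      cc p * a ∈ sat p (sp ((a + lift u * y) :: L))}).Finite := by
      refine hSfin.biUnion fun p hp => u_lemma hS hred hyI hp.1.1 ?_
      have := hy _ ⟨p, hp, rfl⟩
      rwa [mem_an, mul_comm] at this
    obtain ⟨u, hu⟩ := (hfin.union (fg_line hLI hg.2 hL hred hyI)).exists_notMem
    simp only [Set.mem_union, Set.mem_iUnion, Set.mem_setOf_eq, not_or, not_exists, not_and,
      not_not] at hu
    obtain ⟨hu1, hu2⟩ := hu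
    set J' := sp ((a + lift u * y) :: L) with hJ'
    have hKJ : K ≤ an J' a := by
      intro k hk
      rw [mem_an]
      exact core_le hu2 (hK (Ideal.mul_mem_mul hk haI))
    obtain ⟨F, hF1, hF3, hF2⟩ := ih (𝔠 ⊓ an J' a) (by
      intro p hp
      have hle : 𝔠 ⊓ an J' a ⊓ cl K p ≤ 𝔠 ⊓ cl K p := inf_le_inf_right _ inf_le_left
      by_cases hpS : p ∈ S
      · refine (h p hp).sub hp.1 ?_ hle ?_
        · rw [Ideal.mul_le]
          intro r hr s hs
          rw [mul_comm]
          exact mem_cl.1 hs.2 r hr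
        · intro hcon
          have h1 := sat_mono p (sup_le hKJ (inf_le_left.trans inf_le_right)) (hcon (hcc p hpS).1)
          apply hu1 p hpS hu2
          obtain ⟨s, hs, h2⟩ := (mem_sat hp.1).1 h1
          refine (mem_sat hp.1).2 ⟨s, hs, ?_⟩
          rw [mem_an] at h2
          convert h2 using 1; ring
      · have : 𝔠 ⊓ cl K p ≤ sat p K := by
          by_contra hcon
          exact hpS ⟨hp, hcon⟩
        exact (Gen.zero.2 (hle.trans this)).mono le_rfl (Nat.zero_le _))
    refine ⟨Fin.cons J' F, ?_, ?_, ?_⟩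
    · intro j
      refine Fin.cases ?_ (fun j => ?_) j
      · exact hu2
      · exact hF1 j
    · intro j
      refine Fin.cases ?_ (fun j => ?_) j
      · exact sp_mono (by simp)
      · exact hF3 j
    · intro c hc hj
      refine hF2 c ⟨hc, ?_⟩ fun j => hj j.succ
      exact hj 0

end Gam

section Fin1
variable {R : Type u} [CommRing R] [IsNoetherianRing R]

theorem Gen_of_qType {K p : Ideal R} (hp : AssP K p) (hpp : p.IsPrime) {t : ℕ}
    (h : qType (Localization.AtPrime p) (K.map (algebraMap R (Localization.AtPrime p))) ≤ t) :
    Gen K (cl K p) p t := by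
  classical
  set S := Localization.AtPrime p with hS
  set φ := algebraMap R S with hφ
  set KS := K.map φ with hKS
  have hm : maximalIdeal S = p.map φ := (Localization.AtPrime.map_eq_maximalIdeal).symm
  have hann : ∀ w : R, (∀ r ∈ p, r * w ∈ sat p K) → ∀ x ∈ maximalIdeal S, x * φ w ∈ KS := by
    intro w hw
    have : maximalIdeal S ≤ an KS (φ w) := by
      rw [hm, Ideal.map_le_iff_le_comap]
      intro r hr
      rw [Ideal.mem_comap, mem_an, ← map_mul]
      exact (mem_sat_iff_loc hpp).1 (hw r hr)
    exact this
  have hne : {n : ℕ∞ | ∃ rs : List S, (∀ x ∈ rs, x ∈ maximalIdeal S) ∧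
    RingTheory.Sequence.IsRegular (S ⧸ KS) rs ∧ (rs.length : ℕ∞) = qDepth S KS ∧
    muE (socle S (KS ⊔ Ideal.ofList rs)) = n}.Nonempty := by
    rw [Set.nonempty_iff_ne_empty]
    intro he
    rw [qType, he, sInf_empty, top_le_iff] at h
    exact ENat.natCast_ne_top t h
  obtain ⟨rs, h1, h2, -, h4⟩ := csInf_mem hne
  change muE (socle S (KS ⊔ Ideal.ofList rs)) = qType S KS at h4
  rw [← h4] at h
  have hrs : rs = [] := by
    rcases rs with _ | ⟨x, rs⟩
    · rfl
    exfalso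
    obtain ⟨w, hw, hws⟩ := hp.exists_notMem
    have h5 := ((RingTheory.Sequence.isWeaklyRegular_cons_iff _ _ _).1 h2.toIsWeaklyRegular).1
    have h6 : x * φ w ∈ KS := hann w (fun r hr => le_sat _ _ (by rw [hw] at hr; exact hr)) x
      (h1 x (by simp))
    have h7 : x • (Ideal.Quotient.mk KS (φ w)) = x • 0 := by
      rw [smul_zero]
      change Ideal.Quotient.mk KS (x * φ w) = 0
      rwa [Ideal.Quotient.eq_zero_iff_mem]
    have h8 := h5 h7
    rw [Ideal.Quotient.eq_zero_iff_mem] at h8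
    exact hws ((mem_sat_iff_loc hpp).2 h8)
  subst hrs
  have e0 : KS ⊔ Ideal.ofList [] = KS := by simp
  rw [e0] at h
  have hne2 : {n : ℕ∞ | ∃ s : Finset (S ⧸ KS), (s.card : ℕ∞) = n ∧
      Submodule.span (S ⧸ KS) (s : Set (S ⧸ KS)) = socle S KS}.Nonempty := by
    rw [Set.nonempty_iff_ne_empty]
    intro he
    rw [muE, he, sInf_empty, top_le_iff] at h
    exact ENat.natCast_ne_top t h
  obtain ⟨s, h5, h6⟩ := csInf_mem hne2
  change (s.card : ℕ∞) = muE (socle S KS) at h5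
  rw [← h5] at h
  have hcard : s.card ≤ t := by exact_mod_cast h
  have hsoc : ∀ z : S, Ideal.Quotient.mk KS z ∈ socle S KS ↔ ∀ x ∈ maximalIdeal S, x * z ∈ KS := by
    intro z
    rw [socle, Submodule.mem_colon]
    constructor
    · intro hz x hx
      have := hz _ (Ideal.mem_map_of_mem (Ideal.Quotient.mk KS) hx)
      rw [smul_eq_mul, ← map_mul, Submodule.mem_bot, Ideal.Quotient.eq_zero_iff_mem, mul_comm] at this
      exact this
    · intro hz y hy
      obtain ⟨x, hx, rfl⟩ := (Ideal.mem_map_iff_of_surjective _ Ideal.Quotient.mk_surjective).1 hy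
      rw [smul_eq_mul, ← map_mul, Submodule.mem_bot, Ideal.Quotient.eq_zero_iff_mem, mul_comm]
      exact hz x hx
  have hlift : ∀ x : S ⧸ KS, ∃ r : R, x ∈ s → (r ∈ cl K p ∧ x ∈ Ideal.span {Ideal.Quotient.mk KS (φ r)}) := by
    intro x
    by_cases hx : x ∈ s
    swap
    · exact ⟨0, fun h => absurd h hx⟩
    obtain ⟨z, rfl⟩ := Ideal.Quotient.mk_surjective x
    have hz : Ideal.Quotient.mk KS z ∈ socle S KS := by
      rw [← h6]; exact Submodule.subset_span hx
    rw [hsoc] at hz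
    obtain ⟨⟨r, b⟩, hrb⟩ := IsLocalization.surj p.primeCompl z
    dsimp only at hrb
    have h7 : p * Ideal.span {r} ≤ sat p K := by
      intro y hy
      obtain ⟨y, hyp, rfl⟩ := Ideal.mem_mul_span_singleton.1 hy
      refine (mem_sat_iff_loc hpp).2 ?_
      rw [map_mul]
      change φ y * φ r ∈ KS
      rw [hφ, ← hrb]
      have := hz (φ y) (by rw [hm]; exact Ideal.mem_map_of_mem _ hyp)
      rw [← mul_assoc]
      exact Ideal.mul_mem_right _ _ this
    obtain ⟨c, hc, h8⟩ := (le_sat_iff hpp (IsNoetherian.noetherian _)).1 h7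
    refine ⟨c * r, fun _ => ⟨?_, ?_⟩⟩
    · rw [mem_cl]
      intro y hy
      have := h8 (y * r) (Ideal.mul_mem_mul hy (Ideal.mem_span_singleton_self r))
      convert this using 1; ring
    · have hu : IsUnit (φ (c * b)) :=
        IsLocalization.map_units S (⟨c * b, p.primeCompl.mul_mem hc b.2⟩ : p.primeCompl)
      obtain ⟨u, hu⟩ := hu
      rw [Ideal.mem_span_singleton]
      refine ⟨Ideal.Quotient.mk KS (↑u⁻¹), ?_⟩
      rw [← map_mul]
      congr 1
      rw [map_mul, hφ, ← hrb, ← hφ]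
      have : φ c * (z * φ b) = z * u := by rw [hu, map_mul]; ring
      rw [this, Units.mul_inv_cancel_right]
  choose g hg using hlift
  refine ⟨s.toList.map g, ?_, by simpa using hcard, ?_⟩
  · intro x hx
    obtain ⟨y, hy, rfl⟩ := List.mem_map.1 hx
    exact (hg y (by simpa using hy)).1
  · intro c hc
    refine (mem_sat_iff_loc hpp).2 ?_
    have h7 : Ideal.Quotient.mk KS (φ c) ∈ socle S KS := by
      rw [hsoc]
      refine hann c fun r hr => le_sat _ _ ?_
      rw [mul_comm]; exact mem_cl.1 hc r hr
    rw [← h6] at h7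
    have h8 : Submodule.span (S ⧸ KS) (s : Set (S ⧸ KS)) ≤
        ((sp (s.toList.map g)).map φ).map (Ideal.Quotient.mk KS) := by
      rw [Submodule.span_le]
      intro x hx
      refine (Ideal.span_le.2 ?_) (hg x hx).2
      rw [Set.singleton_subset_iff]
      exact Ideal.mem_map_of_mem _ (Ideal.mem_map_of_mem _ (mem_sp (List.mem_map.2 ⟨x, by simpa using hx, rfl⟩)))
    have h9 := h8 h7
    rw [Ideal.mem_quotient_iff_mem_sup] at h9
    rw [Ideal.map_sup, sup_comm]
    exact h9

theorem fitting_Gen {I p : Ideal R} (hp : p.IsPrime) {l : ℕ} (h : ¬ fittingIdeal I l ≤ p) :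
    Gen ⊥ I p l := by
  classical
  rw [fittingIdeal] at h
  simp only [iSup_le_iff, not_forall] at h
  obtain ⟨n, π, hπ, h⟩ := h
  rw [Ideal.span_le, Set.not_subset] at h
  obtain ⟨d, ⟨v, r, hv, hd⟩, hdp⟩ := h
  let e : Fin n → R := fun j => π (Pi.single j 1)
  have hπe : ∀ w : Fin n → R, π w = ∑ j, w j * e j := by
    intro w
    rw [LinearMap.pi_apply_eq_sum_univ π w]
    refine Finset.sum_congr rfl fun j _ => ?_
    rw [smul_eq_mul]
    congr 2
    ext i
    simp [Pi.single_apply, eq_comm]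
  have hr : Function.Injective r := by
    intro i i' hii
    by_contra hne
    apply hdp
    have : d = 0 := by
      rw [hd]
      refine Matrix.det_zero_of_row_eq hne ?_
      ext k
      simp [hii]
    rw [this]; exact p.zero_mem
  set F := Finset.univ.filter (fun j => j ∉ Finset.univ.image r) with hF
  set V := F.toList.map e with hV
  have hVm : ∀ j, j ∉ Finset.univ.image r → e j ∈ sp V := fun j hj =>
    mem_sp (List.mem_map.2 ⟨j, by simp only [Finset.mem_toList, hF, Finset.mem_filter]; exact ⟨Finset.mem_univ _, hj⟩, rfl⟩)
  set M : Matrix (Fin (n - l)) (Fin (n - l)) R := Matrix.of fun i k => v k (r i) with hM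
  set E : Fin (n - l) → R := fun i => e (r i) with hE
  have h1 : ∀ k, (Matrix.mulVec M.transpose E) k ∈ sp V := by
    intro k
    have h2 := hπe (v k)
    rw [hv k, ← Finset.sum_filter_add_sum_filter_not Finset.univ (fun j => j ∈ Finset.univ.image r)] at h2
    have h3 : (Matrix.mulVec M.transpose E) k = ∑ j ∈ Finset.univ.filter (fun j => j ∈ Finset.univ.image r), v k j * e j := by
      rw [Finset.filter_mem_eq_inter, Finset.univ_inter, Finset.sum_image (fun a _ b _ h => hr h)]
      simp [Matrix.mulVec, dotProduct, hM, hE]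
    rw [h3, eq_neg_of_add_eq_zero_left h2.symm, neg_mem_iff]
    refine Ideal.sum_mem _ fun j hj => Ideal.mul_mem_left _ _ (hVm j (Finset.mem_filter.1 hj).2)
  have h2 : ∀ i, d * E i ∈ sp V := by
    intro i
    have h3 : d * E i = (Matrix.mulVec M.transpose.adjugate (Matrix.mulVec M.transpose E)) i := by
      rw [Matrix.mulVec_mulVec, Matrix.adjugate_mul, Matrix.smul_mulVec, Matrix.one_mulVec,
        Matrix.det_transpose, ← hd]
      rfl
    rw [h3]
    simp only [Matrix.mulVec, dotProduct]
    exact Ideal.sum_mem _ fun j _ => Ideal.mul_mem_left _ _ (h1 j)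
  refine ⟨V, ?_, ?_, ?_⟩
  · intro x hx
    obtain ⟨j, -, rfl⟩ := List.mem_map.1 hx
    rw [← hπ]
    exact ⟨_, rfl⟩
  · rw [hV, List.length_map, Finset.length_toList, hF, Finset.filter_not, Finset.filter_mem_eq_inter,
      Finset.univ_inter, Finset.card_sdiff_of_subset (Finset.subset_univ _), Finset.card_image_of_injective _ hr]
    simp
    omega
  · rw [bot_sup_eq]
    intro x hx
    rw [← hπ] at hx
    obtain ⟨w, rfl⟩ := hx
    rw [hπe]
    refine Ideal.sum_mem _ fun j _ => Ideal.mul_mem_left _ _ ?_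
    by_cases hj : j ∈ Finset.univ.image r
    · obtain ⟨i, -, rfl⟩ := Finset.mem_image.1 hj
      exact (mem_sat hp).2 ⟨d, hdp, h2 i⟩
    · exact le_sat _ _ (hVm j hj)

theorem AssP_cl {B I q : Ideal R} (hq : AssP (cl B I) q) : AssP B q := by
  obtain ⟨w, hw, hws⟩ := hq.exists_notMem
  have : ¬ I * Ideal.span {w} ≤ sat q B := by
    intro hcon
    apply hws
    obtain ⟨t, ht, h⟩ := (le_sat_iff hq.1 (IsNoetherian.noetherian _)).1 hcon
    refine (mem_sat hq.1).2 ⟨t, ht, ?_⟩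
    rw [mem_cl]
    intro y hy
    have := h (y * w) (Ideal.mul_mem_mul hy (Ideal.mem_span_singleton_self w))
    convert this using 1; ring
  obtain ⟨z, hz, hzs⟩ := SetLike.not_le_iff_exists.1 this
  obtain ⟨y, hy, rfl⟩ := Ideal.mem_mul_span_singleton.1 hz
  obtain ⟨q0, h1, h2, h3⟩ := exists_AssP_of_notMem_sat hq.1 hzs
  have : q ≤ q0 := by
    intro r hr
    apply h3
    rw [hw, mem_an, mem_cl] at hr
    rw [mem_an]
    have := hr y hy
    convert this using 1; ring
  rwa [le_antisymm this h2]

theorem sp_map {S : Type v} [CommRing S] (f : R →+* S) (A : List R) : sp (A.map f) = (sp A).map f := by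
  rw [sp, sp, Ideal.map_span]
  congr 1
  ext x; simp

end Fin1

section Fin2
variable {R : Type u} [CommRing R] [IsNoetherianRing R] [IsLocalRing R]

theorem AssP_QSet [Infinite (ResidueField R)] {I J p : Ideal R} {l : ℕ} (hset : Setup I l)
    (hl : fiberDim I = ((l : ℕ∞) : WithBot ℕ∞)) (hJ : IsMinimalReduction J I) (hl0 : 0 < l)
    (hp : AssP (cl J I) p) : (⟨p, hp.1⟩ : PrimeSpectrum R) ∈ QSet I l := by
  have hpp := hp.1
  obtain ⟨A, hA1, hA2, hA3⟩ := exists_gg hset hl hJ.1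
  have hAI : ∀ x ∈ A, x ∈ I := fun x hx => hJ.1.1 (hA3 x hx)
  have eA : sp A = J := hJ.2 _ ((hA1 A (List.Sublist.refl A)).reduction hAI hA2) (sp_le.2 hA3)
  have hIp : I ≤ p := le_of_reduction hp.1 hJ.1 ((le_cl _ _).trans hp.le)
  have hge : l ≤ hh p := by
    by_contra hcon
    exact hset.hJs hJ.1 p hp.1 hIp (by omega) hp.le
  have hle : hh p ≤ l := by
    rcases A with _ | ⟨a, L⟩
    · simp at hA2; omega
    simp only [List.length_cons] at hA2
    have hS : Struct I L := struct hset le_rfl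
      ((hA1 L (List.sublist_cons_self a L)).1 (by omega)) (by omega)
    have e : cl J I = cl (cl (sp L) I ⊔ Ideal.span {a}) I := by
      apply le_antisymm
      · intro x hx
        rw [mem_cl] at hx ⊢
        intro y hy
        have := hx y hy
        rw [← eA, sp_cons] at this
        have h3 : sp L ⊔ Ideal.span {a} ≤ cl (sp L) I ⊔ Ideal.span {a} :=
          sup_le_sup_right (le_cl (sp L) I) _
        exact h3 this
      · intro x hx
        rw [mem_cl] at hx ⊢
        intro y hy
        obtain ⟨w, hw, r, e2⟩ := mem_sup_span.1 (hx y hy)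
        have hwI : w ∈ I := by
          have : w = x * y - r * a := by rw [e2]; ring
          rw [this]
          exact I.sub_mem (I.mul_mem_left _ hy) (I.mul_mem_left _ (hAI a (by simp)))
        rw [← eA, sp_cons]
        exact mem_sup_span.2 ⟨w, hS.be w hw hwI, r, e2⟩
    rw [e] at hp
    have := hS.ga a p (reg_of_reduction hS (by rw [eA]; exact hJ.1)) (AssP_cl hp)
    omega
  have heq : hh p = l := le_antisymm hle hge
  refine ⟨?_, ?_, ?_⟩
  · by_contra hcon
    exact basic hset hJ.1 l le_rfl p hp.1 hIp heq (fitting_Gen hp.1 hcon) hp.le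
  · change rDim (Localization.AtPrime p) = _
    rw [rDim_loc hp.1, heq]
  · change fiberDim (Ideal.map (algebraMap R (Localization.AtPrime p)) I) = _
    have : IsNoetherianRing (Localization.AtPrime p) :=
      IsLocalization.isNoetherianRing p.primeCompl _ inferInstance
    apply le_antisymm
    · have h1 : IsReduction (sp (A.map (algebraMap R (Localization.AtPrime p))))
          (I.map (algebraMap R (Localization.AtPrime p))) := by
        rw [sp_map, eA]
        exact hJ.1.map _
      have h2 := fiberDim_le h1
      rw [List.length_map, hA2] at h2
      exact h2
    · by_contra hcon
      rw [not_le] at hcon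
      have hfd : fiberDim (Ideal.map (algebraMap R (Localization.AtPrime p)) I) ≤
          (((l - 1 : ℕ) : ℕ∞) : WithBot ℕ∞) := by
        obtain ⟨k, rfl⟩ := Nat.exists_eq_succ_of_ne_zero hl0.ne'
        revert hcon
        generalize fiberDim (Ideal.map (algebraMap R (Localization.AtPrime p)) I) = x
        intro hx
        cases x with
        | bot => exact bot_le
        | coe x =>
          have hx' : x < ((k + 1 : ℕ) : ℕ∞) := by exact_mod_cast hx
          rw [WithBot.coe_le_coe]
          simp only [Nat.succ_eq_add_one, Nat.add_sub_cancel]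
          exact ENat.lt_natCast_add_one_iff.1 (by exact_mod_cast hx')
      obtain ⟨T, ⟨hT1, hT2⟩, hT3, hT4⟩ := exists_list (J := J) (l - 1)
        (fun T => Good I l T ∧ FG (algebraMap R (Localization.AtPrime p))
          (I.map (algebraMap R (Localization.AtPrime p))) T (l - 1))
        ⟨Good.nil hset le_rfl, FG.nil _ hfd⟩ (by
          rintro T ⟨h1, h2⟩ hlt hTJ
          have hTI : ∀ x ∈ T, x ∈ I := fun x hx => hJ.1.1 (hTJ x hx)
          obtain ⟨V, h3, h4, -, h5⟩ := fg_step hTI h2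
          exact (good_step hset le_rfl hJ.1 (hset.hJs hJ.1) h1 (by omega)).and
            ⟨V, h3, fun v hv => h4 v hv J hJ.1, fun z hz => h5 z (hJ.1.1 hz)⟩)
      have hTI : ∀ x ∈ T, x ∈ I := fun x hx => hJ.1.1 (hT4 x hx)
      obtain ⟨-, r, hr⟩ := hT2.reduction hTI hT3.ge
      have h1 : I ^ (r + 1) ≤ sat p (sp T) := by
        rw [le_sat_iff_loc hpp, Ideal.map_pow, hr]
        exact Ideal.mul_le_left
      have h2 := (struct hset le_rfl hT1 (by omega)).not_le hpp (h1.trans (sat_mono _ (le_cl _ I)))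
      apply h2
      refine le_trans ?_ hp.le
      intro x hx
      rw [mem_cl] at hx ⊢
      exact fun y hy => sp_le.2 hT4 (hx y hy)

theorem gamma_le {I : Ideal R} {ι : Type} [Fintype ι] (F : ι → Ideal R)
    (hF : ∀ i, IsReduction (F i) I) (h : ⨅ i, F i ≤ core I) : gamma I ≤ (Fintype.card ι : ℕ∞) := by
  choose G hG1 hG2 using fun i => exists_minimalReduction (hF i)
  let e := (Fintype.equivFin ι).symm
  refine sInf_le ⟨Fintype.card ι, rfl, fun j => G (e j), fun j => hG2 _, le_antisymm ?_ ?_⟩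
  · exact le_iInf fun j => core_le (hG2 _).1
  · refine le_trans (le_iInf fun i => ?_) h
    have := iInf_le (fun j => G (e j)) (e.symm i)
    simp only [Equiv.apply_symm_apply] at this
    exact this.trans (hG1 i)

theorem gamma_bound [Infinite (ResidueField R)] {I J : Ideal R} {l : ℕ} (hset : Setup I l)
    (hl : fiberDim I = ((l : ℕ∞) : WithBot ℕ∞)) (hJ : IsMinimalReduction J I)
    (hK : cl J I * I ≤ core I) :
    gamma I ≤ (l : ℕ∞) *
          sSup ({t : ℕ∞ | ∃ p ∈ QSet I l,
            t = qType (Localization.AtPrime p.asIdeal)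
              (Ideal.map (algebraMap R (Localization.AtPrime p.asIdeal))
                (Submodule.colon J I))} ∪ {0}) + 1 := by
  set s := sSup ({t : ℕ∞ | ∃ p ∈ QSet I l,
            t = qType (Localization.AtPrime p.asIdeal)
              (Ideal.map (algebraMap R (Localization.AtPrime p.asIdeal))
                (Submodule.colon J I))} ∪ {0}) with hs
  rcases Nat.eq_zero_or_pos l with h0 | hl0
  · subst h0
    obtain ⟨A, hA1, hA2, hA3⟩ := exists_gg hset hl hJ.1
    have hAI : ∀ x ∈ A, x ∈ I := fun x hx => hJ.1.1 (hA3 x hx)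
    have eA : sp A = J := hJ.2 _ ((hA1 A (List.Sublist.refl A)).reduction hAI hA2) (sp_le.2 hA3)
    rw [List.length_eq_zero_iff.1 hA2, sp_nil] at eA
    have := gamma_le (fun _ : Unit => J) (fun _ => hJ.1) (by rw [← eA]; simp)
    simpa using this
  rcases eq_or_ne s ⊤ with ht | ht
  · rw [ht, ENat.mul_top (by exact_mod_cast hl0.ne'), top_add]
    exact le_top
  obtain ⟨t, ht⟩ := ENat.ne_top_iff_exists.1 ht
  have hgen : ∀ p, AssP (cl J I) p → Gen (cl J I) (⊤ ⊓ cl (cl J I) p) p t := by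
    intro p hp
    rw [top_inf_eq]
    have := hp.1
    refine Gen_of_qType hp hp.1 ?_
    rw [ht]
    exact le_sSup (Or.inl ⟨⟨p, hp.1⟩, AssP_QSet hset hl hJ hl0 hp, rfl⟩)
  obtain ⟨A, hA1, hA2, hA3⟩ := exists_gg hset hl hJ.1
  have hAI : ∀ x ∈ A, x ∈ I := fun x hx => hJ.1.1 (hA3 x hx)
  have eA : sp A = J := hJ.2 _ ((hA1 A (List.Sublist.refl A)).reduction hAI hA2) (sp_le.2 hA3)
  have hcl : ∀ i : Fin A.length, ∃ F : Fin t → Ideal R, (∀ j, IsReduction (F j) I) ∧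
      (∀ j, sp (A.eraseIdx i) ≤ F j) ∧ ∀ c, (∀ j, c * A.get i ∈ F j) → c ∈ cl J I := by
    intro i
    have e : sp (A.get i :: A.eraseIdx i) = J := by rw [sp_perm (eraseIdx_perm A i), eA]
    have hsub : (A.eraseIdx i).Sublist A := List.eraseIdx_sublist A i
    have hlen := (eraseIdx_perm A i).length_eq
    rw [List.length_cons] at hlen
    replace hlen := hlen.trans hA2
    obtain ⟨F, h1, h2, h3⟩ := gamma_claim hset (fun x hx => hAI x (hsub.subset hx)) hlen (hA1 _ hsub)
      (a := A.get i) (by rw [e]; exact hJ.1) (by rw [e]; exact hK) t ⊤ (by rw [e]; exact hgen)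
    rw [e] at h3
    exact ⟨F, h1, h2, fun c => h3 c trivial⟩
  choose F hF1 hF2 hF3 using hcl
  have := gamma_le (I := I) (ι := Option (Fin A.length × Fin t))
    (fun o => o.elim J (fun x => F x.1 x.2)) (by
      rintro (_ | x)
      · exact hJ.1
      · exact hF1 _ _) (by
      intro X hX
      rw [Ideal.mem_iInf] at hX
      have hXJ : X ∈ J := hX none
      rw [← eA] at hXJ
      obtain ⟨c, hc⟩ := mem_coeffs hXJ
      rw [hc]
      refine Ideal.sum_mem _ fun i _ => hK (Ideal.mul_mem_mul ?_ (hAI _ (A.get_mem i)))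
      refine hF3 i _ fun j => ?_
      have h1 := hF2 i j (coeff_sub hc i)
      have h2 : X ∈ F i j := hX (some (i, j))
      have := (F i j).sub_mem h2 h1
      simpa using this)
  rw [Fintype.card_option, Fintype.card_prod, Fintype.card_fin, Fintype.card_fin, hA2] at this
  rw [← ht]
  exact_mod_cast this

end Fin2

section Fin3
variable {R : Type u} [CommRing R] [IsNoetherianRing R]

theorem Gen_of_Gcond {I q : Ideal R} (hq : q.IsPrime) {l : ℕ} (hG : Gcond I l) (hI : I ≤ q)
    (hlt : hh q < l) : Gen ⊥ I q (hh q) := by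
  classical
  have h := hG ⟨q, hq⟩ hI (by
    change rDim (Localization.AtPrime q) < _
    rw [rDim_loc hq]; exact_mod_cast hlt)
  change ((muE (Ideal.map (algebraMap R (Localization.AtPrime q)) I) : ℕ∞) : WithBot ℕ∞) ≤
    rDim (Localization.AtPrime q) at h
  rw [rDim_loc hq] at h
  have h : muE (Ideal.map (algebraMap R (Localization.AtPrime q)) I) ≤ ((hh q : ℕ) : ℕ∞) := by
    exact_mod_cast h
  set S := Localization.AtPrime q
  set φ := algebraMap R S with hφ
  have hne2 : {n : ℕ∞ | ∃ s : Finset S, (s.card : ℕ∞) = n ∧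
      Submodule.span S (s : Set S) = I.map φ}.Nonempty := by
    rw [Set.nonempty_iff_ne_empty]
    intro he
    rw [muE, he, sInf_empty, top_le_iff] at h
    exact ENat.natCast_ne_top _ h
  obtain ⟨s, h5, h6⟩ := csInf_mem hne2
  change (s.card : ℕ∞) = muE (I.map φ) at h5
  rw [← h5] at h
  have hcard : s.card ≤ hh q := by exact_mod_cast h
  have hlift : ∀ x : S, ∃ r : R, x ∈ s → (r ∈ I ∧ x ∈ Ideal.span {φ r}) := by
    intro x
    by_cases hx : x ∈ s
    swap
    · exact ⟨0, fun h => absurd h hx⟩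
    have hxI : x ∈ I.map φ := by rw [← h6]; exact Submodule.subset_span hx
    obtain ⟨⟨r, b⟩, hrb⟩ := (IsLocalization.mem_map_algebraMap_iff q.primeCompl S).1 hxI
    refine ⟨r, fun _ => ⟨r.2, ?_⟩⟩
    obtain ⟨u, hu⟩ := IsLocalization.map_units S b
    dsimp only at hrb
    rw [Ideal.mem_span_singleton]
    refine ⟨↑u⁻¹, ?_⟩
    rw [hφ, ← hrb, ← hu, Units.mul_inv_cancel_right]
  choose g hg using hlift
  refine ⟨s.toList.map g, ?_, by simpa using hcard, ?_⟩
  · intro x hx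
    obtain ⟨y, hy, rfl⟩ := List.mem_map.1 hx
    exact (hg y (by simpa using hy)).1
  · rw [bot_sup_eq, le_sat_iff_loc hq]
    change I.map φ ≤ (sp (s.toList.map g)).map φ
    rw [← h6, Submodule.span_le]
    intro x hx
    refine (Ideal.span_le.2 ?_) (hg x hx).2
    rw [Set.singleton_subset_iff]
    exact Ideal.mem_map_of_mem _ (mem_sp (List.mem_map.2 ⟨x, by simpa using hx, rfl⟩))

theorem mem_map_bij {S : Type u} [CommRing S] {f : R →+* S} (hf : Function.Bijective f)
    {N : Ideal R} {x : R} : f x ∈ N.map f ↔ x ∈ N := by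
  rw [← Ideal.mem_comap, Ideal.comap_map_of_bijective f hf]

theorem hh_comap {S : Type u} [CommRing S] {f : R →+* S} (hf : Function.Bijective f) (P : Ideal S) :
    hh (P.comap f) = hh P := by
  have := RingEquiv.height_comap (RingEquiv.ofBijective f hf) P
  unfold hh
  congr 1

theorem hh_map {S : Type u} [CommRing S] {f : R →+* S} (hf : Function.Bijective f) (P : Ideal R) :
    hh (P.map f) = hh P := by
  rw [← hh_comap hf, Ideal.comap_map_of_bijective f hf]

theorem S_of_bij {S : Type u} [CommRing S] {f : R →+* S} (hf : Function.Bijective f)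
    {I : Ideal R} {s : ℕ} (hS2 : WeaklyResS2 (I.map f) s)
    (T : List R) (hTI : ∀ x ∈ T, x ∈ I) (hTs : T.length ≤ s) (hne : cl (sp T) I ≠ ⊤)
    (hp : ∃ p : Ideal R, p.IsPrime ∧ I ≤ p ∧ hh p ≤ T.length)
    (h1 : ∀ P : Ideal R, P.IsPrime → cl (sp T) I ≤ P → T.length ≤ hh P)
    (h2 : ∀ P : Ideal R, P.IsPrime → I ≤ P → cl (sp T) I ≤ P → T.length + 1 ≤ hh P)
    (x : R) (hx : Reg (cl (sp T) I) x) (q : Ideal R) (hq : AssP (cl (sp T) I ⊔ Ideal.span {x}) q)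
    (q' q'' : Ideal R) (hq' : q'.IsPrime) (hq'' : q''.IsPrime) (h3 : cl (sp T) I ≤ q')
    (h4 : q' < q'') (h5 : q'' < q) : False := by
  classical
  have hNS : IsNoetherianRing S := isNoetherianRing_of_ringEquiv R (RingEquiv.ofBijective f hf)
  set K := cl (sp T) I with hK
  have hprime : ∀ P : Ideal R, P.IsPrime → (P.map f).IsPrime := fun P hP =>
    Ideal.map_isPrime_of_equiv (RingEquiv.ofBijective f hf)
  have hlt : ∀ P P' : Ideal R, P < P' → P.map f < P'.map f := by
    intro P P' h
    refine lt_of_le_not_ge (Ideal.map_mono h.le) fun h6 => h.not_ge ?_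
    intro z hz
    exact (mem_map_bij hf).1 (h6 (Ideal.mem_map_of_mem f hz))
  have hgeo : IsGeometricRI (I.map f) (K.map f) T.length := by
    refine ⟨⟨?_, ?_, ?_, (sp T).map f, Ideal.map_mono (sp_le.2 hTI), ⟨(T.map f).toFinset, ?_, ?_⟩, ?_⟩, ?_⟩
    · intro h
      apply hne
      rw [← Ideal.comap_map_of_bijective f hf (I := K), h, Ideal.comap_top]
    · obtain ⟨p, hp1, hp2, hp3⟩ := hp
      have := hprime p hp1
      refine (iInf₂_le (⟨p.map f, this⟩ : PrimeSpectrum S) (Ideal.map_mono hp2)).trans ?_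
      change rDim (Localization.AtPrime (p.map f)) ≤ _
      rw [rDim_loc this, hh_map hf]
      exact_mod_cast hp3
    · refine le_iInf₂ fun P hP => ?_
      rw [rDim_loc P.2, ← hh_comap hf]
      exact_mod_cast h1 _ (Ideal.comap_isPrime _ _) (Ideal.map_le_iff_le_comap.1 hP)
    · exact (List.toFinset_card_le _).trans (by simp)
    · rw [← sp_map, sp]
      congr 1
      ext z; simp
    · apply le_antisymm
      · rw [Ideal.map_le_iff_le_comap]
        intro z hz
        rw [Ideal.mem_comap]
        refine mem_cl.2 fun y hy => ?_
        obtain ⟨y, rfl⟩ := hf.2 y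
        rw [← map_mul, mem_map_bij hf]
        exact mem_cl.1 hz y ((mem_map_bij hf).1 hy)
      · intro z hz
        obtain ⟨z, rfl⟩ := hf.2 z
        rw [mem_map_bij hf]
        refine mem_cl.2 fun y hy => ?_
        have := mem_cl.1 hz (f y) (Ideal.mem_map_of_mem f hy)
        rwa [← map_mul, mem_map_bij hf] at this
    · refine le_iInf₂ fun P hP => ?_
      rw [rDim_loc P.2, ← hh_comap hf]
      exact_mod_cast h2 _ (Ideal.comap_isPrime _ _)
        (Ideal.map_le_iff_le_comap.1 (le_sup_left.trans hP))
        (Ideal.map_le_iff_le_comap.1 (le_sup_right.trans hP))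
  refine S2use (hS2 _ hTs _ hgeo) (x := f x) ?_ (q := q.map f) ?_ (hprime q' hq') (hprime q'' hq'')
    (Ideal.map_mono h3) (hlt _ _ h4) (hlt _ _ h5)
  · intro w hw
    obtain ⟨w, rfl⟩ := hf.2 w
    rw [← map_mul, mem_map_bij hf] at hw
    exact Ideal.mem_map_of_mem f (hx w hw)
  · obtain ⟨hqp, w, hw⟩ := hq
    refine ⟨hprime q hqp, f w, ?_⟩
    have e : K.map f ⊔ Ideal.span {f x} = (K ⊔ Ideal.span {x}).map f := by
      rw [Ideal.map_sup, Ideal.map_span, Set.image_singleton]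
    rw [e]
    ext z
    obtain ⟨z, rfl⟩ := hf.2 z
    rw [mem_map_bij hf, mem_an, ← map_mul, mem_map_bij hf, hw, mem_an]

theorem setup_of [IsLocalRing R] {I : Ideal R} {g l : ℕ} (hCM : IsCMLocalRing R)
    (hg : ht I = (g : WithBot ℕ∞)) (hG : Gcond I l) (hS2 : UnivWeaklyResS2 I (l - 1)) :
    Setup I l := by
  refine ⟨Dep.of_CM hCM, ?_, fun q hq hI hlt => Gen_of_Gcond hq hG hI hlt, ?_⟩
  · rintro rfl
    have : ht (⊤ : Ideal R) = ⊤ := by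
      rw [ht, iInf₂_eq_top]
      intro p hp
      exact absurd (top_le_iff.1 hp) p.2.ne_top
    rw [this] at hg
    have h2 : ((⊤ : ℕ∞) : WithBot ℕ∞) = ((g : ℕ∞) : WithBot ℕ∞) := hg
    rw [WithBot.coe_inj] at h2
    exact ENat.natCast_ne_top g h2.symm
  · have hCbij : Function.Bijective (MvPolynomial.C (σ := Fin 0) (R := R)) := by
      have := (MvPolynomial.isEmptyRingEquiv R (Fin 0)).symm.bijective
      convert this using 1
      ext r
      simp
    have hP : (Ideal.map (MvPolynomial.C (σ := Fin 0)) (maximalIdeal R)).IsPrime :=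
      Ideal.map_isPrime_of_equiv (RingEquiv.ofBijective _ hCbij)
    have hu : (Ideal.map (MvPolynomial.C (σ := Fin 0)) (maximalIdeal R)).primeCompl ≤
        IsUnit.submonoid _ := by
      intro x hx
      obtain ⟨r, rfl⟩ := hCbij.2 x
      have : r ∉ maximalIdeal R := fun h => hx (Ideal.mem_map_of_mem _ h)
      rw [IsUnit.mem_submonoid_iff]
      refine IsUnit.map _ ?_
      by_contra hcon
      exact this ((mem_maximalIdeal r).2 hcon)
    have hb2 := (IsLocalization.atUnits (MvPolynomial (Fin 0) R)
      (Ideal.map (MvPolynomial.C (σ := Fin 0)) (maximalIdeal R)).primeCompl hu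
      (S := Localization.AtPrime (Ideal.map (MvPolynomial.C (σ := Fin 0)) (maximalIdeal R)))).bijective
    have hb3 : Function.Bijective (algebraMap (MvPolynomial (Fin 0) R)
      (Localization.AtPrime (Ideal.map (MvPolynomial.C (σ := Fin 0)) (maximalIdeal R)))) := by
      convert hb2 using 1
      funext x
      exact (AlgEquiv.commutes (IsLocalization.atUnits (MvPolynomial (Fin 0) R)
        (Ideal.map (MvPolynomial.C (σ := Fin 0)) (maximalIdeal R)).primeCompl hu
        (S := Localization.AtPrime
          (Ideal.map (MvPolynomial.C (σ := Fin 0)) (maximalIdeal R)))) x).symm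
    intro T hTI hTl
    exact S_of_bij (f := (algebraMap (MvPolynomial (Fin 0) R)
        (Localization.AtPrime
          (Ideal.map (MvPolynomial.C (σ := Fin 0)) (maximalIdeal R)))).comp
        (MvPolynomial.C)) (hb3.comp hCbij) (hS2 0 hP) T hTI (by omega)

end Fin3

/-- Theorem 2.6(1): for a `G_ℓ`, universally weakly `(ℓ-1)`-residually `S₂` ideal in
a local Cohen–Macaulay ring with infinite residue field, conditions (a), (b), (c)
are equivalent, and they imply the stated bound on `γ(I)`. -/
theorem statement5 {R : Type u} [CommRing R] [IsNoetherianRing R] [IsLocalRing R]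
    (hCM : IsCMLocalRing R) (hres : Infinite (ResidueField R))
    (I : Ideal R) (g l : ℕ)
    (hg : ht I = (g : WithBot ℕ∞)) (hl : fiberDim I = (l : WithBot ℕ∞))
    (hG : Gcond I l) (hS2 : UnivWeaklyResS2 I (l - 1)) :
    ((∃ J, IsMinimalReduction J I ∧ Submodule.colon J I * I ≤ core I) ↔
      (∀ J, IsMinimalReduction J I →
        Submodule.colon J I * J = Submodule.colon J I * I ∧
        Submodule.colon J I * I = core I)) ∧
    ((∃ J, IsMinimalReduction J I ∧ Submodule.colon J I * I ≤ core I) ↔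
      (∀ J₁ J₂, IsMinimalReduction J₁ I → IsMinimalReduction J₂ I →
        Submodule.colon J₁ I = Submodule.colon J₂ I)) ∧
    ((∃ J, IsMinimalReduction J I ∧ Submodule.colon J I * I ≤ core I) →
      ∀ J, IsMinimalReduction J I →
        gamma I ≤ (l : ℕ∞) *
          sSup ({t : ℕ∞ | ∃ p ∈ QSet I l,
            t = qType (Localization.AtPrime p.asIdeal)
              (Ideal.map (algebraMap R (Localization.AtPrime p.asIdeal))
                (Submodule.colon J I))} ∪ {0}) + 1) := by
  have hl' : fiberDim I = ((l : ℕ∞) : WithBot ℕ∞) := hl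
  have hset := setup_of hCM hg hG hS2
  obtain ⟨J₀, -, hJ₀⟩ := exists_minimalReduction (isReduction_self I)
  have hac : (∃ J, IsMinimalReduction J I ∧ Submodule.colon J I * I ≤ core I) →
      ∀ J, IsMinimalReduction J I → Submodule.colon J I * I ≤ core I := by
    rintro ⟨J, hJ, hK⟩ J' hJ'
    have e : Submodule.colon J' I = Submodule.colon J I := a_imp_c hset hl' hJ hJ' hK
    rw [e]
    exact hK
  refine ⟨⟨?_, ?_⟩, ⟨?_, ?_⟩, ?_⟩
  · intro h J hJ
    exact a_imp_b hset hl' hJ (hac h J hJ)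
  · intro h
    exact ⟨J₀, hJ₀, (h J₀ hJ₀).2.le⟩
  · intro h J₁ J₂ h₁ h₂
    exact a_imp_c hset hl' h₂ h₁ (hac h J₂ h₂)
  · intro h
    refine ⟨J₀, hJ₀, le_sInf fun J hJ => ?_⟩
    have hJ : IsMinimalReduction J I := hJ
    rw [h J₀ J hJ₀ hJ, Ideal.mul_le]
    intro x hx y hy
    exact mem_cl.1 hx y hy
  · intro h J hJ
    exact gamma_bound hset hl' hJ (hac h J hJ)

end CPU
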